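/- arXiv:1204.1961 — 3 statements merged into one kernel-verified Lean document; each statement's English description precedes it below -/
import Mathlib

section
/- In every 2-connected finite simple graph G, the circumference c (the length of a longest cycle) satisfies c ≥ min{n, 2δ}, where n is the number of vertices and δ the minimum degree. -/
open SimpleGraph

variable {V : Type*}

/-- `G` is `k`-connected: more than `k` vertices and removing fewer than `k`
vertices leaves a connected graph. -/
def KConnected (G : SimpleGraph V) [Fintype V] (k : ℕ) : Prop :=
  k < Fintype.card V ∧
    ∀ S : Finset V, S.card < k → (G.induce ((↑S : Set V)ᶜ)).Connected

/-- vertex connectivity `κ`. -/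
noncomputable def connectivity (G : SimpleGraph V) [Fintype V] : ℕ :=
  sSup {k | KConnected G k}

/-- independence number `α`. -/
noncomputable def indepNumber (G : SimpleGraph V) [Fintype V] : ℕ :=
  sSup {k | ∃ s : Finset V, (∀ u ∈ s, ∀ v ∈ s, ¬ G.Adj u v) ∧ s.card = k}

/-- circumference `c`: length of a longest cycle. -/
noncomputable def circumference (G : SimpleGraph V) [Fintype V] : ℕ :=
  sSup {n | ∃ (v : V) (w : G.Walk v v), w.IsCycle ∧ w.length = n}

/-- `w` is a longest cycle of `G`. -/
def IsLongestCycle {G : SimpleGraph V} {v : V} (w : G.Walk v v) : Prop :=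
  w.IsCycle ∧ ∀ (u : V) (w' : G.Walk u u), w'.IsCycle → w'.length ≤ w.length

/-- dominating cycle: every edge has an endpoint on the cycle. -/
def IsDominatingCycle {G : SimpleGraph V} {v : V} (w : G.Walk v v) : Prop :=
  w.IsCycle ∧ ∀ x y, G.Adj x y → x ∈ w.support ∨ y ∈ w.support

/-- generalized cycle of length `n` with vertex set `W`: single vertices are
cycles of length 1, edges are cycles of length 2. -/
def ExtCycle (G : SimpleGraph V) (W : Set V) (n : ℕ) : Prop :=
  (n = 1 ∧ ∃ v : V, W = {v}) ∨
  (n = 2 ∧ ∃ u v : V, G.Adj u v ∧ W = {u, v}) ∨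
  (3 ≤ n ∧ ∃ (v : V) (w : G.Walk v v), w.IsCycle ∧ w.length = n ∧
      W = {x | x ∈ w.support})

/-- `p̄`: the length of a longest path in `G \ C`. -/
noncomputable def pathBar (G : SimpleGraph V) [Fintype V] {v : V} (w : G.Walk v v) : ℕ :=
  sSup {n | ∃ (a b : {x : V | x ∉ w.support})
      (p : (G.induce {x : V | x ∉ w.support}).Walk a b), p.IsPath ∧ p.length = n}

/-- `c̄`: the length of a longest (generalized) cycle in `G \ C`. -/
noncomputable def cycBar (G : SimpleGraph V) [Fintype V] {v : V} (w : G.Walk v v) : ℕ :=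
  sSup {n | ∃ W, ExtCycle (G.induce {x : V | x ∉ w.support}) W n}

/-- `CD_m`-cycle: every (generalized) cycle of length at least `m` meets `w`. -/
def IsCDCycle (G : SimpleGraph V) {v : V} (w : G.Walk v v) (m : ℕ) : Prop :=
  w.IsCycle ∧ ∀ (W : Set V) (n : ℕ), ExtCycle G W n → m ≤ n → ∃ x ∈ W, x ∈ w.support

open Classical in
/-- `PathOn G x y S`: there is a path from `x` to `y` with vertex set `S`. -/
inductive PathOn (G : SimpleGraph V) : V → V → Finset V → Prop
  | single (x : V) : PathOn G x x {x}
  | cons {w x y : V} {S : Finset V} (h : G.Adj w x) (hw : w ∉ S) (p : PathOn G x y S) :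
      PathOn G w y (insert w S)

namespace PathOn
open Classical

variable {G : SimpleGraph V}

lemma left_mem {x y : V} {S : Finset V} (p : PathOn G x y S) : x ∈ S := by
  cases p <;> simp

lemma right_mem {x y : V} {S : Finset V} (p : PathOn G x y S) : y ∈ S := by
  induction p with
  | single => simp
  | cons h hw p ih => simp [ih]

lemma congr_set {x y : V} {S T : Finset V} (p : PathOn G x y S) (h : S = T) : PathOn G x y T :=
  h ▸ p

lemma append {x y z : V} {S T : Finset V} (p : PathOn G x y S) (q : PathOn G y z T)
    (h : ∀ v ∈ S, v ∈ T → v = y) : PathOn G x z (S ∪ T) := by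
  induction p with
  | single x =>
    exact q.congr_set (by have := q.left_mem; ext v; simp; rintro rfl; exact this)
  | @cons w x y S hadj hw p ih =>
    have h1 := ih q (fun v hv hv' => h v (by simp [hv]) hv')
    have hwy : w ∉ T := by
      intro hT
      have := h w (by simp) hT
      subst this
      exact hw p.right_mem
    exact (PathOn.cons hadj (by simp [hw, hwy]) h1).congr_set (by simp)

lemma edge {x y : V} (h : G.Adj x y) : PathOn G x y {x, y} :=
  PathOn.cons h (by simpa using h.ne) (PathOn.single y)

lemma snoc {x y z : V} {S : Finset V} (p : PathOn G x y S) (h : G.Adj y z) (hz : z ∉ S) :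
    PathOn G x z (insert z S) :=
  (p.append (edge h) (by grind)).congr_set (by have := p.right_mem; grind)

lemma symm {x y : V} {S : Finset V} (p : PathOn G x y S) : PathOn G y x S := by
  induction p with
  | single x => exact .single x
  | cons h hw p ih => exact ih.snoc h.symm hw

lemma take {x y r : V} {S : Finset V} (p : PathOn G x y S) (hr : r ∈ S) :
    ∃ S' ⊆ S, PathOn G x r S' ∧ (r ≠ y → y ∉ S') := by
  induction p with
  | single x =>
    have : r = x := by simpa using hr
    subst this
    exact ⟨{r}, by simp, .single r, by simp⟩
  | @cons w x y S hadj hw p ih =>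
    by_cases hrw : r = w
    · subst hrw
      exact ⟨{r}, by simp, .single r, by grind⟩
    · obtain ⟨S', h1, h2, h3⟩ := ih (by grind)
      refine ⟨insert w S', by grind, .cons hadj (by grind) h2, ?_⟩
      have := p.right_mem
      grind

lemma rotate {x y r : V} {S : Finset V} (p : PathOn G x y S) (hyx : G.Adj y x) (hr : r ∈ S) :
    ∃ z, PathOn G r z S := by
  have key : r = y ∨ ∃ S1 S2 r', PathOn G x r S1 ∧ PathOn G r' y S2 ∧ S1 ∪ S2 = S ∧
      ∀ v ∈ S1, v ∉ S2 := by
    clear hyx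
    induction p with
    | single x => left; simpa using hr
    | @cons w x y S hadj hw p ih =>
      by_cases hrw : r = w
      · subst hrw
        exact Or.inr ⟨{r}, S, x, .single r, p, by grind, by grind⟩
      · rcases ih (by grind) with h | ⟨S1, S2, r', h1, h2, h3, h4⟩
        · exact Or.inl h
        · exact Or.inr ⟨insert w S1, S2, r', .cons hadj (by grind) h1, h2, by grind, by grind⟩
  rcases key with rfl | ⟨S1, S2, r', h1, h2, h3, h4⟩
  · exact ⟨x, p.symm⟩
  · have h5 : PathOn G r y (insert y S1) := h1.symm.snoc hyx.symm (by
      have := h2.right_mem; grind)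
    exact ⟨r', (h5.append h2.symm (by grind)).congr_set (by have := h2.right_mem; grind)⟩

lemma exists_walk {x y : V} {S : Finset V} (p : PathOn G x y S) :
    ∃ w : G.Walk x y, w.IsPath ∧ (∀ v, v ∈ w.support ↔ v ∈ S) ∧ w.length + 1 = S.card := by
  induction p with
  | single x => exact ⟨.nil, by simp, by simp, by simp⟩
  | cons h hw p ih =>
    obtain ⟨w, h1, h2, h3⟩ := ih
    refine ⟨.cons h w, ?_, ?_, ?_⟩
    · rw [SimpleGraph.Walk.cons_isPath_iff]
      exact ⟨h1, by rwa [h2]⟩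
    · intro v; simp [h2]
    · simp [hw, h3]

lemma exists_cycle {x y : V} {S : Finset V} (p : PathOn G x y S) (hyx : G.Adj y x)
    (hS : 3 ≤ S.card) : ∃ (v : V) (w : G.Walk v v), w.IsCycle ∧ w.length = S.card := by
  obtain ⟨w, h1, h2, h3⟩ := p.exists_walk
  refine ⟨y, .cons hyx w, ?_, by simp [h3]⟩
  rw [SimpleGraph.Walk.cons_isCycle_iff]
  refine ⟨h1, ?_⟩
  cases w with
  | nil => simp
  | @cons _ v _ h w =>
    rw [SimpleGraph.Walk.cons_isPath_iff] at h1
    rw [SimpleGraph.Walk.edges_cons, List.mem_cons, not_or]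
    constructor
    · intro he
      have hvy : v = y := by
        rw [Sym2.eq_swap, Sym2.eq_iff] at he
        rcases he with he | he
        · exact he.2.symm
        · exact absurd he.2 hyx.ne
      subst hvy
      have := SimpleGraph.Walk.eq_nil_iff_nil.2 (SimpleGraph.Walk.isPath_iff_nil.1 h1.1)
      subst this
      simp at h3
      omega
    · intro he
      exact h1.2 (w.snd_mem_support_of_mem_edges he)

lemma exists_cycle' {x y : V} {S T : Finset V} (p : PathOn G x y S) (q : PathOn G x y T)
    (hxy : x ≠ y) (h : ∀ v ∈ S, v ∈ T → v = x ∨ v = y) (hS : 3 ≤ S.card) :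
    ∃ (v : V) (w : G.Walk v v), w.IsCycle ∧ S.card ≤ w.length := by
  cases q with
  | single => exact absurd rfl hxy
  | @cons _ x' _ T hadj hw q =>
    have h1 := p.append q.symm (by grind)
    have hc : S.card ≤ (S ∪ T).card := Finset.card_le_card (by simp)
    obtain ⟨v, w, h2, h3⟩ := h1.exists_cycle hadj.symm (by omega)
    exact ⟨v, w, h2, by omega⟩

lemma exists_fun {x y : V} {S : Finset V} (p : PathOn G x y S) :
    ∃ (m : ℕ) (f : ℕ → V), m + 1 = S.card ∧ f 0 = x ∧ f m = y ∧
      (∀ i j, i ≤ m → j ≤ m → f i = f j → i = j) ∧ (∀ i, i < m → G.Adj (f i) (f (i + 1))) ∧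
      (∀ v, v ∈ S ↔ ∃ i ≤ m, f i = v) := by
  induction p with
  | single x => exact ⟨0, fun _ => x, by simp, by simp, by simp, by grind, by simp, by grind⟩
  | @cons w x y S hadj hw p ih =>
    obtain ⟨m, f, h1, h2, h3, h4, h5, h6⟩ := ih
    refine ⟨m + 1, fun n => Nat.casesOn n w f, by simp [hw, h1], rfl, h3, ?_, ?_, ?_⟩
    · rintro (_ | i) (_ | j) hi hj hij
      · rfl
      · exact absurd ((h6 w).2 ⟨j, by omega, hij.symm⟩) hw
      · exact absurd ((h6 w).2 ⟨i, by omega, hij⟩) hw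
      · exact congrArg _ (h4 i j (by omega) (by omega) hij)
    · rintro (_ | i) hi
      · simpa [h2] using hadj
      · exact h5 i (by omega)
    · intro v
      rw [Finset.mem_insert, h6]
      constructor
      · rintro (rfl | ⟨i, hi, rfl⟩)
        · exact ⟨0, by omega, rfl⟩
        · exact ⟨i + 1, by omega, rfl⟩
      · rintro ⟨_ | i, hi, rfl⟩
        · exact Or.inl rfl
        · exact Or.inr ⟨i, by omega, rfl⟩

lemma seg {m : ℕ} {f : ℕ → V} (hinj : ∀ i j, i ≤ m → j ≤ m → f i = f j → i = j)
    (hadj : ∀ i, i < m → G.Adj (f i) (f (i + 1))) {i j : ℕ} (hij : i ≤ j) (hj : j ≤ m) :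
    PathOn G (f i) (f j) ((Finset.Icc i j).image f) := by
  induction j, hij using Nat.le_induction with
  | base => exact (PathOn.single _).congr_set (by simp)
  | succ j hij ih =>
    refine ((ih (by omega)).snoc (hadj j (by omega)) ?_).congr_set ?_
    · simp only [Finset.mem_image, Finset.mem_Icc, not_exists, not_and]
      intro k hk he
      have := hinj k (j + 1) (by omega) (by omega) he
      omega
    · rw [← Finset.image_insert]
      congr 1
      ext k; simp; omega

lemma of_induce {s : Set V} {x y : s} (w : (G.induce s).Walk x y) (hw : w.IsPath) :
    ∃ R, PathOn G (x : V) y R ∧ ∀ v, v ∈ R ↔ ∃ h : v ∈ s, (⟨v, h⟩ : s) ∈ w.support := by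
  induction w with
  | nil => exact ⟨_, .single _, by intro v; simp [Subtype.ext_iff]; rintro rfl; simp⟩
  | @cons x u y h w ih =>
    rw [SimpleGraph.Walk.cons_isPath_iff] at hw
    obtain ⟨R, h1, h2⟩ := ih hw.1
    refine ⟨_, .cons (w := (x : V)) (by simpa using h) ?_ h1, ?_⟩
    · rw [h2]
      rintro ⟨_, h'⟩
      exact hw.2 h'
    · intro v
      rw [Finset.mem_insert, h2]
      constructor
      · rintro (rfl | ⟨h, h'⟩)
        · exact ⟨x.2, by simp⟩
        · exact ⟨h, by simp [h']⟩
      · rintro ⟨h, h'⟩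
        rw [SimpleGraph.Walk.support_cons, List.mem_cons] at h'
        rcases h' with h' | h'
        · left; exact congrArg Subtype.val h'
        · exact Or.inr ⟨h, h'⟩

lemma connect [Fintype V] (h2 : KConnected G 2) (z : V) (X Y : Set V)
    (hX : ∃ x ∈ X, x ≠ z) (hY : ∃ y ∈ Y, y ≠ z) :
    ∃ r ∈ X, ∃ t ∈ Y, ∃ R, PathOn G r t R ∧ z ∉ R ∧ (∀ v ∈ R, v ∈ X → v = r) ∧
      (∀ v ∈ R, v ∈ Y → v = t) := by
  have hex : ∃ n, ∃ r ∈ X, ∃ t ∈ Y, ∃ R, PathOn G r t R ∧ z ∉ R ∧ R.card = n := by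
    obtain ⟨x, hx, hxz⟩ := hX
    obtain ⟨y, hy, hyz⟩ := hY
    have hc := h2.2 {z} (by simp)
    obtain ⟨w, hw⟩ := (hc.preconnected ⟨x, by simpa using hxz⟩ ⟨y, by simpa using hyz⟩).exists_isPath
    obtain ⟨R, h3, h4⟩ := of_induce w hw
    refine ⟨_, x, hx, y, hy, R, h3, ?_, rfl⟩
    rw [h4]
    rintro ⟨h, -⟩
    simp at h
  obtain ⟨r, hr, t, ht, R, hp, hz, hcard⟩ := Nat.find_spec hex
  have hmin : ∀ r ∈ X, ∀ t ∈ Y, ∀ R', PathOn G r t R' → R' ⊆ R → R' = R := by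
    intro r' hr' t' ht' R' hp' hsub
    by_contra hne
    have hlt : R'.card < R.card := Finset.card_lt_card (lt_of_le_of_ne hsub hne)
    rw [hcard] at hlt
    exact Nat.find_min hex hlt ⟨r', hr', t', ht', R', hp', fun h => hz (hsub h), rfl⟩
  refine ⟨r, hr, t, ht, R, hp, hz, ?_, ?_⟩
  · intro v hv hvX
    by_contra hne
    obtain ⟨S', h1, h3, h4⟩ := hp.symm.take hv
    have := hmin v hvX t ht S' h3.symm h1
    exact h4 hne (this ▸ hp.left_mem)
  · intro v hv hvY
    by_contra hne
    obtain ⟨S', h1, h3, h4⟩ := hp.take hv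
    have := hmin r hr v hvY S' h3 h1
    exact h4 hne (this ▸ hp.right_mem)

end PathOn

namespace DiracAux
open Classical

variable {G : SimpleGraph V}

/-- The state of the vine construction at index `j`. -/
def Inv (G : SimpleGraph V) (f : ℕ → V) (m a j : ℕ) : Prop :=
  ∃ s t S T y₁ y₂, s < a ∧ j < t ∧ t ≤ m ∧ PathOn G (f a) y₁ S ∧ PathOn G (f s) y₂ T ∧
    ((y₁ = f j ∧ y₂ = f t) ∨ (y₁ = f t ∧ y₂ = f j)) ∧
    (∀ v ∈ S, v ∉ T) ∧ (∀ k, k < a → f k ∉ S) ∧ (∀ k, k < a → f k ∈ T → k = s) ∧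
    (∀ k, j < k → k ≤ m → (f k ∈ S ∨ f k ∈ T) → k = t)

lemma inv_base [Fintype V] (h2 : KConnected G 2) {f : ℕ → V} {m a : ℕ}
    (hinj : ∀ i j, i ≤ m → j ≤ m → f i = f j → i = j) (ha : 0 < a) (ham : a < m) :
    Inv G f m a a := by
  obtain ⟨r, ⟨s, hs, rfl⟩, y, ⟨t, ⟨ht, ht'⟩, rfl⟩, R, hR, hz, hX, hY⟩ :=
    PathOn.connect h2 (f a) {v | ∃ k, k < a ∧ f k = v} {v | ∃ k, (a < k ∧ k ≤ m) ∧ f k = v}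
      ⟨f 0, ⟨0, ha, rfl⟩, fun h => by have := hinj _ _ (by omega) (by omega) h; omega⟩
      ⟨f m, ⟨m, by omega, rfl⟩, fun h => by have := hinj _ _ (by omega) (by omega) h; omega⟩
  refine ⟨s, t, {f a}, R, f a, f t, hs, ht, ht', .single _, hR, Or.inl ⟨rfl, rfl⟩, ?_, ?_, ?_, ?_⟩
  · intro v hv; simp at hv; subst hv; exact hz
  · intro k hk h
    simp at h
    have := hinj _ _ (by omega) (by omega) h
    omega
  · intro k hk h
    exact hinj _ _ (by omega) (by omega) (hX _ h ⟨k, hk, rfl⟩)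
  · rintro k hk hk' (h | h)
    · simp at h
      have := hinj _ _ (by omega) (by omega) h
      omega
    · exact hinj _ _ (by omega) (by omega) (hY _ h ⟨k, ⟨hk, hk'⟩, rfl⟩)

lemma inv_step [Fintype V] (h2 : KConnected G 2) {f : ℕ → V} {m a j : ℕ}
    (hinj : ∀ i j, i ≤ m → j ≤ m → f i = f j → i = j)
    (hadj : ∀ i, i < m → G.Adj (f i) (f (i + 1))) (haj : a ≤ j) (hj : j + 1 < m)
    (h : Inv G f m a j) : Inv G f m a (j + 1) := by
  obtain ⟨s, t, S, T, y₁, y₂, hs, hjt, htm, hS, hT, hy, hST, hSa, hTa, hk⟩ := h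
  have hadj' := hadj j (by omega)
  by_cases ht : t = j + 1
  · subst ht
    have hSr := hS.right_mem
    have hTr := hT.right_mem
    obtain ⟨r, hr, y, ⟨t, ⟨ht, ht'⟩, rfl⟩, R, hR, hz, hX, hY⟩ :=
      PathOn.connect h2 (f (j+1)) {v | ((∃ k, k < a ∧ f k = v) ∨ v ∈ S ∨ v ∈ T) ∧ v ≠ f (j+1)}
        {v | ∃ k, (j + 1 < k ∧ k ≤ m) ∧ f k = v}
        ⟨f 0, ⟨Or.inl ⟨0, by omega, rfl⟩, fun h => by
          have := hinj _ _ (by omega) (by omega) h; omega⟩, fun h => by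
          have := hinj _ _ (by omega) (by omega) h; omega⟩
        ⟨f m, ⟨m, by omega, rfl⟩, fun h => by have := hinj _ _ (by omega) (by omega) h; omega⟩
    obtain ⟨hr, hrz⟩ := hr
    have hXS : ∀ v ∈ R, v ∈ S → v = r := fun v hv hv' =>
      hX v hv ⟨Or.inr (Or.inl hv'), fun h => hz (h ▸ hv)⟩
    have hXT : ∀ v ∈ R, v ∈ T → v = r := fun v hv hv' =>
      hX v hv ⟨Or.inr (Or.inr hv'), fun h => hz (h ▸ hv)⟩
    have hXA : ∀ k, k < a → f k ∈ R → f k = r := fun k hk hv =>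
      hX _ hv ⟨Or.inl ⟨k, hk, rfl⟩, fun h => hz (h ▸ hv)⟩
    have hYt : ∀ k, j + 1 < k → k ≤ m → f k ∈ R → k = t := fun k h1 h2 h3 =>
      hinj _ _ (by omega) (by omega) (hY _ h3 ⟨k, ⟨h1, h2⟩, rfl⟩)
    have hkS : ∀ k, j + 1 < k → k ≤ m → f k ∉ S := fun k h1 h2 h3 => by
      have := hk k (by omega) h2 (Or.inl h3)
      omega
    have hkT : ∀ k, j + 1 < k → k ≤ m → f k ∉ T := fun k h1 h2 h3 => by
      have := hk k (by omega) h2 (Or.inr h3)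
      omega
    have hAz : ∀ k, k < a → f k ≠ f (j+1) := fun k hk h => by
      have := hinj _ _ (by omega) (by omega) h; omega
    have hBz : ∀ k, j + 1 < k → k ≤ m → f k ≠ f (j+1) := fun k h1 h2 h => by
      have := hinj _ _ (by omega) (by omega) h; omega
    have hrR := hR.left_mem
    have hAq : ∀ q, q < a → f q = r → ∀ k, k < a → f k ∈ R → k = q := fun q hq hqr k hk h =>
      hinj _ _ (by omega) (by omega) ((hXA k hk h).trans hqr.symm)
    clear hX hY hk hinj hadj
    by_cases hrS : r ∈ S
    · -- truncate `S` at `r`, then follow `R`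
      obtain ⟨S', hS', hpS, hne⟩ := hS.take hrS
      have hnew := hpS.append hR (by grind)
      rcases hy with ⟨rfl, rfl⟩ | ⟨rfl, rfl⟩
      · exact ⟨s, t, S' ∪ R, T, _, _, hs, ht, ht', hnew, hT, Or.inr ⟨rfl, rfl⟩,
          by grind, by grind, by grind, by grind⟩
      · have hT' := hT.snoc hadj' (by grind)
        exact ⟨s, t, S' ∪ R, insert (f (j+1)) T, _, _, hs, ht, ht', hnew, hT', Or.inr ⟨rfl, rfl⟩,
          by grind, by grind, by grind, by grind⟩
    · by_cases hrT : r ∈ T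
      · obtain ⟨T', hT', hpT, hne⟩ := hT.take hrT
        have hnew := hpT.append hR (by grind)
        have hA : ∀ k, k < a → f k ∈ T' ∪ R → k = s := by grind
        rcases hy with ⟨rfl, rfl⟩ | ⟨rfl, rfl⟩
        · have hS' := hS.snoc hadj' (by grind)
          exact ⟨s, t, insert (f (j+1)) S, T' ∪ R, _, _, hs, ht, ht', hS', hnew, Or.inl ⟨rfl, rfl⟩,
            by grind, by grind, hA, by grind⟩
        · exact ⟨s, t, S, T' ∪ R, _, _, hs, ht, ht', hS, hnew, Or.inl ⟨rfl, rfl⟩,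
            by grind, by grind, hA, by grind⟩
      · obtain ⟨q, hq, rfl⟩ : ∃ k, k < a ∧ f k = r := by tauto
        have hA : ∀ k, k < a → f k ∈ R → k = q := hAq q hq rfl
        clear hAq
        rcases hy with ⟨rfl, rfl⟩ | ⟨rfl, rfl⟩
        · have hS' := hS.snoc hadj' (by grind)
          exact ⟨q, t, insert (f (j+1)) S, R, _, _, hq, ht, ht', hS', hR, Or.inl ⟨rfl, rfl⟩,
            by grind, by grind, hA, by grind⟩
        · exact ⟨q, t, S, R, _, _, hq, ht, ht', hS, hR, Or.inl ⟨rfl, rfl⟩,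
            by grind, by grind, hA, by grind⟩
  · have hnS : f (j+1) ∉ S := fun h => ht (hk (j+1) (by omega) (by omega) (Or.inl h)).symm
    have hnT : f (j+1) ∉ T := fun h => ht (hk (j+1) (by omega) (by omega) (Or.inr h)).symm
    have hAz : ∀ k, k < a → f k ≠ f (j+1) := fun k hk h => by
      have := hinj _ _ (by omega) (by omega) h; omega
    have hBz : ∀ k, j + 1 < k → k ≤ m → f k ≠ f (j+1) := fun k h1 h2 h => by
      have := hinj _ _ (by omega) (by omega) h; omega
    rcases hy with ⟨rfl, rfl⟩ | ⟨rfl, rfl⟩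
    · exact ⟨s, t, _, T, _, _, hs, by omega, htm, hS.snoc hadj' hnS, hT, Or.inl ⟨rfl, rfl⟩,
        by grind, by grind, by grind, by grind⟩
    · exact ⟨s, t, S, _, _, _, hs, by omega, htm, hS, hT.snoc hadj' hnT, Or.inr ⟨rfl, rfl⟩,
        by grind, by grind, by grind, by grind⟩

/-- A path from `f s` to `f a` inside the image of [0,a] through `f 0` and all its neighbours. -/
lemma end_path {f : ℕ → V} {m a s : ℕ}
    (hinj : ∀ i j, i ≤ m → j ≤ m → f i = f j → i = j)
    (hadj : ∀ i, i < m → G.Adj (f i) (f (i + 1))) (ham : a ≤ m) (hs : s < a)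
    (h0a : G.Adj (f 0) (f a)) :
    ∃ SA, PathOn G (f s) (f a) SA ∧ (∀ v ∈ SA, ∃ k, k ≤ a ∧ f k = v) ∧ f 0 ∈ SA ∧
      ∀ k, k ≤ a → G.Adj (f 0) (f k) → f k ∈ SA := by
  have hex : ∃ k, s < k ∧ k ≤ a ∧ G.Adj (f 0) (f k) := ⟨a, hs, le_rfl, h0a⟩
  obtain ⟨h1, h3, h4⟩ := Nat.find_spec hex
  have hmin := fun k (hk : k < Nat.find hex) => Nat.find_min hex hk
  generalize Nat.find hex = s' at *
  have p1 := (PathOn.seg hinj hadj (Nat.zero_le s) (by omega)).symm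
  have p2 := PathOn.seg hinj hadj h3 ham
  have p3 := p1.snoc h4 (by
    simp only [Finset.mem_image, Finset.mem_Icc, not_exists, not_and]
    intro k hk he
    have := hinj _ _ (by omega) (by omega) he
    omega)
  have p4 := p3.append p2 (by
    intro v hv hv'
    simp only [Finset.mem_image, Finset.mem_Icc, Finset.mem_insert] at hv hv'
    rcases hv with hv | ⟨k, hk, rfl⟩
    · exact hv
    · obtain ⟨l, hl, he⟩ := hv'
      have := hinj _ _ (by omega) (by omega) he
      omega)
  refine ⟨_, p4, ?_, ?_, ?_⟩
  · intro v hv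
    simp only [Finset.mem_union, Finset.mem_image, Finset.mem_Icc, Finset.mem_insert] at hv
    rcases hv with (rfl | ⟨k, hk, rfl⟩) | ⟨k, hk, rfl⟩
    · exact ⟨s', h3, rfl⟩
    · exact ⟨k, by omega, rfl⟩
    · exact ⟨k, by omega, rfl⟩
  · simp only [Finset.mem_union, Finset.mem_image, Finset.mem_Icc, Finset.mem_insert]
    exact Or.inl (Or.inr ⟨0, by omega, rfl⟩)
  · intro k hk hk'
    simp only [Finset.mem_union, Finset.mem_image, Finset.mem_Icc, Finset.mem_insert]
    by_cases hks : k ≤ s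
    · exact Or.inl (Or.inr ⟨k, by omega, rfl⟩)
    · by_cases hks' : k < s'
      · exact absurd ⟨by omega, hk, hk'⟩ (hmin k hks')
      · exact Or.inr ⟨k, by omega, rfl⟩

lemma degree_two [Fintype V] (h2 : KConnected G 2) (v : V) : 2 ≤ (G.neighborFinset v).card := by
  have key : ∀ z, z ≠ v → ∃ u, G.Adj v u ∧ u ≠ z := by
    intro z hz
    have hy : ∃ y, y ≠ v ∧ y ≠ z := by
      by_contra! hcon
      have hsub : (Finset.univ : Finset V) ⊆ {v, z} := by
        intro y _
        by_cases h : y = v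
        · simp [h]
        · simp [hcon y h]
      have h3 := Finset.card_le_card hsub
      have h4 := Finset.card_le_two (a := v) (b := z)
      have := h2.1
      rw [Finset.card_univ] at h3
      omega
    obtain ⟨y, hyv, hyz⟩ := hy
    obtain ⟨r, hr, t, ht, R, hR, hzR, -, -⟩ := PathOn.connect h2 z {v} {v}ᶜ
      ⟨v, rfl, hz.symm⟩ ⟨y, hyv, hyz⟩
    have : r = v := hr
    subst this
    cases hR with
    | single => exact absurd rfl ht
    | @cons _ x _ S hadj hw p => exact ⟨x, hadj, fun h => hzR (by simp [← h, p.left_mem])⟩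
  have hc : 1 < Fintype.card V := by have := h2.1; omega
  obtain ⟨z, hz⟩ := Fintype.exists_ne_of_one_lt_card hc v
  obtain ⟨u, hu, -⟩ := key z hz
  obtain ⟨u', hu', hne⟩ := key u hu.ne'
  have : 1 < (G.neighborFinset v).card :=
    Finset.one_lt_card.2 ⟨u, by simpa using hu, u', by simpa using hu', hne.symm⟩
  exact this

lemma crossing_cycle {f : ℕ → V} {m i j : ℕ}
    (hinj : ∀ i j, i ≤ m → j ≤ m → f i = f j → i = j)
    (hadj : ∀ i, i < m → G.Adj (f i) (f (i + 1))) (hij : i < j) (hj : j ≤ m)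
    (hmi : G.Adj (f m) (f i)) :
    ∃ U, PathOn G (f 0) (f j) U ∧ (∀ k, k ≤ i → f k ∈ U) ∧ (∀ k, j ≤ k → k ≤ m → f k ∈ U) ∧
      U.card = i + 1 + (m + 1 - j) := by
  have p1 := PathOn.seg hinj hadj (Nat.zero_le i) (by omega)
  have p2 := (PathOn.seg hinj hadj hj le_rfl).symm
  have hdis : ∀ k l, k ≤ i → j ≤ l → l ≤ m → f k ≠ f l := fun k l h1 h3 h4 h => by
    have := hinj _ _ (by omega) (by omega) h
    omega
  have p3 := PathOn.cons hmi.symm (by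
    simp only [Finset.mem_image, Finset.mem_Icc, not_exists, not_and]
    intro k hk he
    exact hdis i k le_rfl hk.1 hk.2 he.symm) p2
  have p4 := p1.append p3 (by
    intro v hv hv'
    simp only [Finset.mem_image, Finset.mem_Icc, Finset.mem_insert] at hv hv'
    rcases hv' with hv' | ⟨k, hk, rfl⟩
    · exact hv'
    · obtain ⟨l, hl, he⟩ := hv
      exact absurd he (hdis l k hl.2 hk.1 hk.2))
  have hU : (Finset.Icc 0 i).image f ∪ insert (f i) ((Finset.Icc j m).image f) =
      (Finset.Icc 0 i ∪ Finset.Icc j m).image f := by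
    rw [Finset.image_union]
    ext v
    simp only [Finset.mem_union, Finset.mem_insert, Finset.mem_image, Finset.mem_Icc]
    constructor
    · rintro (h | rfl | h)
      · exact Or.inl h
      · exact Or.inl ⟨i, by omega, rfl⟩
      · exact Or.inr h
    · rintro (h | h)
      · exact Or.inl h
      · exact Or.inr (Or.inr h)
  refine ⟨_, p4.congr_set hU, ?_, ?_, ?_⟩
  · intro k hk
    exact Finset.mem_image_of_mem _ (by simp [hk])
  · intro k hk hk'
    exact Finset.mem_image_of_mem _ (by simp [hk, hk'])
  · rw [Finset.card_image_of_injOn, Finset.card_union_of_disjoint]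
    · simp
    · rw [Finset.disjoint_left]
      intro k hk hk'
      simp only [Finset.mem_Icc] at hk hk'
      omega
    · intro k hk l hl h
      simp only [Finset.coe_union, Finset.coe_Icc, Set.mem_union, Set.mem_Icc] at hk hl
      exact hinj _ _ (by omega) (by omega) h

/-- The case without crossing: the vine gives a long cycle. -/
lemma vine_cycle [Fintype V] (h2 : KConnected G 2) {f : ℕ → V} {m δ : ℕ}
    (hinj : ∀ i j, i ≤ m → j ≤ m → f i = f j → i = j)
    (hadj : ∀ i, i < m → G.Adj (f i) (f (i + 1))) (hδ : 2 ≤ δ)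
    (hdeg : ∀ v, δ ≤ (G.neighborFinset v).card)
    (hN0 : ∀ u, G.Adj (f 0) u → ∃ k, k ≤ m ∧ f k = u)
    (hNm : ∀ u, G.Adj (f m) u → ∃ k, k ≤ m ∧ f k = u)
    (hm : 0 < m)
    (hno : ∀ i j, i ≤ m → j ≤ m → G.Adj (f 0) (f j) → G.Adj (f m) (f i) → j ≤ i) :
    ∃ (v : V) (w : G.Walk v v), w.IsCycle ∧ 2 * δ ≤ w.length := by
  obtain ⟨a, ham, h0a, hamax⟩ : ∃ a, a ≤ m ∧ G.Adj (f 0) (f a) ∧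
      ∀ k, k ≤ m → G.Adj (f 0) (f k) → k ≤ a := by
    have h1 : (fun k => G.Adj (f 0) (f k)) 1 := hadj 0 hm
    refine ⟨Nat.findGreatest (fun k => G.Adj (f 0) (f k)) m, Nat.findGreatest_le _,
      Nat.findGreatest_spec (P := fun k => G.Adj (f 0) (f k)) (m := 1) (by omega) h1, ?_⟩
    intro k hk h
    exact Nat.le_findGreatest (P := fun k => G.Adj (f 0) (f k)) hk h
  obtain ⟨b, hbm, hmb, hbmin⟩ : ∃ b, b ≤ m ∧ G.Adj (f m) (f b) ∧
      ∀ k, G.Adj (f m) (f k) → b ≤ k := by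
    have hex : ∃ k, G.Adj (f m) (f k) := ⟨m - 1, by
      have := hadj (m - 1) (by omega)
      rw [Nat.sub_add_cancel (by omega)] at this
      exact this.symm⟩
    have h1 := Nat.find_spec hex
    refine ⟨Nat.find hex, ?_, h1, fun k h => Nat.find_min' hex h⟩
    obtain ⟨k, hk, he⟩ := hNm _ h1
    exact (Nat.find_min' hex (he ▸ h1)).trans hk
  have hab : a ≤ b := hno b a hbm ham h0a hmb
  have hbm' : b < m := by
    rcases hbm.lt_or_eq with h | h
    · exact h
    · subst h; exact absurd hmb (G.irrefl)
  have ha0 : 0 < a := by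
    rcases Nat.eq_zero_or_pos a with h | h
    · subst h; exact absurd h0a (G.irrefl)
    · exact h
  have hInv : Inv G f m a b := by
    have key : ∀ j, a ≤ j → j < m → Inv G f m a j := by
      intro j hj
      induction j, hj using Nat.le_induction with
      | base => intro h; exact inv_base h2 hinj ha0 h
      | succ j hj ih => intro h; exact inv_step h2 hinj hadj hj h (ih (by omega))
    exact key b hab hbm'
  obtain ⟨s, t, S, T, y₁, y₂, hs, hbt, htm, hS, hT, hy, hST, hSa, hTa, hk⟩ := hInv
  obtain ⟨SA, hA1, hA2, hA3, hA4⟩ := end_path hinj hadj ham hs h0a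
  obtain ⟨SB, hB1, hB2, hB3, hB4⟩ := end_path (G := G) (f := fun k => f (m - k)) (m := m)
    (a := m - b) (s := m - t)
    (by
      intro i j hi hj h
      have := hinj _ _ (by omega) (by omega) h
      omega)
    (by
      intro i hi
      have := hadj (m - (i + 1)) (by omega)
      rw [show m - (i + 1) + 1 = m - i by omega] at this
      exact this.symm)
    (by omega) (by omega)
    (by
      simp only [Nat.sub_zero]
      rw [show m - (m - b) = b by omega]
      exact hmb)
  simp only [Nat.sub_zero] at hB1 hB2 hB3 hB4
  rw [show m - (m - b) = b by omega, show m - (m - t) = t by omega] at hB1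
  have hB2' : ∀ v ∈ SB, ∃ k, b ≤ k ∧ k ≤ m ∧ f k = v := by
    intro v hv
    obtain ⟨k, hk, rfl⟩ := hB2 v hv
    exact ⟨m - k, by omega, by omega, rfl⟩
  have hcA : δ + 1 ≤ SA.card := by
    have hsub : insert (f 0) (G.neighborFinset (f 0)) ⊆ SA := by
      intro v hv
      rw [Finset.mem_insert, SimpleGraph.mem_neighborFinset] at hv
      rcases hv with rfl | hv
      · exact hA3
      · obtain ⟨k, hk, rfl⟩ := hN0 v hv
        exact hA4 k (hamax k hk hv) hv
    have h1 := Finset.card_le_card hsub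
    rw [Finset.card_insert_of_notMem (by simp)] at h1
    have := hdeg (f 0)
    omega
  have hcB : δ + 1 ≤ SB.card := by
    have hsub : insert (f m) (G.neighborFinset (f m)) ⊆ SB := by
      intro v hv
      rw [Finset.mem_insert, SimpleGraph.mem_neighborFinset] at hv
      rcases hv with rfl | hv
      · exact hB3
      · obtain ⟨k, hk, rfl⟩ := hNm v hv
        have h1 := hbmin k hv
        have := hB4 (m - k) (by omega)
        rw [show m - (m - k) = k by omega] at this
        exact this hv
    have h1 := Finset.card_le_card hsub
    rw [Finset.card_insert_of_notMem (by simp)] at h1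
    have := hdeg (f m)
    omega
  have hAB : ∀ v ∈ SA, v ∈ SB → v = f a ∧ v = f b := by
    intro v hv hv'
    obtain ⟨k, hk, rfl⟩ := hA2 v hv
    obtain ⟨l, hl, hl', he⟩ := hB2' _ hv'
    have := hinj _ _ (by omega) (by omega) he
    have h1 : k = a := by omega
    have h2 : k = b := by omega
    exact ⟨by rw [h1], by rw [h2]⟩
  have hAS : ∀ v ∈ SA, v ∈ S → v = f a := by
    intro v hv hv'
    obtain ⟨k, hk', rfl⟩ := hA2 v hv
    rcases hk'.lt_or_eq with h | h
    · exact absurd hv' (hSa k h)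
    · rw [h]
  have haS := hS.left_mem
  have hAT : ∀ v ∈ SA, v ∈ T → v = f s := by
    intro v hv hv'
    obtain ⟨k, hk', rfl⟩ := hA2 v hv
    rcases hk'.lt_or_eq with h | h
    · rw [hTa k h hv']
    · rw [h] at hv'
      exact absurd hv' (hST _ haS)
  have hBST : ∀ v ∈ SB, v ∈ S ∨ v ∈ T → v = f b ∨ v = f t := by
    intro v hv hv'
    obtain ⟨k, h1, h3, rfl⟩ := hB2' v hv
    rcases h1.lt_or_eq with h | h
    · right; rw [hk k h h3 hv']
    · left; rw [h]
  have hsb : f s ≠ f b := fun h => by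
    have := hinj _ _ (by omega) (by omega) h; omega
  have hst : f s ≠ f t := fun h => by
    have := hinj _ _ (by omega) (by omega) h; omega
  have hcard : 2 * δ ≤ (SA ∪ S ∪ SB).card := by
    have h1 : (SA ∩ SB).card ≤ 1 := Finset.card_le_one.2 (by
      intro x hx y hy
      rw [Finset.mem_inter] at hx hy
      rw [(hAB x hx.1 hx.2).1, (hAB y hy.1 hy.2).1])
    have h3 := Finset.card_union_add_card_inter SA SB
    have h4 : (SA ∪ SB).card ≤ (SA ∪ S ∪ SB).card := Finset.card_le_card (by
      intro v hv; simp at hv ⊢; tauto)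
    omega
  have hSr := hS.right_mem
  have hTr := hT.right_mem
  have q1 := hA1.append hS hAS
  clear hinj hadj hdeg hN0 hNm hno hamax hbmin hA2 hA4 hB2 hB2' hB4 hSa hTa hk
  rcases hy with ⟨rfl, rfl⟩ | ⟨rfl, rfl⟩
  · have q2 := q1.append hB1.symm (by grind)
    obtain ⟨v, w, hw, hl⟩ := q2.exists_cycle' hT hst (by grind) (by omega)
    exact ⟨v, w, hw, by omega⟩
  · have q2 := q1.append hB1 (by grind)
    obtain ⟨v, w, hw, hl⟩ := q2.exists_cycle' hT hsb (by grind) (by omega)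
    exact ⟨v, w, hw, by omega⟩

lemma main [Fintype V] (h2 : KConnected G 2) {δ : ℕ} (hδ : 2 ≤ δ)
    (hdeg : ∀ v, δ ≤ (G.neighborFinset v).card) :
    ∃ (v : V) (w : G.Walk v v), w.IsCycle ∧ min (Fintype.card V) (2 * δ) ≤ w.length := by
  have hpos : 0 < Fintype.card V := by have := h2.1; omega
  obtain ⟨v0⟩ := Fintype.card_pos_iff.1 hpos
  obtain ⟨S, hS, hSmax⟩ := Finset.exists_max_image
    (Finset.univ.filter fun S : Finset V => ∃ x y, PathOn G x y S) Finset.card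
    ⟨{v0}, by simpa using ⟨v0, v0, PathOn.single v0⟩⟩
  rw [Finset.mem_filter] at hS
  obtain ⟨-, x, y, hp⟩ := hS
  have hmax : ∀ x y S', PathOn G x y S' → S'.card ≤ S.card := fun x y S' h =>
    hSmax S' (by simpa using ⟨x, y, h⟩)
  clear hSmax
  obtain ⟨m, f, hmS, rfl, rfl, hinj, hadj, hmem⟩ := hp.exists_fun
  have hN0 : ∀ u, G.Adj (f 0) u → ∃ k, k ≤ m ∧ f k = u := by
    intro u hu
    rw [← hmem]
    by_contra hn
    have := hmax _ _ _ (PathOn.cons hu.symm hn hp)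
    rw [Finset.card_insert_of_notMem hn] at this
    omega
  have hNm : ∀ u, G.Adj (f m) u → ∃ k, k ≤ m ∧ f k = u := by
    intro u hu
    rw [← hmem]
    by_contra hn
    have := hmax _ _ _ (PathOn.cons hu.symm hn hp.symm)
    rw [Finset.card_insert_of_notMem hn] at this
    omega
  have hm2 : 2 ≤ m := by
    have hsub : G.neighborFinset (f 0) ⊆ S.erase (f 0) := by
      intro v hv
      rw [SimpleGraph.mem_neighborFinset] at hv
      rw [Finset.mem_erase, hmem]
      exact ⟨hv.ne', hN0 v hv⟩
    have h1 := Finset.card_le_card hsub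
    rw [Finset.card_erase_of_mem hp.left_mem] at h1
    have := hdeg (f 0)
    omega
  by_cases hcr : ∃ d i j, i < j ∧ j ≤ m ∧ G.Adj (f 0) (f j) ∧ G.Adj (f m) (f i) ∧ j - i = d
  · obtain ⟨i, j, hij, hj, h0j, hmi, hd⟩ := Nat.find_spec hcr
    have hmin : ∀ i' j', i' < j' → j' ≤ m → G.Adj (f 0) (f j') → G.Adj (f m) (f i') →
        j - i ≤ j' - i' := by
      intro i' j' h1 h3 h4 h5
      rw [hd]
      exact Nat.find_min' hcr ⟨i', j', h1, h3, h4, h5, rfl⟩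
    clear hd
    obtain ⟨U, hU, hU1, hU2, hUc⟩ := crossing_cycle hinj hadj hij hj hmi
    by_cases hd1 : j = i + 1
    · have hSU : S ⊆ U := by
        intro v hv
        obtain ⟨k, hk, rfl⟩ := (hmem v).1 hv
        by_cases h : k ≤ i
        · exact hU1 k h
        · exact hU2 k (by omega) hk
      have hUS : U = S := (Finset.eq_of_subset_of_card_le hSU (hmax _ _ _ hU)).symm
      subst hUS
      obtain ⟨v, w, hw, hl⟩ := hU.exists_cycle h0j.symm (by omega)
      refine ⟨v, w, hw, ?_⟩
      rw [hl]
      by_cases hall : U = Finset.univ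
      · rw [hall, Finset.card_univ]; exact min_le_left _ _
      · exfalso
        obtain ⟨u, hu⟩ : ∃ u, u ∉ U := by
          by_contra! h
          exact hall (Finset.eq_univ_iff_forall.2 h)
        obtain ⟨r, hr, t, ht, R, hR, -, hRX, -⟩ := PathOn.connect h2 (f 1) {v | v ∈ U} {v | v ∉ U}
          ⟨f 0, (hmem _).2 ⟨0, by omega, rfl⟩, fun h => by
            have := hinj _ _ (by omega) (by omega) h; omega⟩
          ⟨u, hu, fun h => hu ((hmem _).2 ⟨1, by omega, h.symm⟩)⟩
        cases hR with
        | single => exact ht hr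
        | @cons _ x _ R' hrx hrR' q =>
          have hxU : x ∉ U := fun h => by
            have := hRX x (by simp [q.left_mem]) h
            exact hrx.ne this.symm
          obtain ⟨z, hz⟩ := hU.rotate h0j.symm hr
          have := hmax _ _ _ (PathOn.cons hrx.symm hxU hz)
          rw [Finset.card_insert_of_notMem hxU] at this
          omega
    · have hcount : 2 * δ ≤ U.card := by
        let A := (Finset.range m).filter fun k => G.Adj (f 0) (f (k + 1))
        let B := (Finset.range m).filter fun k => G.Adj (f m) (f k)
        have hA : δ ≤ A.card := by
          have hsub : G.neighborFinset (f 0) ⊆ A.image fun k => f (k + 1) := by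
            intro v hv
            rw [SimpleGraph.mem_neighborFinset] at hv
            obtain ⟨k, hk, rfl⟩ := hN0 v hv
            rcases k with _ | k
            · exact absurd hv G.irrefl
            · exact Finset.mem_image.2 ⟨k, by simp [A, hv]; omega, rfl⟩
          exact (hdeg _).trans ((Finset.card_le_card hsub).trans Finset.card_image_le)
        have hB : δ ≤ B.card := by
          have hsub : G.neighborFinset (f m) ⊆ B.image f := by
            intro v hv
            rw [SimpleGraph.mem_neighborFinset] at hv
            obtain ⟨k, hk, rfl⟩ := hNm v hv
            rcases hk.lt_or_eq with h | h
            · exact Finset.mem_image.2 ⟨k, by simp [B, hv, h], rfl⟩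
            · subst h; exact absurd hv G.irrefl
          exact (hdeg _).trans ((Finset.card_le_card hsub).trans Finset.card_image_le)
        have hdisj : Disjoint A B := by
          rw [Finset.disjoint_left]
          intro k hk hk'
          simp only [A, B, Finset.mem_filter, Finset.mem_range] at hk hk'
          have := hmin k (k + 1) (by omega) (by omega) hk.2 hk'.2
          omega
        have hsub : A ∪ B ⊆ Finset.Icc 0 i ∪ Finset.Ico (j - 1) m := by
          intro k hk
          simp only [A, B, Finset.mem_union, Finset.mem_filter, Finset.mem_range] at hk
          simp only [Finset.mem_union, Finset.mem_Icc, Finset.mem_Ico]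
          rcases hk with ⟨h1, h3⟩ | ⟨h1, h3⟩
          · by_contra hcon
            have := hmin i (k + 1) (by omega) (by omega) h3 hmi
            omega
          · by_contra hcon
            have := hmin k j (by omega) (by omega) h0j h3
            omega
        have h1 := Finset.card_le_card hsub
        have h3 := Finset.card_union_le (Finset.Icc 0 i) (Finset.Ico (j - 1) m)
        rw [Finset.card_union_of_disjoint hdisj] at h1
        rw [Nat.card_Icc, Nat.card_Ico] at h3
        omega
      obtain ⟨v, w, hw, hl⟩ := hU.exists_cycle h0j.symm (by omega)
      exact ⟨v, w, hw, (min_le_right _ _).trans (by omega)⟩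
  · obtain ⟨v, w, hw, hl⟩ := vine_cycle h2 hinj hadj hδ hdeg hN0 hNm (by omega) (by
      intro i j hi hj h1 h3
      by_contra hcon
      exact hcr ⟨_, i, j, by omega, hj, h1, h3, rfl⟩)
    exact ⟨v, w, hw, (min_le_right _ _).trans hl⟩

end DiracAux

theorem dirac_circumference (G : SimpleGraph V) [Fintype V] [DecidableRel G.Adj]
    (h2 : KConnected G 2) :
    circumference G ≥ min (Fintype.card V) (2 * G.minDegree) := by
  obtain ⟨v, w, hw, hl⟩ := DiracAux.main h2 (δ := max 2 G.minDegree) (le_max_left _ _) (by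
    intro v
    refine max_le (DiracAux.degree_two h2 v) ?_
    refine (G.minDegree_le_degree v).trans (le_of_eq ?_)
    rw [← SimpleGraph.card_neighborFinset_eq_degree]
    congr!)
  have hbdd : BddAbove {n | ∃ (v : V) (w : G.Walk v v), w.IsCycle ∧ w.length = n} := by
    refine ⟨Fintype.card V, ?_⟩
    rintro n ⟨v, w, hw, rfl⟩
    have h := hw.support_nodup.length_le_card
    simpa using h
  have h1 : w.length ≤ circumference G := le_csSup hbdd ⟨v, w, hw, rfl⟩
  have h3 : min (Fintype.card V) (2 * G.minDegree) ≤
      min (Fintype.card V) (2 * max 2 G.minDegree) :=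
    min_le_min le_rfl (Nat.mul_le_mul_left 2 (le_max_right _ _))
  exact h3.trans (hl.trans h1)
end

section
/- Let G be a 3-connected graph with minimum degree δ. Then either the circumference satisfies c ≥ 3δ − 3, or every longest cycle in G is a dominating cycle. -/
open SimpleGraph

variable {V : Type*}

section JungAux

open scoped Classical

/-- `a` and `b` are joined by a walk inside `S`. -/
def JReach (G : SimpleGraph V) (S : Set V) (a b : V) : Prop :=
  ∃ p : G.Walk a b, ∀ x ∈ p.support, x ∈ S

/-- `a` and `b` are joined by a path inside `S` of length at least `l`. -/
def JPath (G : SimpleGraph V) (S : Set V) (a b : V) (l : ℕ) : Prop :=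
  ∃ p : G.Walk a b, p.IsPath ∧ (∀ x ∈ p.support, x ∈ S) ∧ l ≤ p.length

variable {G : SimpleGraph V}

lemma JReach.refl {S : Set V} {a : V} (h : a ∈ S) : JReach G S a a :=
  ⟨Walk.nil, by simpa using h⟩

lemma JReach.symm {S : Set V} {a b : V} (h : JReach G S a b) : JReach G S b a := by
  obtain ⟨p, hp⟩ := h
  exact ⟨p.reverse, by simpa using hp⟩

lemma JReach.trans {S : Set V} {a b c : V} (h : JReach G S a b) (h' : JReach G S b c) :
    JReach G S a c := by
  obtain ⟨p, hp⟩ := h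
  obtain ⟨q, hq⟩ := h'
  refine ⟨p.append q, fun x hx => ?_⟩
  rcases (Walk.mem_support_append_iff _ _).1 hx with h | h
  · exact hp x h
  · exact hq x h

lemma JReach.mono {S T : Set V} {a b : V} (h : JReach G S a b) (hST : S ⊆ T) :
    JReach G T a b := by
  obtain ⟨p, hp⟩ := h
  exact ⟨p, fun x hx => hST (hp x hx)⟩

lemma JReach.left {S : Set V} {a b : V} (h : JReach G S a b) : a ∈ S := by
  obtain ⟨p, hp⟩ := h
  exact hp _ p.start_mem_support

lemma JReach.right {S : Set V} {a b : V} (h : JReach G S a b) : b ∈ S := by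
  obtain ⟨p, hp⟩ := h
  exact hp _ p.end_mem_support

lemma JReach.edge {S : Set V} {a b : V} (h : G.Adj a b) (ha : a ∈ S) (hb : b ∈ S) :
    JReach G S a b := by
  refine ⟨h.toWalk, fun x hx => ?_⟩
  simp at hx
  rcases hx with rfl | rfl <;> assumption

/-- Leaving a set along a walk. -/
lemma JReach.exists_edge {S : Set V} {a b : V} (h : JReach G S a b) (K : Set V)
    (ha : a ∈ K) (hb : b ∉ K) :
    ∃ x y, x ∈ K ∧ y ∉ K ∧ x ∈ S ∧ y ∈ S ∧ G.Adj x y := by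
  obtain ⟨p, hp⟩ := h
  induction p with
  | nil => exact absurd ha hb
  | @cons u v w hadj q ih =>
    by_cases hv : v ∈ K
    · exact ih hv hb (fun x hx => hp x (by simp [hx]))
    · exact ⟨u, v, ha, hv, hp _ (by simp), hp _ (by simp), hadj⟩

/-- The component of `y` in `S` is connected within itself. -/
lemma JReach.comp {S K : Set V} {y a : V} (h : JReach G S y a)
    (hK : ∀ c, JReach G S y c → c ∈ K) : JReach G K y a := by
  obtain ⟨p, hp⟩ := h
  refine ⟨p, fun x hx => hK x ?_⟩
  refine ⟨p.takeUntil x hx, fun c hc => hp c (p.support_takeUntil_subset_support hx hc)⟩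

/-- Avoiding a lobe `K` hanging at `x`. -/
lemma JReach.avoid {S K : Set V} {x y : V} (h : JReach G S y x) (hy : y ∉ K) (hx : x ∉ K)
    (hcl : ∀ a ∈ K, ∀ c ∈ S, G.Adj a c → c ∈ K ∨ c = x) : JReach G (S \ K) y x := by
  obtain ⟨p, hp⟩ := h
  induction p with
  | nil => exact JReach.refl ⟨hp _ (by simp), hy⟩
  | @cons u v w hadj q ih =>
    have hu : u ∈ S := hp _ (by simp)
    have hw : w ∈ S := hp _ (by simp)
    by_cases huw : u = w
    · subst huw
      exact JReach.refl ⟨hu, hy⟩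
    · have hv : v ∉ K := by
        intro hv
        rcases hcl v hv u hu hadj.symm with h | h
        · exact hy h
        · exact huw h
      have hvS : v ∈ S := hp _ (by simp)
      exact (JReach.edge (S := S \ K) hadj ⟨hu, hy⟩ ⟨hvS, hv⟩).trans
        (ih hv hx hcl (fun x hx => hp x (by simp [hx])))

lemma JReach.path {S : Set V} {a b : V} (h : JReach G S a b) : JPath G S a b 0 := by
  obtain ⟨p, hp⟩ := h
  exact ⟨p.bypass, p.bypass_isPath, fun x hx => hp x (p.support_bypass_subset_support hx), by simp⟩

lemma JReach.path_one {S : Set V} {a b : V} (h : JReach G S a b) (hab : a ≠ b) :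
    JPath G S a b 1 := by
  obtain ⟨p, hp, hS, -⟩ := h.path
  refine ⟨p, hp, hS, ?_⟩
  rcases Nat.eq_zero_or_pos p.length with h0 | h0
  · exact absurd (Walk.eq_of_length_eq_zero h0) hab
  · exact h0

lemma JPath.mono {S T : Set V} {a b : V} {k l : ℕ} (h : JPath G S a b k) (hST : S ⊆ T)
    (hlk : l ≤ k) : JPath G T a b l := by
  obtain ⟨p, hp, hS, hl⟩ := h
  exact ⟨p, hp, fun x hx => hST (hS x hx), hlk.trans hl⟩

lemma JPath.symm {S : Set V} {a b : V} {k : ℕ} (h : JPath G S a b k) : JPath G S b a k := by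
  obtain ⟨p, hp, hS, hl⟩ := h
  exact ⟨p.reverse, hp.reverse, by simpa using hS, by simpa using hl⟩

lemma JPath.edge {a b : V} (h : G.Adj a b) : JPath G {a, b} a b 1 := by
  refine ⟨h.toWalk, ?_, ?_, by simp⟩
  · simp [h.ne]
  · simp

lemma JPath.append {S T : Set V} {a b c : V} {k l : ℕ} (h : JPath G S a b k)
    (h' : JPath G T b c l) (hST : ∀ x ∈ S, x ∈ T → x = b) : JPath G (S ∪ T) a c (k + l) := by
  obtain ⟨p, hp, hpS, hpl⟩ := h
  obtain ⟨q, hq, hqT, hql⟩ := h'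
  refine ⟨p.append q, ?_, ?_, ?_⟩
  · rw [Walk.isPath_def, Walk.support_append, List.nodup_append]
    refine ⟨hp.support_nodup, hq.support_nodup.tail, ?_⟩
    rintro x hx y hy rfl
    have hxb := hST x (hpS x hx) (hqT x (List.mem_of_mem_tail hy))
    subst hxb
    have := hq.support_nodup
    rw [← Walk.cons_tail_support] at this
    exact (List.nodup_cons.1 this).1 hy
  · intro x hx
    rcases (Walk.mem_support_append_iff _ _).1 hx with h | h
    · exact Or.inl (hpS x h)
    · exact Or.inr (hqT x h)
  · rw [Walk.length_append]
    omega

/-- Closing a path to a cycle. -/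
lemma JPath.cycle {S : Set V} {a b : V} {k : ℕ} (h : JPath G S a b k) (hk : 2 ≤ k)
    (hab : G.Adj b a) : ∃ (u : V) (w : G.Walk u u), w.IsCycle ∧ k + 1 ≤ w.length := by
  obtain ⟨p, hp, -, hl⟩ := h
  refine ⟨b, Walk.cons hab p, ?_, by simpa using hl⟩
  rw [Walk.cons_isCycle_iff]
  refine ⟨hp, fun hh => ?_⟩
  have hn := hp.getVert_injOn (show 1 ∈ {i | i ≤ p.length} by simp; omega)
    (show p.length ∈ {i | i ≤ p.length} by simp)
  have : p.getVert 1 = b := by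
    have := hp.eq_snd_of_mem_edges (w := b) (by rwa [Sym2.eq_swap] at hh)
    exact this.symm
  rw [this, Walk.getVert_length] at hn
  have := hn rfl
  omega

/-- Long paths between two vertices: a version of the Erdős–Gallai lemma with one
exceptional vertex `z`. -/
lemma jung_EG (m : ℕ) : ∀ (W : Finset V) (u v z : V) (k : ℕ), W.card ≤ m → u ∈ W → v ∈ W →
    u ≠ v → JReach G (W : Set V) u v →
    (∀ x ∈ W, ∀ y ∈ W, y ≠ x → JReach G ((W : Set V) \ {x}) y u ∨ JReach G ((W : Set V) \ {x}) y v) →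
    (∀ y ∈ W, y ≠ v → y ≠ z → k ≤ (W.filter (G.Adj y)).card) →
    (∃ y ∈ W, y ≠ v ∧ y ≠ z) → JPath G (W : Set V) u v k := by
  induction m with
  | zero =>
    intro W u v z k hW hu
    simp at hW
    simp [hW] at hu
  | succ m ih =>
    intro W u v z k hW hu hv huv hconn hstar hdeg hne
    by_cases h0 : ∃ y ∈ W, y ≠ u ∧ y ≠ v ∧ y ≠ z
    · -- lobes
      let Lobe : V → Finset V → Prop := fun x K => x ∈ W ∧ x ≠ u ∧ K ⊆ W ∧ u ∉ K ∧ x ∉ K ∧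
        v ∉ K ∧ K.Nonempty ∧ (∀ a ∈ K, ∀ c ∈ W, c ≠ u → G.Adj a c → c ∈ K ∨ c = x) ∧
        (∀ a ∈ K, ∀ b ∈ K, JReach G (K : Set V) a b)
      have hex : ∃ n, ∃ x K, Lobe x K ∧ (∃ y ∈ K, y ≠ z) ∧ K.card = n := by
        obtain ⟨y, hy, hyu, hyv, hyz⟩ := h0
        let K := W.filter (fun a => JReach G ((W : Set V) \ {u, v}) y a)
        have hKmem : ∀ a, JReach G ((W : Set V) \ {u, v}) y a → a ∈ (K : Set V) := by
          intro a ha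
          have := ha.right.1
          simp only [K, Finset.coe_filter, Set.mem_ofPred_eq]
          exact ⟨this, ha⟩
        have hyK : y ∈ K := hKmem y (JReach.refl ⟨hy, by simp [hyu, hyv]⟩)
        refine ⟨_, v, K, ⟨hv, huv.symm, Finset.filter_subset _ _, ?_, ?_, ?_, ⟨y, hyK⟩, ?_, ?_⟩,
          ⟨y, hyK, hyz⟩, rfl⟩
        · intro h
          have := (Finset.mem_filter.1 h).2.right.2
          simp at this
        · intro h
          have := (Finset.mem_filter.1 h).2.right.2
          simp at this
        · intro h
          have := (Finset.mem_filter.1 h).2.right.2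
          simp at this
        · intro a ha c hc hcu hac
          by_cases hcv : c = v
          · exact Or.inr hcv
          · left
            have h1 := (Finset.mem_filter.1 ha).2
            exact hKmem c (h1.trans (JReach.edge hac h1.right ⟨hc, by simp [hcu, hcv]⟩))
        · intro a ha b hb
          have h1 := (Finset.mem_filter.1 ha).2
          have h2 := (Finset.mem_filter.1 hb).2
          exact (h1.comp hKmem).symm.trans (h2.comp hKmem)
      obtain ⟨x, K, hL, ⟨y, hyK, hyz⟩, hKc⟩ := Nat.find_spec hex
      have hmin := fun n => @Nat.find_min _ _ hex n
      -- every lobe has a neighbour of u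
      have hnb : ∀ x K, Lobe x K → ∃ a ∈ K, G.Adj a u := by
        rintro x K ⟨hxW, hxu, hKW, huK, hxK, hvK, ⟨y, hy⟩, hcl, -⟩
        have hyx : y ≠ x := fun h => hxK (h ▸ hy)
        have : ∃ t, t ∉ K ∧ JReach G ((W : Set V) \ {x}) y t := by
          rcases hstar x hxW y (hKW hy) hyx with h | h
          · exact ⟨u, huK, h⟩
          · exact ⟨v, hvK, h⟩
        obtain ⟨t, ht, hr⟩ := this
        obtain ⟨a, c, ha, hc, -, hcS, hac⟩ := hr.exists_edge (K : Set V) hy ht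
        refine ⟨a, ha, ?_⟩
        by_cases hcu : c = u
        · exact hcu ▸ hac
        · rcases hcl a ha c hcS.1 hcu hac with h | h
          · exact absurd h hc
          · exact absurd h hcS.2
      have hL' := hL
      obtain ⟨hxW, hxu, hKW, huK, hxK, hvK, -, hcl, hKconn⟩ := hL'
      obtain ⟨u', hu'K, hu'u, hu'z⟩ : ∃ u' ∈ K, G.Adj u' u ∧ (z ∈ K → G.Adj z u → u' = z) := by
        by_cases hz : z ∈ K ∧ G.Adj z u
        · exact ⟨z, hz.1, hz.2, fun _ _ => rfl⟩
        · obtain ⟨a, ha, hau⟩ := hnb x K hL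
          exact ⟨a, ha, hau, fun h1 h2 => absurd ⟨h1, h2⟩ hz⟩
      have hWuv : ∀ y ∈ W, y ≠ u → JReach G ((W : Set V) \ {u}) y v := by
        intro y hy hyu
        rcases hstar u hu y hy hyu with h | h
        · exact absurd rfl h.right.2
        · exact h
      have hu'x : u' ≠ x := fun h => hxK (h ▸ hu'K)
      have hsub : insert x K ⊆ W := Finset.insert_subset hxW hKW
      have hP : JPath G ((insert x K : Finset V) : Set V) u' x (k - 1) := by
        refine ih (insert x K) u' x z (k - 1) ?_ (Finset.mem_insert_of_mem hu'K)
          (Finset.mem_insert_self _ _) hu'x ?_ ?_ ?_ ?_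
        · have : insert x K ⊂ W := by
            refine Finset.ssubset_iff_subset_ne.2 ⟨hsub, fun h => ?_⟩
            rw [← h] at hu
            rcases Finset.mem_insert.1 hu with h | h
            · exact hxu h.symm
            · exact huK h
          have := Finset.card_lt_card this
          omega
        · obtain ⟨a, c, ha, hc, -, hcS, hac⟩ :=
            (hWuv u' (hKW hu'K) (fun h => huK (h ▸ hu'K))).exists_edge (K : Set V) hu'K hvK
          rcases hcl a ha c hcS.1 hcS.2 hac with h | h
          · exact absurd h hc
          · subst h
            refine ((hKconn u' hu'K a ha).mono (by simp)).trans (JReach.edge hac ?_ (by simp))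
            have : a ∈ K := ha
            simp [this]
        · intro x' hx' y' hy' hyx'
          rcases Finset.mem_insert.1 hx' with rfl | hx'K
          · left
            have hy'K : y' ∈ K := (Finset.mem_insert.1 hy').resolve_left hyx'
            refine (hKconn y' hy'K u' hu'K).mono ?_
            intro t ht
            refine ⟨by simp [show t ∈ K from ht], fun h => hxK ?_⟩
            have : t = x' := h
            exact this ▸ ht
          · by_contra hcon
            push Not at hcon
            obtain ⟨hc1, hc2⟩ := hcon
            let S : Set V := ((insert x K : Finset V) : Set V) \ {x'}
            let K' := (insert x K).filter (fun a => JReach G S y' a)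
            have hKmem : ∀ a, JReach G S y' a → a ∈ (K' : Set V) := by
              intro a ha
              have := ha.right.1
              simp only [K', Finset.coe_filter, Set.mem_ofPred_eq]
              exact ⟨this, ha⟩
            have hyK' : y' ∈ K' := hKmem y' (JReach.refl ⟨hy', hyx'⟩)
            have hK'K : K' ⊆ K := by
              intro a ha
              have h1 := Finset.mem_filter.1 ha
              rcases Finset.mem_insert.1 h1.1 with h | h
              · subst h
                exact absurd h1.2 hc2
              · exact h
            have hx'K' : x' ∉ K' := fun h => (Finset.mem_filter.1 h).2.right.2 rfl
            have hlobe : Lobe x' K' := by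
              refine ⟨hKW hx'K, fun h => huK (h ▸ hx'K), hK'K.trans hKW, fun h => huK (hK'K h),
                hx'K', fun h => hvK (hK'K h), ⟨y', hyK'⟩, ?_, ?_⟩
              · intro a ha c hc hcu hac
                by_cases hcx : c = x'
                · exact Or.inr hcx
                · left
                  have h1 := (Finset.mem_filter.1 ha).2
                  refine hKmem c (h1.trans (JReach.edge hac h1.right ⟨?_, hcx⟩))
                  rcases hcl a (hK'K ha) c hc hcu hac with h | h
                  · simp [h]
                  · simp [h]
              · intro a ha b hb
                have h1 := (Finset.mem_filter.1 ha).2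
                have h2 := (Finset.mem_filter.1 hb).2
                exact (h1.comp hKmem).symm.trans (h2.comp hKmem)
            by_cases hz : ∃ y ∈ K', y ≠ z
            · refine hmin K'.card ?_ ⟨x', K', hlobe, hz, rfl⟩
              rw [← hKc]
              exact Finset.card_lt_card (Finset.ssubset_iff_subset_ne.2
                ⟨hK'K, fun h => hx'K' (h ▸ hx'K)⟩)
            · push Not at hz
              obtain ⟨a, ha, hau⟩ := hnb x' K' hlobe
              have haz := hz a ha
              subst haz
              have := hu'z (hK'K ha) hau
              subst this
              exact hc1 (Finset.mem_filter.1 ha).2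
        · intro y' hy' hyx hyz
          have hy'K : y' ∈ K := (Finset.mem_insert.1 hy').resolve_left hyx
          have h1 := hdeg y' (hKW hy'K) (fun h => hvK (h ▸ hy'K)) hyz
          have h2 : W.filter (G.Adj y') ⊆ insert u ((insert x K).filter (G.Adj y')) := by
            intro c hc
            have hc' := Finset.mem_filter.1 hc
            by_cases hcu : c = u
            · simp [hcu]
            · refine Finset.mem_insert_of_mem (Finset.mem_filter.2 ⟨?_, hc'.2⟩)
              rcases hcl y' hy'K c hc'.1 hcu hc'.2 with h | h
              · simp [h]
              · simp [h]
          have h3 := (Finset.card_le_card h2).trans (Finset.card_insert_le _ _)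
          omega
        · exact ⟨y, Finset.mem_insert_of_mem hyK, fun h => hxK (h ▸ hyK), hyz⟩
      have hxv : JReach G (((W : Set V) \ {u}) \ (K : Set V)) x v := by
        refine (JReach.avoid (hWuv x hxW hxu).symm hvK hxK ?_).symm
        intro a ha c hc hac
        exact hcl a ha c hc.1 hc.2 hac
      have h1 := (JPath.edge hu'u.symm).append hP (by
        intro t ht ht'
        rcases ht with h | h
        · subst h
          rcases Finset.mem_insert.1 ht' with h | h
          · exact absurd h.symm hxu
          · exact absurd h huK
        · exact h)
      have h2 := h1.append hxv.path (by
        intro t ht ht'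
        rcases ht with h | h
        · rcases h with h | h
          · exact absurd h ht'.1.2
          · have : t = u' := h
            exact absurd (this ▸ hu'K) ht'.2
        · rcases Finset.mem_insert.1 h with h | h
          · exact h
          · exact absurd h ht'.2)
      refine h2.mono ?_ (by omega)
      intro t ht
      rcases ht with (h | h) | h
      · rcases h with h | h
        · exact h ▸ hu
        · have : t = u' := h
          exact this ▸ hKW hu'K
      · exact hsub h
      · exact h.1.1
    · push Not at h0
      obtain ⟨y, hy, hyv, hyz⟩ := hne
      have hyu : y = u := by
        by_contra h
        exact hyz (h0 y hy h hyv)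
      subst hyu
      have hd := hdeg y hu huv hyz
      by_cases hz : z ∈ W ∧ z ≠ v ∧ G.Adj y z
      · obtain ⟨hzW, hzv, hyz'⟩ := hz
        have hzv' : G.Adj z v := by
          rcases hstar y hu z hzW (Ne.symm hyz) with h | h
          · exact absurd rfl h.right.2
          · obtain ⟨a, c, ha, hc, -, hcS, hac⟩ := h.exists_edge ({z} : Set V) rfl (Ne.symm hzv)
            have ha' : a = z := ha
            subst ha'
            by_cases hcv : c = v
            · exact hcv ▸ hac
            · exact absurd (h0 c hcS.1 hcS.2 hcv) hc
        have hk : k ≤ 2 := by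
          have : W.filter (G.Adj y) ⊆ {v, z} := by
            intro c hc
            have hc' := Finset.mem_filter.1 hc
            by_cases hcv : c = v
            · simp [hcv]
            · simp [h0 c hc'.1 hc'.2.ne' hcv]
          exact hd.trans ((Finset.card_le_card this).trans Finset.card_le_two)
        refine ((JPath.edge hyz').append (JPath.edge hzv') ?_).mono ?_ hk
        · intro t ht ht'
          rcases ht with h | h
          · subst h
            rcases ht' with h | h
            · exact h
            · exact absurd h huv
          · exact h
        · intro t ht
          have hmem : ∀ a b : V, a ∈ W → b ∈ W → t ∈ ({a, b} : Set V) → t ∈ W := by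
            rintro a b ha hb (h | h)
            · exact h ▸ ha
            · have h' : t = b := h
              exact h' ▸ hb
          rcases ht with h | h
          · exact hmem _ _ hu hzW h
          · exact hmem _ _ hzW hv h
      · have hk : k ≤ 1 := by
          have : W.filter (G.Adj y) ⊆ {v} := by
            intro c hc
            have hc' := Finset.mem_filter.1 hc
            by_cases hcv : c = v
            · simp [hcv]
            · have := h0 c hc'.1 hc'.2.ne' hcv
              subst this
              exact absurd ⟨hc'.1, hcv, hc'.2⟩ hz
          exact hd.trans ((Finset.card_le_card this).trans (by simp))
        exact (hconn.path_one huv).mono subset_rfl hk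

/-- Counting along a cycle whose positions carry label sets. -/
lemma jung_cyc {L : Type*} (n E : ℕ) (N : ℕ → Finset L) (hper : N n = N 0)
    (hN0 : (N 0).Nonempty)
    (hgap : ∀ i j, i < j → j ≤ n → j < i + n → (N i).Nonempty → (N j).Nonempty → i + 2 ≤ j)
    (hcross : ∀ i j, i < j → j ≤ n → j < i + n → ∀ a ∈ N i, ∀ b ∈ N j, a ≠ b → i + E + 2 ≤ j)
    (hq : ∃ i, 0 < i ∧ i < n ∧ (N i).Nonempty) :
    ∃ F : Finset ℕ, F ⊆ (Finset.range n).filter (fun i => (N i).Nonempty) ∧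
      2 * ((Finset.range n).filter (fun i => (N i).Nonempty)).card + E * F.card ≤ n ∧
      (∀ i < n, ∀ a ∈ N i, ∀ b ∈ N i, a ≠ b → i ∈ F) ∧
      (∀ m, 1 ≤ m → F.card ≤ m → ∃ (P : Finset ℕ) (Q : Finset L), P.card + Q.card ≤ m ∧
        ∀ i < n, ∀ a ∈ N i, i ∈ P ∨ a ∈ Q) := by
  obtain ⟨i1, hi1, hi1n, hNi1⟩ := hq
  set X := (Finset.range n).filter (fun i => (N i).Nonempty) with hX
  have hNn : (N n).Nonempty := hper ▸ hN0
  have hnext : ∀ i, ∃ j, i < n → (i < j ∧ j ≤ n ∧ j < i + n ∧ (N j).Nonempty ∧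
      ∀ l, i < l → (N l).Nonempty → j ≤ l) := by
    intro i
    by_cases hi : i < n
    · have hex : ∃ j, i < j ∧ (N j).Nonempty := ⟨n, hi, hNn⟩
      refine ⟨Nat.find hex, fun _ => ⟨(Nat.find_spec hex).1, Nat.find_min' hex ⟨hi, hNn⟩, ?_,
        (Nat.find_spec hex).2, fun l hl hl' => Nat.find_min' hex ⟨hl, hl'⟩⟩⟩
      rcases Nat.eq_zero_or_pos i with h0 | h0
      · have := Nat.find_min' hex ⟨by omega, hNi1⟩
        omega
      · have := Nat.find_min' hex ⟨hi, hNn⟩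
        omega
    · exact ⟨0, fun h => absurd h hi⟩
  choose nx hnx using hnext
  let F := X.filter (fun i => ∃ a ∈ N i, ∃ b ∈ N (nx i), a ≠ b)
  have hFX : F ⊆ X := Finset.filter_subset _ _
  have hXmem : ∀ i, i ∈ X ↔ i < n ∧ (N i).Nonempty := by
    intro i
    simp [hX]
  have hnF : ∀ i < n, ∀ a, a ∈ N i → i ∉ F → N i = {a} ∧ N (nx i) = {a} := by
    intro i hi a ha hiF
    have hno : ∀ c ∈ N i, ∀ b ∈ N (nx i), c = b := by
      intro c hc b hb
      by_contra hcb
      exact hiF (Finset.mem_filter.2 ⟨(hXmem i).2 ⟨hi, ⟨a, ha⟩⟩, c, hc, b, hb, hcb⟩)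
    obtain ⟨b0, hb0⟩ := (hnx i hi).2.2.2.1
    have hab0 := hno a ha b0 hb0
    subst hab0
    constructor
    · exact Finset.eq_singleton_iff_unique_mem.2 ⟨ha, fun c hc => hno c hc a hb0⟩
    · exact Finset.eq_singleton_iff_unique_mem.2 ⟨hb0, fun c hc => (hno a ha c hc).symm⟩
  -- propagation
  have hprop : ∀ d i a, n - i ≤ d → i < n → N i = {a} → (∀ j ∈ F, N j ≠ {a}) →
      ∀ j, i ≤ j → j ≤ n → (N j).Nonempty → N j = {a} := by
    intro d
    induction d with
    | zero => intro i a h1 h2; omega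
    | succ d ihd =>
      intro i a h1 h2 hNi hF j hij hjn hj
      have hiF : i ∉ F := fun h => hF i h hNi
      have hstep := (hnF i h2 a (by simp [hNi]) hiF).2
      obtain ⟨g1, g2, g3, g4, g5⟩ := hnx i h2
      rcases Nat.eq_or_lt_of_le hij with h | h
      · exact h ▸ hNi
      · have hle := g5 j h hj
        rcases Nat.lt_or_ge (nx i) n with hlt | hge
        · exact ihd (nx i) a (by omega) hlt hstep hF j hle hjn hj
        · have : j = nx i := by omega
          rw [this]
          exact hstep
  have hn0 : 0 < n := by omega
  refine ⟨F, hFX, ?_, ?_, ?_⟩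
  · -- counting
    have hdisj : ((X : Finset ℕ) : Set ℕ).PairwiseDisjoint (fun i => Finset.Ico i (nx i)) := by
      intro i hi j hj hij
      have hi' := (hXmem i).1 hi
      have hj' := (hXmem j).1 hj
      rw [Function.onFun, Finset.disjoint_left]
      intro t ht ht'
      rw [Finset.mem_Ico] at ht ht'
      rcases lt_or_gt_of_ne hij with h | h
      · have := (hnx i hi'.1).2.2.2.2 j h hj'.2
        omega
      · have := (hnx j hj'.1).2.2.2.2 i h hi'.2
        omega
    have hle : (X.biUnion (fun i => Finset.Ico i (nx i))).card ≤ n := by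
      have : X.biUnion (fun i => Finset.Ico i (nx i)) ⊆ Finset.range n := by
        intro t ht
        obtain ⟨i, hi, ht⟩ := Finset.mem_biUnion.1 ht
        have := (hnx i ((hXmem i).1 hi).1).2.1
        rw [Finset.mem_Ico] at ht
        rw [Finset.mem_range]
        omega
      simpa using Finset.card_le_card this
    rw [Finset.card_biUnion hdisj] at hle
    have hsum : ∑ i ∈ X, (2 + if i ∈ F then E else 0) ≤ ∑ i ∈ X, (Finset.Ico i (nx i)).card := by
      refine Finset.sum_le_sum (fun i hi => ?_)
      have hi' := (hXmem i).1 hi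
      obtain ⟨g1, g2, g3, g4, g5⟩ := hnx i hi'.1
      rw [Nat.card_Ico]
      split_ifs with hF
      · obtain ⟨-, a, ha, b, hb, hab⟩ := Finset.mem_filter.1 hF
        have := hcross i _ g1 g2 g3 a ha b hb hab
        omega
      · have := hgap i _ g1 g2 g3 hi'.2 g4
        omega
    rw [Finset.sum_add_distrib, ← Finset.sum_filter, Finset.filter_mem_eq_inter,
      Finset.inter_eq_right.2 hFX] at hsum
    simp only [Finset.sum_const, smul_eq_mul] at hsum
    rw [Nat.mul_comm 2, Nat.mul_comm E]
    exact hsum.trans hle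
  · intro i hi a ha b hb hab
    by_contra hiF
    have h1 := (hnF i hi a ha hiF).1
    rw [h1] at hb
    exact hab (Finset.mem_singleton.1 hb).symm
  · intro m hm hFm
    by_cases hFe : F = ∅
    · obtain ⟨a, ha⟩ := hN0
      have h0 := (hnF 0 hn0 a ha (by simp [hFe])).1
      have := hprop n 0 a (by omega) hn0 h0 (by simp [hFe])
      refine ⟨∅, {a}, by simpa using hm, fun i hi b hb => Or.inr ?_⟩
      rw [this i (Nat.zero_le _) hi.le ⟨b, hb⟩] at hb
      exact hb
    · obtain ⟨f, hf⟩ := Finset.nonempty_iff_ne_empty.2 hFe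
      let P := F.filter (fun i => 2 ≤ (N i).card)
      let R := F.filter (fun i => ¬ 2 ≤ (N i).card)
      let Q := R.biUnion N
      have hQ : Q.card ≤ R.card := by
        have := Finset.card_biUnion_le_card_mul R N 1 (fun i hi => by
          have := (Finset.mem_filter.1 hi).2
          omega)
        simpa using this
      have hPR : P.card + R.card = F.card := Finset.card_filter_add_card_filter_not _
      refine ⟨P, Q, by omega, ?_⟩
      intro i hi a ha
      by_contra hcon
      push Not at hcon
      obtain ⟨hP, hQa⟩ := hcon
      have hFQ : ∀ j ∈ F, N j ≠ {a} := by
        intro j hj h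
        refine hQa (Finset.mem_biUnion.2 ⟨j, Finset.mem_filter.2 ⟨hj, ?_⟩, ?_⟩) <;> simp [h]
      have hiF : i ∉ F := by
        intro h
        by_cases h2 : 2 ≤ (N i).card
        · exact hP (Finset.mem_filter.2 ⟨h, h2⟩)
        · exact hQa (Finset.mem_biUnion.2 ⟨i, Finset.mem_filter.2 ⟨h, h2⟩, ha⟩)
      have h1 := (hnF i hi a ha hiF).1
      have h2 := hprop n i a (by omega) hi h1 hFQ n hi.le le_rfl hNn
      rw [hper] at h2
      have hf' := (hXmem f).1 (hFX hf)
      exact hFQ f hf (hprop n 0 a (by omega) hn0 h2 hFQ f (Nat.zero_le _) hf'.1.le hf'.2)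

/-- The counting lemma specialised to two labels `c`, `d`. -/
lemma jung_count {L : Type*} (n E : ℕ) (N : ℕ → Finset L) (hper : N n = N 0)
    (hN0 : (N 0).Nonempty)
    (hgap : ∀ i j, i < j → j ≤ n → j < i + n → (N i).Nonempty → (N j).Nonempty → i + 2 ≤ j)
    (hcross : ∀ i j, i < j → j ≤ n → j < i + n → ∀ a ∈ N i, ∀ b ∈ N j, a ≠ b → i + E + 2 ≤ j)
    (hq : ∃ i, 0 < i ∧ i < n ∧ (N i).Nonempty) (c d : L) (hcd : c ≠ d) :
    ∃ s t q : ℕ, s ≤ ((Finset.range n).filter (fun i => c ∈ N i)).card ∧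
      s ≤ ((Finset.range n).filter (fun i => d ∈ N i)).card ∧
      ((Finset.range n).filter (fun i => c ∈ N i)).card +
        ((Finset.range n).filter (fun i => d ∈ N i)).card ≤ q + s ∧
      s ≤ t ∧ t ≤ q ∧ 2 * q + E * t ≤ n ∧
      (∀ m, 1 ≤ m → t ≤ m → ∃ (P : Finset ℕ) (Q : Finset L), P.card + Q.card ≤ m ∧
        ∀ i < n, ∀ a ∈ N i, i ∈ P ∨ a ∈ Q) := by
  obtain ⟨F, h1, h2, h3, h4⟩ := jung_cyc n E N hper hN0 hgap hcross hq
  let S := (Finset.range n).filter (fun i => c ∈ N i)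
  let T := (Finset.range n).filter (fun i => d ∈ N i)
  refine ⟨(S ∩ T).card, F.card, _, Finset.card_le_card Finset.inter_subset_left,
    Finset.card_le_card Finset.inter_subset_right, ?_, ?_, Finset.card_le_card h1, h2, h4⟩
  · have : (S ∪ T).card ≤ ((Finset.range n).filter (fun i => (N i).Nonempty)).card := by
      refine Finset.card_le_card ?_
      intro i hi
      rcases Finset.mem_union.1 hi with h | h
      · have := Finset.mem_filter.1 h
        exact Finset.mem_filter.2 ⟨this.1, ⟨_, this.2⟩⟩
      · have := Finset.mem_filter.1 h
        exact Finset.mem_filter.2 ⟨this.1, ⟨_, this.2⟩⟩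
    have h5 := Finset.card_union_add_card_inter S T
    change S.card + T.card ≤ _
    omega
  · refine Finset.card_le_card ?_
    intro i hi
    have hS := Finset.mem_filter.1 (Finset.mem_inter.1 hi).1
    have hT := Finset.mem_filter.1 (Finset.mem_inter.1 hi).2
    exact h3 i (Finset.mem_range.1 hS.1) c hS.2 d hT.2 hcd

/-- `K` is a connected piece of `H` attached to the rest of `H` at `x` only. -/
def JLobe (G : SimpleGraph V) (H : Finset V) (x : V) (K : Finset V) : Prop :=
  x ∈ H ∧ K ⊆ H ∧ x ∉ K ∧ K.Nonempty ∧
    (∀ a ∈ K, ∀ c ∈ H, G.Adj a c → c ∈ K ∨ c = x) ∧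
    (∀ a ∈ K, ∀ b ∈ K, JReach G (K : Set V) a b)

lemma jung_comp_lobe {H : Finset V} {x y : V} (hx : x ∈ H) (hy : y ∈ H) (hyx : y ≠ x) :
    JLobe G H x (H.filter (fun a => JReach G ((H : Set V) \ {x}) y a)) := by
  set K := H.filter (fun a => JReach G ((H : Set V) \ {x}) y a) with hK
  have hKmem : ∀ a, JReach G ((H : Set V) \ {x}) y a → a ∈ (K : Set V) := by
    intro a ha
    exact Finset.mem_coe.2 (Finset.mem_filter.2 ⟨ha.right.1, ha⟩)
  refine ⟨hx, Finset.filter_subset _ _, ?_, ⟨y, hKmem y (JReach.refl ⟨hy, hyx⟩)⟩, ?_, ?_⟩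
  · intro h
    exact (Finset.mem_filter.1 h).2.right.2 rfl
  · intro a ha c hc hac
    by_cases hcx : c = x
    · exact Or.inr hcx
    · have h1 := (Finset.mem_filter.1 ha).2
      exact Or.inl (hKmem c (h1.trans (JReach.edge hac h1.right ⟨hc, hcx⟩)))
  · intro a ha b hb
    have h1 := (Finset.mem_filter.1 ha).2
    have h2 := (Finset.mem_filter.1 hb).2
    exact (h1.comp hKmem).symm.trans (h2.comp hKmem)

lemma jung_lobe_adj {H : Finset V} {x : V} {K : Finset V}
    (hconn : ∀ a ∈ H, ∀ b ∈ H, JReach G (H : Set V) a b) (hL : JLobe G H x K) :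
    ∃ a ∈ K, G.Adj a x := by
  obtain ⟨hx, hKH, hxK, ⟨y, hy⟩, hcl, -⟩ := hL
  obtain ⟨a, c, ha, hc, -, hcS, hac⟩ := (hconn y (hKH hy) x hx).exists_edge (K : Set V) hy hxK
  rcases hcl a ha c hcS hac with h | h
  · exact absurd h hc
  · exact ⟨a, ha, h ▸ hac⟩

/-- Every lobe contains an end-lobe with long paths to its attachment vertex. -/
lemma jung_lobe {H : Finset V} (hconn : ∀ a ∈ H, ∀ b ∈ H, JReach G (H : Set V) a b)
    {x0 : V} {K0 : Finset V} (h0 : JLobe G H x0 K0) :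
    ∃ (x : V) (K : Finset V) (k : ℕ) (w : V), JLobe G H x K ∧ K ⊆ K0 ∧ x ∈ insert x0 K0 ∧ w ∈ K ∧
      1 ≤ k ∧ (H.filter (G.Adj w)).card ≤ k ∧
      ∀ a ∈ K, JPath G ((insert x K : Finset V) : Set V) a x k := by
  have hex : ∃ n, ∃ x K, JLobe G H x K ∧ K ⊆ K0 ∧ K.card = n := ⟨_, x0, K0, h0, subset_rfl, rfl⟩
  obtain ⟨x, K, hL, hKK0, hKc⟩ := Nat.find_spec hex
  have hmin := fun n => @Nat.find_min _ _ hex n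
  obtain ⟨a1, ha1, ha1x⟩ := jung_lobe_adj hconn hL
  have hL' := hL
  obtain ⟨hx, hKH, hxK, hKne, hcl, hKconn⟩ := hL'
  obtain ⟨w, hw, hwmin⟩ := Finset.exists_min_image K (fun a => (H.filter (G.Adj a)).card) hKne
  refine ⟨x, K, max 1 (H.filter (G.Adj w)).card, w, hL, hKK0, ?_, hw, le_max_left _ _,
    le_max_right _ _, ?_⟩
  · rcases h0.2.2.2.2.1 a1 (hKK0 ha1) x hx ha1x with h | h
    · exact Finset.mem_insert_of_mem h
    · simp [h]
  · intro a ha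
    have hax : a ≠ x := fun h => hxK (h ▸ ha)
    have hKx : ∀ t ∈ K, t ≠ x := fun t ht h => hxK (h ▸ ht)
    have hP : JPath G ((insert x K : Finset V) : Set V) a x (H.filter (G.Adj w)).card := by
      refine jung_EG (insert x K).card (insert x K) a x x _ le_rfl (Finset.mem_insert_of_mem ha)
        (Finset.mem_insert_self _ _) hax ?_ ?_ ?_ ⟨a, Finset.mem_insert_of_mem ha, hax, hax⟩
      · refine ((hKconn a ha a1 ha1).mono (by simp)).trans (JReach.edge ha1x ?_ (by simp))
        simp [ha1]
      · intro x' hx' y' hy' hyx'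
        rcases Finset.mem_insert.1 hx' with rfl | hx'K
        · left
          have hy'K : y' ∈ K := (Finset.mem_insert.1 hy').resolve_left hyx'
          refine (hKconn y' hy'K a ha).mono ?_
          intro t ht
          exact ⟨by simp [show t ∈ K from ht], hKx t ht⟩
        · right
          by_contra hc2
          have hinsH : insert x K ⊆ H := Finset.insert_subset hx hKH
          set S : Set V := ((insert x K : Finset V) : Set V) \ {x'} with hS
          let K' := (insert x K).filter (fun a => JReach G S y' a)
          have hKmem : ∀ a, JReach G S y' a → a ∈ (K' : Set V) := by
            intro a ha
            exact Finset.mem_coe.2 (Finset.mem_filter.2 ⟨ha.right.1, ha⟩)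
          have hyK' : y' ∈ K' := hKmem y' (JReach.refl ⟨hy', hyx'⟩)
          have hK'K : K' ⊆ K := by
            intro a ha
            have h1 := Finset.mem_filter.1 ha
            rcases Finset.mem_insert.1 h1.1 with h | h
            · subst h
              exact absurd h1.2 hc2
            · exact h
          have hx'K' : x' ∉ K' := fun h => (Finset.mem_filter.1 h).2.right.2 rfl
          have hlobe : JLobe G H x' K' := by
            refine ⟨hKH hx'K, hK'K.trans hKH, hx'K', ⟨y', hyK'⟩, ?_, ?_⟩
            · intro a ha c hc hac
              by_cases hcx : c = x'
              · exact Or.inr hcx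
              · left
                have h1 := (Finset.mem_filter.1 ha).2
                refine hKmem c (h1.trans (JReach.edge hac h1.right ⟨?_, hcx⟩))
                rcases hcl a (hK'K ha) c hc hac with h | h
                · simp [h]
                · simp [h]
            · intro a ha b hb
              have h1 := (Finset.mem_filter.1 ha).2
              have h2 := (Finset.mem_filter.1 hb).2
              exact (h1.comp hKmem).symm.trans (h2.comp hKmem)
          refine hmin K'.card ?_ ⟨x', K', hlobe, hK'K.trans hKK0, rfl⟩
          rw [← hKc]
          exact Finset.card_lt_card (Finset.ssubset_iff_subset_ne.2
            ⟨hK'K, fun h => hx'K' (h ▸ hx'K)⟩)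
      · intro y hy hyx _
        have hyK : y ∈ K := (Finset.mem_insert.1 hy).resolve_left hyx
        refine (hwmin y hyK).trans (Finset.card_le_card ?_)
        intro c hc
        have hc' := Finset.mem_filter.1 hc
        refine Finset.mem_filter.2 ⟨?_, hc'.2⟩
        rcases hcl y hyK c hc'.1 hc'.2 with h | h
        · simp [h]
        · simp [h]
    obtain ⟨p, hp, hpS, hpl⟩ := hP
    refine ⟨p, hp, hpS, max_le ?_ hpl⟩
    rcases Nat.eq_zero_or_pos p.length with h | h
    · exact absurd (Walk.eq_of_length_eq_zero h) hax
    · exact h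

/-- Two disjoint lobes give long paths between them. -/
lemma jung_two_lobes {H : Finset V} (hconn : ∀ a ∈ H, ∀ b ∈ H, JReach G (H : Set V) a b)
    {x1 x2 : V} {K1 K2 : Finset V} (h1 : JLobe G H x1 K1) (h2 : JLobe G H x2 K2)
    (hx1 : x1 ∉ K2) (hx2 : x2 ∉ K1) (hdisj : ∀ t ∈ K1, t ∉ K2) {k1 k2 : ℕ} {a b : V}
    (hp1 : JPath G ((insert x1 K1 : Finset V) : Set V) a x1 k1)
    (hp2 : JPath G ((insert x2 K2 : Finset V) : Set V) b x2 k2) :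
    JPath G (H : Set V) a b (k1 + k2) := by
  have hm1 : JReach G ((H : Set V) \ (K1 : Set V)) x2 x1 :=
    JReach.avoid (hconn x2 h2.1 x1 h1.1) hx2 h1.2.2.1 h1.2.2.2.2.1
  have hm2 : JReach G (((H : Set V) \ (K1 : Set V)) \ (K2 : Set V)) x1 x2 :=
    JReach.avoid hm1.symm hx1 h2.2.2.1 (fun a ha c hc hac => h2.2.2.2.2.1 a ha c hc.1 hac)
  have hq1 := hp1.append hm2.path (by
    intro t ht ht'
    rcases Finset.mem_insert.1 ht with h | h
    · exact h
    · exact absurd h ht'.1.2)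
  have hq2 := hq1.append hp2.symm (by
    intro t ht ht'
    rcases Finset.mem_insert.1 ht' with h' | h'
    · exact h'
    · exfalso
      rcases ht with h | h
      · rcases Finset.mem_insert.1 h with h | h
        · exact hx1 (h ▸ h')
        · exact hdisj t h h'
      · exact h.2 h')
  refine hq2.mono ?_ (by omega)
  intro t ht
  rcases ht with (h | h) | h
  · exact Finset.insert_subset h1.1 h1.2.1 h
  · exact h.1.1
  · exact Finset.insert_subset h2.1 h2.2.1 h

/-- The setup: a longest cycle `f` of length `n`, and a component `H` of its complement. -/
structure JSetup [Fintype V] (G : SimpleGraph V) (n : ℕ) (f : ℕ → V) (H : Finset V) (δ : ℕ) :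
    Prop where
  n3 : 3 ≤ n
  per : Function.Periodic f n
  adj : ∀ k, G.Adj (f k) (f (k + 1))
  inj : ∀ i j, i < j → j < i + n → f i ≠ f j
  long : ∀ (u : V) (w : G.Walk u u), w.IsCycle → w.length ≤ n
  disj : ∀ k, f k ∉ H
  cl : ∀ a ∈ H, ∀ c, G.Adj a c → c ∈ H ∨ ∃ k, c = f k
  conn : ∀ a ∈ H, ∀ b ∈ H, JReach G (H : Set V) a b
  deg : ∀ a, δ ≤ (Finset.univ.filter (G.Adj a)).card
  sep : ∀ T : Finset V, T.card ≤ 2 → ∀ K : Set V, (∃ a ∈ K, a ∉ T) → (∃ b, b ∉ K ∧ b ∉ T) →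
    ∃ a b, a ∈ K ∧ a ∉ T ∧ b ∉ K ∧ b ∉ T ∧ G.Adj a b

lemma jung_arc {n : ℕ} {f : ℕ → V} (hadj : ∀ k, G.Adj (f k) (f (k + 1)))
    (hinj : ∀ i j, i < j → j < i + n → f i ≠ f j) (j m : ℕ) (hm : m < n) :
    JPath G {x | ∃ k, j ≤ k ∧ k ≤ j + m ∧ x = f k} (f j) (f (j + m)) m := by
  induction m with
  | zero =>
    refine JReach.path (JReach.refl ?_)
    exact ⟨j, le_rfl, le_rfl, rfl⟩
  | succ m ih =>
    refine ((ih (by omega)).append (JPath.edge (hadj (j + m))) ?_).mono ?_ le_rfl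
    · rintro x ⟨k, hk1, hk2, rfl⟩ hx'
      rcases hx' with h | h
      · exact h
      · exact absurd h (hinj _ _ (by omega) (by omega))
    · rintro x (⟨k, hk1, hk2, rfl⟩ | (h | h))
      · exact ⟨k, hk1, by omega, rfl⟩
      · exact ⟨j + m, by omega, by omega, h⟩
      · exact ⟨j + m + 1, by omega, by omega, h⟩

lemma JSetup.gap [Fintype V] {n δ : ℕ} {f : ℕ → V} {H : Finset V} (hS : JSetup G n f H δ)
    {i j l : ℕ} {a b : V} (hij : i < j) (hjn : j < i + n) (ha : G.Adj (f i) a)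
    (hb : G.Adj (f j) b) (hp : JPath G (H : Set V) a b l) : i + l + 2 ≤ j := by
  have haH : a ∈ H := by
    obtain ⟨p, -, h, -⟩ := hp
    exact h _ p.start_mem_support
  have harc := jung_arc hS.adj hS.inj j (i + n - j) (by omega)
  have hend : f (j + (i + n - j)) = f i := by
    rw [show j + (i + n - j) = i + n by omega]
    exact hS.per i
  rw [hend] at harc
  have h1 := harc.append (JPath.edge ha) (by
    rintro x ⟨k, hk1, hk2, rfl⟩ hx'
    rcases hx' with h | h
    · exact h
    · exact absurd (show f k ∈ H from (show f k = a from h) ▸ haH) (hS.disj k))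
  have h2 := h1.append hp (by
    rintro x hx hx'
    rcases hx with ⟨k, hk1, hk2, rfl⟩ | (h | h)
    · exact absurd hx' (hS.disj k)
    · exact absurd (show f i ∈ H from (show x = f i from h) ▸ hx') (hS.disj i)
    · exact h)
  obtain ⟨u, w, hw, hwl⟩ := h2.cycle (by omega) hb.symm
  have := hS.long u w hw
  omega

lemma JSetup.surj [Fintype V] {n δ : ℕ} {f : ℕ → V} {H : Finset V} (hS : JSetup G n f H δ)
    (i0 i : ℕ) : ∃ k < n, f i = f (k + i0) := by
  have hn := hS.n3
  have hper : Function.Periodic (fun k => f (k + i0)) n := by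
    intro k
    have := hS.per (k + i0)
    simp only
    rw [show k + n + i0 = k + i0 + n by omega]
    exact this
  refine ⟨(i + i0 * n - i0) % n, Nat.mod_lt _ (by omega), ?_⟩
  have h1 : f ((i + i0 * n - i0) % n + i0) = f (i + i0 * n - i0 + i0) :=
    hper.map_mod_nat (i + i0 * n - i0)
  rw [h1]
  have : i0 ≤ i0 * n := Nat.le_mul_of_pos_right _ (by omega)
  rw [show i + i0 * n - i0 + i0 = i + i0 * n by omega]
  have := (hS.per.nat_mul i0) i
  simpa using this.symm

lemma JSetup.exists_notMem [Fintype V] {n δ : ℕ} {f : ℕ → V} {H : Finset V}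
    (hS : JSetup G n f H δ) (T : Finset V) (hT : T.card ≤ 2) : ∃ k, f k ∉ T := by
  by_contra hcon
  push Not at hcon
  have hn := hS.n3
  have h1 : (Finset.range n).image f ⊆ T := by
    intro x hx
    obtain ⟨k, -, rfl⟩ := Finset.mem_image.1 hx
    exact hcon k
  have h2 := Finset.card_le_card h1
  rw [Finset.card_image_of_injOn, Finset.card_range] at h2
  · omega
  · intro i hi j hj hij
    simp at hi hj
    by_contra hne
    rcases lt_or_gt_of_ne hne with h | h
    · exact hS.inj i j h (by omega) hij
    · exact hS.inj j i h (by omega) hij.symm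

/-- Counting for labelled subsets of `H`. -/
lemma JSetup.count [Fintype V] {n δ : ℕ} {f : ℕ → V} {H : Finset V} (hS : JSetup G n f H δ)
    {L : Type*} [Fintype L] (K : L → Finset V) (hKH : ∀ l, K l ⊆ H) (E : ℕ)
    (hE : ∀ l l', l ≠ l' → ∀ a ∈ K l, ∀ b ∈ K l', JPath G (H : Set V) a b E)
    (hatt : ∃ i1 i2 l1 l2, f i1 ≠ f i2 ∧ (∃ a ∈ K l1, G.Adj (f i1) a) ∧
      (∃ a ∈ K l2, G.Adj (f i2) a)) (c d : L) (hcd : c ≠ d) :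
    ∃ A B s t q : ℕ, (∀ w ∈ K c, δ ≤ A + (H.filter (G.Adj w)).card) ∧
      (∀ w ∈ K d, δ ≤ B + (H.filter (G.Adj w)).card) ∧ s ≤ A ∧ s ≤ B ∧ A + B ≤ q + s ∧
      s ≤ t ∧ t ≤ q ∧ 2 * q + E * t ≤ n ∧
      (∀ m, 1 ≤ m → t ≤ m → ∃ (P : Finset V) (Q : Finset L), P.card + Q.card ≤ m ∧
        ∀ i l, (∃ a ∈ K l, G.Adj (f i) a) → f i ∈ P ∨ l ∈ Q) := by
  obtain ⟨i1, i2, l1, l2, hne, hl1, hl2⟩ := hatt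
  let N : ℕ → Finset L := fun k => Finset.univ.filter (fun l => ∃ a ∈ K l, G.Adj (f (k + i1)) a)
  have hN : ∀ k l, l ∈ N k ↔ ∃ a ∈ K l, G.Adj (f (k + i1)) a := by
    intro k l
    simp [N]
  have hA : ∀ e : L, ∀ w ∈ K e, δ ≤ ((Finset.range n).filter (fun i => e ∈ N i)).card +
      (H.filter (G.Adj w)).card := by
    intro e w hw
    refine (hS.deg w).trans ?_
    have hsub : Finset.univ.filter (G.Adj w) ⊆
        ((Finset.range n).filter (fun i => e ∈ N i)).image (fun k => f (k + i1)) ∪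
          H.filter (G.Adj w) := by
      intro x hx
      have hx' := (Finset.mem_filter.1 hx).2
      rcases hS.cl w (hKH e hw) x hx' with h | ⟨k, rfl⟩
      · exact Finset.mem_union_right _ (Finset.mem_filter.2 ⟨h, hx'⟩)
      · obtain ⟨k', hk', hkk'⟩ := hS.surj i1 k
        refine Finset.mem_union_left _ (Finset.mem_image.2 ⟨k', Finset.mem_filter.2
          ⟨Finset.mem_range.2 hk', (hN _ _).2 ⟨w, hw, ?_⟩⟩, hkk'.symm⟩)
        rw [← hkk']
        exact hx'.symm
    refine (Finset.card_le_card hsub).trans ((Finset.card_union_le _ _).trans ?_)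
    have := Finset.card_image_le (s := (Finset.range n).filter (fun i => e ∈ N i))
      (f := fun k => f (k + i1))
    omega
  have hn := hS.n3
  have hmain := jung_count n E N ?_ ?_ ?_ ?_ ?_ c d hcd
  · obtain ⟨s, t, q, h1, h2, h3, h4, h5, h6, h7⟩ := hmain
    refine ⟨_, _, s, t, q, hA c, hA d, h1, h2, h3, h4, h5, h6, ?_⟩
    intro m hm htm
    obtain ⟨P, Q, hPQ, hcov⟩ := h7 m hm htm
    refine ⟨P.image (fun k => f (k + i1)), Q, ?_, ?_⟩
    · have := Finset.card_image_le (s := P) (f := fun k => f (k + i1))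
      omega
    · intro i l hl
      obtain ⟨k, hk, hik⟩ := hS.surj i1 i
      rw [hik] at hl ⊢
      rcases hcov k hk l ((hN _ _).2 hl) with h | h
      · exact Or.inl (Finset.mem_image.2 ⟨k, h, rfl⟩)
      · exact Or.inr h
  · ext l
    rw [hN, hN, Nat.add_comm n, hS.per i1, Nat.zero_add]
  · exact ⟨l1, (hN _ _).2 (by simpa using hl1)⟩
  · rintro i j hij - hjn ⟨l, hl⟩ ⟨l', hl'⟩
    obtain ⟨a, ha, hai⟩ := (hN _ _).1 hl
    obtain ⟨b, hb, hbj⟩ := (hN _ _).1 hl'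
    have := hS.gap (by omega) (by omega) hai hbj (hS.conn a (hKH _ ha) b (hKH _ hb)).path
    omega
  · rintro i j hij - hjn l hl l' hl' hll
    obtain ⟨a, ha, hai⟩ := (hN _ _).1 hl
    obtain ⟨b, hb, hbj⟩ := (hN _ _).1 hl'
    have := hS.gap (by omega) (by omega) hai hbj (hE l l' hll a ha b hb)
    omega
  · obtain ⟨k, hk, hik⟩ := hS.surj i1 i2
    refine ⟨k, ?_, hk, ⟨l2, (hN _ _).2 (by rwa [← hik])⟩⟩
    rcases Nat.eq_zero_or_pos k with h | h
    · subst h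
      rw [Nat.zero_add] at hik
      exact absurd hik.symm hne
    · exact h

lemma jung_arith1 {δ A B s t q n D : ℕ} (hA : δ ≤ A + D) (hB : δ ≤ B + D) (hsA : s ≤ A)
    (hsB : s ≤ B) (hq : A + B ≤ q + s) (hst : s ≤ t) (htq : t ≤ q) (hn : 2 * q + D * t ≤ n)
    (hD : 1 ≤ D) (h : D ≤ 1 ∨ 3 ≤ t) : 3 * δ ≤ n + 3 := by
  by_cases hD1 : D ≤ 1
  · have : D = 1 := by omega
    subst this
    omega
  · have ht := h.resolve_left hD1
    have hDt : D * 3 ≤ D * t := Nat.mul_le_mul_left _ ht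
    by_cases h1 : δ ≤ D + 3
    · omega
    · by_cases hs : s ≤ 3
      · omega
      · have h2 : D * s ≤ D * t := Nat.mul_le_mul_left _ hst
        have h3 : (D - 2) * 3 ≤ (D - 2) * s := Nat.mul_le_mul_left _ (by omega)
        simp only [Nat.sub_mul] at h3
        have h4 : 2 * s ≤ D * s := Nat.mul_le_mul_right _ (by omega)
        omega

lemma jung_arith2 {δ A B s t q n k l : ℕ} (hA : δ ≤ A + k) (hB : δ ≤ B + l)
    (hq : A + B ≤ q + s) (hst : s ≤ t) (hn : 2 * q + (k + l) * t ≤ n)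
    (hk : 1 ≤ k) (hl : 1 ≤ l) (ht : 2 ≤ t) : 3 * δ ≤ n + 3 := by
  obtain ⟨E, hE⟩ : ∃ E, E = k + l := ⟨_, rfl⟩
  rw [← hE] at hn
  have hDt : E * 2 ≤ E * t := Nat.mul_le_mul_left _ ht
  by_cases hs : s ≤ 2
  · omega
  · have h2 : E * s ≤ E * t := Nat.mul_le_mul_left _ hst
    have h3 : (E - 2) * 2 ≤ (E - 2) * s := Nat.mul_le_mul_left _ (by omega)
    simp only [Nat.sub_mul] at h3
    have h4 : 2 * s ≤ E * s := Nat.mul_le_mul_right _ (by omega)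
    omega

/-- Case where `H` has no cut vertex. -/
lemma JSetup.case1 [Fintype V] {n δ : ℕ} {f : ℕ → V} {H : Finset V} (hS : JSetup G n f H δ)
    (hH : 2 ≤ H.card)
    (hI : ∀ x ∈ H, ∀ y ∈ H, ∀ y' ∈ H, y ≠ x → y' ≠ x → JReach G ((H : Set V) \ {x}) y y') :
    3 * δ ≤ n + 3 := by
  have hHne : H.Nonempty := Finset.card_pos.1 (by omega)
  obtain ⟨z, hz, hzmin⟩ := Finset.exists_min_image H (fun a => (H.filter (G.Adj a)).card) hHne
  have hHne' : (H.erase z).Nonempty := Finset.card_pos.1 (by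
    rw [Finset.card_erase_of_mem hz]
    omega)
  obtain ⟨w, hw, hwmin⟩ :=
    Finset.exists_min_image (H.erase z) (fun a => (H.filter (G.Adj a)).card) hHne'
  have hwz : w ≠ z := Finset.ne_of_mem_erase hw
  have hwH : w ∈ H := Finset.mem_of_mem_erase hw
  obtain ⟨D, hD⟩ : ∃ D, D = (H.filter (G.Adj w)).card := ⟨_, rfl⟩
  have hzD : (H.filter (G.Adj z)).card ≤ D := hD ▸ hzmin w hwH
  have hDcard : D + 1 ≤ H.card := by
    have h1 : H.filter (G.Adj w) ⊆ H.erase w := by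
      intro c hc
      have hc' := Finset.mem_filter.1 hc
      exact Finset.mem_erase.2 ⟨hc'.2.ne', hc'.1⟩
    have h2 := Finset.card_le_card h1
    rw [Finset.card_erase_of_mem hwH] at h2
    omega
  have hD1 : 1 ≤ D := by
    obtain ⟨a, c, ha, hc, -, hcS, hac⟩ :=
      (hS.conn w hwH z hz).exists_edge ({w} : Set V) rfl (Ne.symm hwz)
    have ha' : a = w := ha
    subst ha'
    rw [hD]
    exact Finset.card_pos.2 ⟨c, Finset.mem_filter.2 ⟨hcS, hac⟩⟩
  have hpath : ∀ u ∈ H, ∀ v ∈ H, u ≠ v → JPath G (H : Set V) u v D := by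
    intro u hu v hv huv
    by_cases hne : ∃ y ∈ H, y ≠ v ∧ y ≠ z
    · refine jung_EG H.card H u v z D le_rfl hu hv huv (hS.conn u hu v hv) ?_ ?_ hne
      · intro x hx y hy hyx
        by_cases hux : u = x
        · right
          exact hI x hx y hy v hv hyx (fun h => huv (hux.trans h.symm))
        · left
          exact hI x hx y hy u hu hyx hux
      · intro y hy _ hyz
        rw [hD]
        exact hwmin y (Finset.mem_erase.2 ⟨hyz, hy⟩)
    · push Not at hne
      have h1 : H ⊆ {v, z} := by
        intro y hy
        by_cases hyv : y = v
        · simp [hyv]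
        · simp [hne y hy hyv]
      have h2 := (Finset.card_le_card h1).trans Finset.card_le_two
      exact ((hS.conn u hu v hv).path_one huv).mono subset_rfl (by omega)
  let K : V → Finset V := fun h => if h ∈ H then {h} else ∅
  have hKmem : ∀ h a, a ∈ K h ↔ a = h ∧ h ∈ H := by
    intro h a
    by_cases hh : h ∈ H <;> simp [K, hh]
  -- covers
  have hcover : ∀ T : Finset V, T.card ≤ 2 → (∃ a ∈ H, a ∉ T) →
      ∃ i, ∃ a ∈ H, G.Adj (f i) a ∧ a ∉ T ∧ f i ∉ T := by
    intro T hT hHT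
    obtain ⟨k, hk⟩ := hS.exists_notMem T hT
    obtain ⟨a, b, ha, haT, hb, hbT, hab⟩ := hS.sep T hT (H : Set V) hHT ⟨f k, hS.disj k, hk⟩
    rcases hS.cl a ha b hab with h | ⟨i, rfl⟩
    · exact absurd h hb
    · exact ⟨i, a, ha, hab.symm, haT, hbT⟩
  obtain ⟨i1, a1, ha1, hai1, -, -⟩ := hcover ∅ (by simp) ⟨w, hwH, by simp⟩
  obtain ⟨i2, a2, ha2, hai2, -, hi2⟩ := hcover {f i1} (by simp)
    ⟨w, hwH, fun h => hS.disj i1 (by rw [← Finset.mem_singleton.1 h]; exact hwH)⟩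
  obtain ⟨A, B, s, t, q, h1, h2, h3, h4, h5, h6, h7, h8, h9⟩ := hS.count K (by
      intro l a ha
      obtain ⟨rfl, h⟩ := (hKmem _ _).1 ha
      exact h) D (by
      intro l l' hll a ha b hb
      obtain ⟨rfl, h⟩ := (hKmem _ _).1 ha
      obtain ⟨rfl, h'⟩ := (hKmem _ _).1 hb
      exact hpath a h b h' hll)
    ⟨i1, i2, a1, a2, fun h => hi2 (by simp [h]), ⟨a1, (hKmem _ _).2 ⟨rfl, ha1⟩, hai1⟩,
      ⟨a2, (hKmem _ _).2 ⟨rfl, ha2⟩, hai2⟩⟩ z w (Ne.symm hwz)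
  have hA := h1 z ((hKmem _ _).2 ⟨rfl, hz⟩)
  have hB := h2 w ((hKmem _ _).2 ⟨rfl, hwH⟩)
  refine jung_arith1 (D := D) (by omega) (by omega) h3 h4 h5 h6 h7 h8 hD1 ?_
  by_cases hH3 : 3 ≤ H.card
  · right
    by_contra ht
    obtain ⟨P, Q, hPQ, hcov⟩ := h9 2 (by omega) (by omega)
    have hT : (P ∪ Q).card ≤ 2 := (Finset.card_union_le _ _).trans hPQ
    have hex : ∃ a ∈ H, a ∉ P ∪ Q := by
      by_contra hcon
      push Not at hcon
      have := Finset.card_le_card (show H ⊆ P ∪ Q from hcon)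
      omega
    obtain ⟨i, a, ha, hia, haT, hiT⟩ := hcover _ hT hex
    rcases hcov i a ⟨a, (hKmem _ _).2 ⟨rfl, ha⟩, hia⟩ with h | h
    · exact hiT (Finset.mem_union_left _ h)
    · exact haT (Finset.mem_union_right _ h)
  · left
    omega

/-- A lobe of `H` has two attachments on the cycle. -/
lemma JSetup.lobe_att [Fintype V] {n δ : ℕ} {f : ℕ → V} {H : Finset V} (hS : JSetup G n f H δ)
    {x : V} {K : Finset V} (hL : JLobe G H x K) :
    ∃ i j, f i ≠ f j ∧ (∃ a ∈ K, G.Adj (f i) a) ∧ (∃ a ∈ K, G.Adj (f j) a) := by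
  obtain ⟨hx, hKH, hxK, ⟨y, hy⟩, hcl, -⟩ := hL
  have key : ∀ T : Finset V, T.card ≤ 2 → x ∈ T → y ∉ T →
      ∃ i, f i ∉ T ∧ ∃ a ∈ K, G.Adj (f i) a := by
    intro T hT hxT hyT
    obtain ⟨k, hk⟩ := hS.exists_notMem T hT
    obtain ⟨a, b, ha, haT, hb, hbT, hab⟩ := hS.sep T hT (K : Set V) ⟨y, hy, hyT⟩
      ⟨f k, fun h => hS.disj k (hKH h), hk⟩
    rcases hS.cl a (hKH ha) b hab with h | ⟨i, rfl⟩
    · rcases hcl a ha b h hab with h' | h'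
      · exact absurd h' hb
      · exact absurd (h' ▸ hxT) hbT
    · exact ⟨i, hbT, a, ha, hab.symm⟩
  have hyx : y ≠ x := fun h => hxK (h ▸ hy)
  obtain ⟨i, -, hi⟩ := key {x} (by simp) (by simp) (by simpa using hyx)
  obtain ⟨j, hjT, hj⟩ := key {x, f i} Finset.card_le_two (by simp) (by
    simp only [Finset.mem_insert, Finset.mem_singleton, not_or]
    exact ⟨hyx, fun h => hS.disj i (h ▸ hKH hy)⟩)
  exact ⟨i, j, fun h => hjT (by simp [h]), hi, hj⟩

/-- Case where `H` has a cut vertex. -/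
lemma JSetup.case2 [Fintype V] {n δ : ℕ} {f : ℕ → V} {H : Finset V} (hS : JSetup G n f H δ)
    {x y y' : V} (hx : x ∈ H) (hy : y ∈ H) (hy' : y' ∈ H) (hyx : y ≠ x) (hyx' : y' ≠ x)
    (hno : ¬ JReach G ((H : Set V) \ {x}) y y') : 3 * δ ≤ n + 3 := by
  have hL1 := jung_comp_lobe (G := G) hx hy hyx
  have hL2 := jung_comp_lobe (G := G) hx hy' hyx'
  obtain ⟨x1, K1, k1, w1, hl1, hK1, hx1, hw1, hk1, hd1, hp1⟩ := jung_lobe hS.conn hL1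
  obtain ⟨x2, K2, k2, w2, hl2, hK2, hx2, hw2, hk2, hd2, hp2⟩ := jung_lobe hS.conn hL2
  have hdis : ∀ t, JReach G ((H : Set V) \ {x}) y t → ¬ JReach G ((H : Set V) \ {x}) y' t :=
    fun t h h' => hno (h.trans h'.symm)
  have hmem1 : ∀ t ∈ K1, JReach G ((H : Set V) \ {x}) y t :=
    fun t ht => (Finset.mem_filter.1 (hK1 ht)).2
  have hmem2 : ∀ t ∈ K2, JReach G ((H : Set V) \ {x}) y' t :=
    fun t ht => (Finset.mem_filter.1 (hK2 ht)).2
  have hdisj : ∀ t ∈ K1, t ∉ K2 := fun t h h' => hdis t (hmem1 t h) (hmem2 t h')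
  have hx1K2 : x1 ∉ K2 := by
    intro h
    have h2 := hmem2 _ h
    rcases Finset.mem_insert.1 hx1 with h1 | h1
    · exact h2.right.2 h1
    · exact hdis _ (Finset.mem_filter.1 h1).2 h2
  have hx2K1 : x2 ∉ K1 := by
    intro h
    have h2 := hmem1 _ h
    rcases Finset.mem_insert.1 hx2 with h1 | h1
    · exact h2.right.2 h1
    · exact hdis _ h2 (Finset.mem_filter.1 h1).2
  have hlong : ∀ a ∈ K1, ∀ b ∈ K2, JPath G (H : Set V) a b (k1 + k2) := fun a ha b hb =>
    jung_two_lobes hS.conn hl1 hl2 hx1K2 hx2K1 hdisj (hp1 a ha) (hp2 b hb)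
  obtain ⟨i1, j1, hij1, hi1, hj1⟩ := hS.lobe_att hl1
  obtain ⟨i2, j2, hij2, hi2, hj2⟩ := hS.lobe_att hl2
  let K : Bool → Finset V := fun b => if b = true then K1 else K2
  have hKt : K true = K1 := by simp [K]
  have hKf : K false = K2 := by simp [K]
  obtain ⟨A, B, s, t, q, h1, h2, h3, h4, h5, h6, h7, h8, h9⟩ := hS.count K (by
      intro l
      cases l
      · rw [hKf]; exact hl2.2.1
      · rw [hKt]; exact hl1.2.1) (k1 + k2) (by
      intro l l' hll a ha b hb
      cases l <;> cases l'
      · exact absurd rfl hll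
      · rw [hKf] at ha
        rw [hKt] at hb
        exact (hlong b hb a ha).symm
      · rw [hKf] at hb
        rw [hKt] at ha
        exact hlong a ha b hb
      · exact absurd rfl hll)
    ⟨i1, j1, true, true, hij1, by rwa [hKt], by rwa [hKt]⟩ true false (by simp)
  have hA := h1 w1 (by rwa [hKt])
  have hB := h2 w2 (by rwa [hKf])
  refine jung_arith2 (k := k1) (l := k2) (by omega) (by omega) h5 h6 h8 hk1 hk2 ?_
  by_contra ht
  obtain ⟨P, Q, hPQ, hcov⟩ := h9 1 le_rfl (by omega)
  have hcase : ∀ (l : Bool) (i j : ℕ), f i ≠ f j → (∃ a ∈ K l, G.Adj (f i) a) →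
      (∃ a ∈ K l, G.Adj (f j) a) → l ∈ Q := by
    intro l i j hij hi hj
    by_contra hl
    have g1 := (hcov i l hi).resolve_right hl
    have g2 := (hcov j l hj).resolve_right hl
    have : 1 < P.card := Finset.one_lt_card.2 ⟨_, g1, _, g2, hij⟩
    omega
  have g1 := hcase true i1 j1 hij1 (by rwa [hKt]) (by rwa [hKt])
  have g2 := hcase false i2 j2 hij2 (by rwa [hKf]) (by rwa [hKf])
  have : 1 < Q.card := Finset.one_lt_card.2 ⟨_, g1, _, g2, by simp⟩
  omega

lemma JSetup.final [Fintype V] {n δ : ℕ} {f : ℕ → V} {H : Finset V} (hS : JSetup G n f H δ)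
    (hH : 2 ≤ H.card) : 3 * δ ≤ n + 3 := by
  by_cases hI : ∀ x ∈ H, ∀ y ∈ H, ∀ y' ∈ H, y ≠ x → y' ≠ x → JReach G ((H : Set V) \ {x}) y y'
  · exact hS.case1 hH hI
  · push Not at hI
    obtain ⟨x, hx, y, hy, y', hy', hyx, hyx', hno⟩ := hI
    exact hS.case2 hx hy hy' hyx hyx' hno

lemma jung_reach_of_induce {S : Set V} {a b : S} (h : (G.induce S).Reachable a b) :
    JReach G S a b := by
  obtain ⟨p⟩ := h
  induction p with
  | nil => exact JReach.refl (Subtype.mem _)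
  | @cons u v w hadj q ih =>
    exact (JReach.edge (SimpleGraph.induce_adj.1 hadj) u.2 v.2).trans ih

lemma jung_setup [Fintype V] (h3 : KConnected G 3) {δ : ℕ}
    (hδ : ∀ a, δ ≤ (Finset.univ.filter (G.Adj a)).card) {v : V} (w : G.Walk v v)
    (hw : IsLongestCycle w) {x : V} (hx : x ∉ w.support) :
    JSetup G w.length (fun k => w.getVert (k % w.length))
      (Finset.univ.filter (fun a => JReach G {c | c ∉ w.support} x a)) δ := by
  obtain ⟨hc, hl⟩ := hw
  have hn3 := hc.three_le_length
  have hKmem : ∀ a, JReach G {c | c ∉ w.support} x a →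
      a ∈ ((Finset.univ.filter (fun a => JReach G {c | c ∉ w.support} x a) : Finset V) : Set V) := by
    intro a ha
    exact Finset.mem_coe.2 (Finset.mem_filter.2 ⟨Finset.mem_univ _, ha⟩)
  refine ⟨hn3, ?_, ?_, ?_, hl, ?_, ?_, ?_, hδ, ?_⟩
  · intro k
    simp
  · intro k
    have hlt : k % w.length < w.length := Nat.mod_lt _ (by omega)
    have h1 := w.adj_getVert_succ hlt
    have h2 : w.getVert ((k + 1) % w.length) = w.getVert (k % w.length + 1) := by
      rcases Nat.lt_or_ge (k % w.length + 1) w.length with h | h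
      · rw [Nat.add_mod, Nat.mod_eq_of_lt (show 1 < w.length by omega), Nat.mod_eq_of_lt h]
      · have he : k % w.length + 1 = w.length := by omega
        rw [he, Nat.add_mod, Nat.mod_eq_of_lt (show 1 < w.length by omega), he, Nat.mod_self,
          Walk.getVert_zero, Walk.getVert_length]
    rw [h2]
    exact h1
  · intro i j hij hjn h
    have h1 : i % w.length < w.length := Nat.mod_lt _ (by omega)
    have h2 : j % w.length < w.length := Nat.mod_lt _ (by omega)
    have h3 := hc.getVert_injOn' (show i % w.length ≤ w.length - 1 by omega)
      (show j % w.length ≤ w.length - 1 by omega) h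
    have h4 : w.length ∣ j - i := (Nat.modEq_iff_dvd' hij.le).1 h3
    have := Nat.le_of_dvd (by omega) h4
    omega
  · intro k hk
    exact (Finset.mem_filter.1 hk).2.right (w.getVert_mem_support _)
  · intro a ha c hac
    by_cases hcw : c ∈ w.support
    · right
      obtain ⟨m, hm, hml⟩ := Walk.mem_support_iff_exists_getVert.1 hcw
      rcases Nat.lt_or_ge m w.length with h | h
      · exact ⟨m, by rw [Nat.mod_eq_of_lt h, hm]⟩
      · have : m = w.length := by omega
        refine ⟨0, ?_⟩
        rw [Nat.zero_mod, Walk.getVert_zero, ← hm, this, Walk.getVert_length]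
    · left
      have h1 := (Finset.mem_filter.1 ha).2
      exact hKmem c (h1.trans (JReach.edge hac h1.right hcw))
  · intro a ha b hb
    have h1 := (Finset.mem_filter.1 ha).2
    have h2 := (Finset.mem_filter.1 hb).2
    exact (h1.comp hKmem).symm.trans (h2.comp hKmem)
  · rintro T hT K ⟨a, haK, haT⟩ ⟨b, hbK, hbT⟩
    have hcon := h3.2 T (by omega)
    have hr := jung_reach_of_induce (hcon.preconnected ⟨a, by simpa using haT⟩
      ⟨b, by simpa using hbT⟩)
    obtain ⟨c, d, hcK, hdK, hcS, hdS, hcd⟩ := hr.exists_edge K haK hbK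
    exact ⟨c, d, hcK, by simpa using hcS, hdK, by simpa using hdS, hcd⟩

end JungAux

theorem jung_dominating (G : SimpleGraph V) [Fintype V] [DecidableRel G.Adj]
    (h3 : KConnected G 3) :
    (circumference G : ℤ) ≥ 3 * G.minDegree - 3 ∨
      ∀ (v : V) (w : G.Walk v v), IsLongestCycle w → IsDominatingCycle w := by
  classical
  by_cases h : ∀ (v : V) (w : G.Walk v v), IsLongestCycle w → IsDominatingCycle w
  · exact Or.inr h
  · left
    push Not at h
    obtain ⟨v, w, hw, hnd⟩ := h
    have hex : ∃ x y, G.Adj x y ∧ x ∉ w.support ∧ y ∉ w.support := by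
      by_contra hcon
      push Not at hcon
      refine hnd ⟨hw.1, fun x y hxy => ?_⟩
      by_cases hx : x ∈ w.support
      · exact Or.inl hx
      · exact Or.inr (hcon x y hxy hx)
    obtain ⟨x, y, hxy, hx, hy⟩ := hex
    have hS := jung_setup (δ := G.minDegree) h3 (by
      intro a
      refine (G.minDegree_le_degree a).trans (le_of_eq ?_)
      rw [← G.card_neighborFinset_eq_degree]
      congr 1
      ext b
      simp) w hw hx
    have hfin := hS.final (by
      refine Finset.one_lt_card.2 ⟨x, ?_, y, ?_, hxy.ne⟩
      · simp only [Finset.mem_filter, Finset.mem_univ, true_and]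
        exact JReach.refl hx
      · simp only [Finset.mem_filter, Finset.mem_univ, true_and]
        exact JReach.edge hxy hx hy)
    have hcirc : w.length ≤ circumference G := by
      refine le_csSup ⟨w.length, ?_⟩ ⟨v, w, hw.1, rfl⟩
      rintro m ⟨u, w', hw', rfl⟩
      exact hw.2 u w' hw'
    omega
end

section
/- In every 3-connected graph with δ ≥ α, the circumference satisfies c ≥ min{n, 3δ − 3}. -/
open SimpleGraph

variable {V : Type*}

section JungProof
open Finset
open scoped Classical

/-- a path from `x` to `y` inside `W` of length at least `k` -/
def PIn (G : SimpleGraph V) (W : Finset V) (x y : V) (k : ℕ) : Prop :=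
  ∃ p : G.Walk x y, p.IsPath ∧ (∀ z ∈ p.support, z ∈ W) ∧ k ≤ p.length

/-- connectedness of a vertex set, by cuts -/
def VCon (G : SimpleGraph V) (W : Finset V) : Prop :=
  ∀ K ⊆ W, K.Nonempty → (W \ K).Nonempty → ∃ a ∈ K, ∃ b ∈ W \ K, G.Adj a b

/-- block-like vertex set -/
def Bl (G : SimpleGraph V) (W : Finset V) : Prop :=
  VCon G W ∧ ∀ e, VCon G (W.erase e)

variable {G : SimpleGraph V}

lemma PIn.symm {W : Finset V} {x y : V} {k : ℕ} (h : PIn G W x y k) : PIn G W y x k := by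
  obtain ⟨p, hp, hs, hk⟩ := h
  exact ⟨p.reverse, hp.reverse, by simpa using hs, by simpa using hk⟩

lemma PIn.mono {W W' : Finset V} {x y : V} {k k' : ℕ} (h : PIn G W x y k) (hW : W ⊆ W')
    (hk' : k' ≤ k) : PIn G W' x y k' := by
  obtain ⟨p, hp, hs, hk⟩ := h
  exact ⟨p, hp, fun z hz => hW (hs z hz), hk'.trans hk⟩

lemma PIn.refl {W : Finset V} {x : V} (h : x ∈ W) : PIn G W x x 0 :=
  ⟨.nil, by simp, by simpa using h, by simp⟩

lemma PIn.append {W₁ W₂ : Finset V} {a b c : V} {k₁ k₂ : ℕ} (h₁ : PIn G W₁ a b k₁)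
    (h₂ : PIn G W₂ b c k₂) (hd : ∀ z ∈ W₁, z ∈ W₂ → z = b) :
    PIn G (W₁ ∪ W₂) a c (k₁ + k₂) := by
  obtain ⟨p, hp, hs, hk⟩ := h₁
  obtain ⟨q, hq, ht, hl⟩ := h₂
  refine ⟨p.append q, ?_, ?_, ?_⟩
  · rw [Walk.isPath_def, Walk.support_append, List.nodup_append']
    have hqn := hq.support_nodup
    rw [← Walk.cons_tail_support] at hqn
    refine ⟨hp.support_nodup, hqn.of_cons, ?_⟩
    intro z hz hz'
    have := hd z (hs z hz) (ht z (List.mem_of_mem_tail hz'))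
    subst this
    exact (List.nodup_cons.1 hqn).1 hz'
  · intro z hz
    rw [Walk.mem_support_append_iff] at hz
    rcases hz with hz | hz
    · exact mem_union_left _ (hs z hz)
    · exact mem_union_right _ (ht z hz)
  · rw [Walk.length_append]; omega

lemma PIn.join {W₁ W₂ : Finset V} {a b c d : V} {k₁ k₂ : ℕ} (h₁ : PIn G W₁ a b k₁)
    (hbc : G.Adj b c) (h₂ : PIn G W₂ c d k₂) (hd : ∀ z ∈ W₁, z ∉ W₂) :
    PIn G (W₁ ∪ W₂) a d (k₁ + k₂ + 1) := by
  have hb : b ∈ W₁ := by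
    obtain ⟨p, hp, hs, hk⟩ := h₁
    exact hs _ p.end_mem_support
  have h3 : PIn G (insert b W₂) b d (k₂ + 1) := by
    obtain ⟨q, hq, ht, hl⟩ := h₂
    refine ⟨.cons hbc q, ?_, ?_, ?_⟩
    · rw [Walk.cons_isPath_iff]
      exact ⟨hq, fun h => hd b hb (ht b h)⟩
    · intro z hz
      rw [Walk.support_cons, List.mem_cons] at hz
      rcases hz with rfl | hz
      · simp
      · exact mem_insert_of_mem (ht z hz)
    · simpa using hl
  have h4 := h₁.append h3 (by
    intro z hz hz'
    rcases mem_insert.1 hz' with h | h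
    · exact h
    · exact absurd h (hd z hz))
  refine h4.mono ?_ (by omega)
  intro z hz
  simp only [mem_union, mem_insert] at hz ⊢
  rcases hz with h | rfl | h <;> tauto

lemma VCon.path {W : Finset V} (h : VCon G W) {x y : V} (hx : x ∈ W) (hy : y ∈ W) :
    PIn G W x y 0 := by
  by_contra hcon
  have key : ∀ z, (∃ p : G.Walk x z, ∀ t ∈ p.support, t ∈ W) → PIn G W x z 0 := by
    rintro z ⟨p, hp⟩
    exact ⟨p.bypass, p.bypass_isPath, fun t ht => hp t (p.support_bypass_subset_support ht), by simp⟩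
  obtain ⟨a, ha, b, hb, hab⟩ := h (W.filter fun z => PIn G W x z 0) (filter_subset _ _)
    ⟨x, by simp [hx, PIn.refl]⟩ ⟨y, by simp [hy, hcon]⟩
  simp only [mem_filter, mem_sdiff, not_and] at ha hb
  refine hb.2 hb.1 (key b ?_)
  obtain ⟨p, -, hp, -⟩ := ha.2
  refine ⟨p.concat hab, ?_⟩
  intro t ht
  rw [Walk.support_concat, List.mem_append] at ht
  rcases ht with ht | ht
  · exact hp t ht
  · simp at ht; subst ht; exact hb.1

lemma VCon.sdiff {W D : Finset V} {c : V} (h : VCon G W) 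
    (hcl : ∀ a ∈ D, ∀ b ∈ W, G.Adj a b → b ∈ insert c D) : VCon G (W \ D) := by
  have main : ∀ K ⊆ W \ D, K.Nonempty → ((W \ D) \ K).Nonempty → c ∉ K →
      ∃ a ∈ K, ∃ b ∈ (W \ D) \ K, G.Adj a b := by
    intro K hK hne hne' hc
    obtain ⟨z, hz⟩ := hne'
    obtain ⟨a, ha, b, hb, hab⟩ := h K (fun t ht => (mem_sdiff.1 (hK ht)).1) hne
      ⟨z, by simp only [mem_sdiff] at hz ⊢; tauto⟩
    refine ⟨a, ha, b, ?_, hab⟩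
    simp only [mem_sdiff] at hb ⊢
    refine ⟨⟨hb.1, fun hbD => ?_⟩, hb.2⟩
    have := hcl b hbD a (mem_sdiff.1 (hK ha)).1 hab.symm
    rcases mem_insert.1 this with h | h
    · exact hc (h ▸ ha)
    · exact (mem_sdiff.1 (hK ha)).2 h
  intro K hK hne hne'
  by_cases hc : c ∈ K
  · obtain ⟨a, ha, b, hb, hab⟩ := main ((W \ D) \ K) sdiff_subset hne'
      (by rw [Finset.sdiff_sdiff_eq_self hK]; exact hne) (by simp [hc])
    rw [Finset.sdiff_sdiff_eq_self hK] at hb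
    exact ⟨b, hb, a, ha, hab.symm⟩
  · exact main K hK hne hne' hc

/-- VCon from the cuts avoiding `c`. -/
lemma con_of_avoid {W : Finset V} (c : V)
    (main : ∀ K ⊆ W, K.Nonempty → (W \ K).Nonempty → c ∉ K →
      ∃ a ∈ K, ∃ b ∈ W \ K, G.Adj a b) : VCon G W := by
  intro K hK hne hne'
  by_cases hc : c ∈ K
  · obtain ⟨a, ha, b, hb, hab⟩ := main (W \ K) sdiff_subset hne'
      (by rw [Finset.sdiff_sdiff_eq_self hK]; exact hne) (by simp [hc])
    rw [Finset.sdiff_sdiff_eq_self hK] at hb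
    exact ⟨b, hb, a, ha, hab.symm⟩
  · exact main K hK hne hne' hc

lemma end_block {W : Finset V} (h : VCon G W) {y : V} (hy : y ∈ W) (h2 : ∃ z ∈ W, z ≠ y) :
    ∃ c ∈ W, ∃ D ⊆ W, c ∉ D ∧ y ∉ D ∧ D.Nonempty ∧
      (∀ a ∈ D, ∀ b ∈ W, G.Adj a b → b ∈ insert c D) ∧ Bl G (insert c D) := by
  set S := W.powerset.filter (fun D => D.Nonempty ∧ y ∉ D ∧ ∃ c ∈ W, c ∉ D ∧
      ∀ a ∈ D, ∀ b ∈ W, G.Adj a b → b ∈ insert c D) with hS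
  have hSne : S.Nonempty := by
    obtain ⟨z, hz, hzy⟩ := h2
    refine ⟨W.erase y, ?_⟩
    rw [hS, mem_filter, mem_powerset]
    refine ⟨erase_subset _ _, ⟨z, by simp [hz, hzy]⟩, by simp, y, hy, by simp, ?_⟩
    intro a _ b hb _
    rw [insert_erase hy]; exact hb
  obtain ⟨D, hD, hmin⟩ := exists_min_image S card hSne
  rw [hS, mem_filter, mem_powerset] at hD
  obtain ⟨hDW, hDne, hyD, c, hcW, hcD, hcl⟩ := hD
  have hmin' : ∀ K ⊆ D, K.Nonempty → (∃ c ∈ W, c ∉ K ∧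
      ∀ a ∈ K, ∀ b ∈ W, G.Adj a b → b ∈ insert c K) → ∀ t ∈ D, t ∈ K := by
    intro K hK hne hc t ht
    have := hmin K (by
      rw [hS, mem_filter, mem_powerset]
      exact ⟨hK.trans hDW, hne, fun h => hyD (hK h), hc⟩)
    rw [eq_of_subset_of_card_le hK this]
    exact ht
  have hcon : VCon G (insert c D) := by
    refine con_of_avoid c ?_
    intro K hK hne hne' hcK
    have hKD : ∀ t ∈ K, t ∈ D := by
      intro t ht
      rcases mem_insert.1 (hK ht) with h | h
      · exact absurd (h ▸ ht) hcK
      · exact h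
    obtain ⟨a, ha, b, hb, hab⟩ := h K (fun t ht => hDW (hKD t ht)) hne
      ⟨c, by simp [hcW, hcK]⟩
    rw [mem_sdiff] at hb
    exact ⟨a, ha, b, mem_sdiff.2 ⟨hcl a (hKD a ha) b hb.1 hab, hb.2⟩, hab⟩
  refine ⟨c, hcW, D, hDW, hcD, hyD, hDne, hcl, hcon, ?_⟩
  intro e
  by_cases he : e ∈ insert c D
  swap
  · rw [erase_eq_of_notMem he]; exact hcon
  have heW : e ∈ W := by
    rcases mem_insert.1 he with h | h
    · rw [h]; exact hcW
    · exact hDW h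
  refine con_of_avoid c ?_
  intro K hK hne hne' hcK
  by_contra hno
  push Not at hno
  have heK : e ∉ K := fun h => by simpa using hK h
  have hKD : K ⊆ D := by
    intro t ht
    rcases mem_insert.1 (mem_of_mem_erase (hK ht)) with h | h
    · exact absurd (h ▸ ht) hcK
    · exact h
  have hall := hmin' K hKD hne ⟨e, heW, heK, by
    intro a ha b hb hab
    by_contra hbn
    rw [mem_insert, not_or] at hbn
    exact hno a ha b (mem_sdiff.2 ⟨mem_erase.2 ⟨hbn.1, hcl a (hKD ha) b hb hab⟩, hbn.2⟩) hab⟩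
  rcases mem_insert.1 he with h | h
  · obtain ⟨z, hz⟩ := hne'
    rw [mem_sdiff, mem_erase, mem_insert] at hz
    rcases hz.1.2 with h' | h'
    · exact hz.1.1 (h'.trans h.symm)
    · exact hz.2 (hall z h')
  · exact heK (hall e h)

lemma long_path (N : ℕ) : ∀ (W : Finset V) (x y : V) (d : ℕ), #W ≤ N → Bl G W → x ∈ W → y ∈ W →
    x ≠ y → (∀ w ∈ W, w ≠ y → d ≤ #(W.filter (G.Adj w))) → PIn G W x y d := by
  induction N with
  | zero =>
    intro W x y d hN _ hx
    have : W = ∅ := by simpa using hN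
    simp [this] at hx
  | succ N ih =>
    intro W x y d hN hB hx hy hxy hdeg
    by_cases h2 : ∃ z ∈ W.erase x, z ≠ y
    · have hyx : y ∈ W.erase x := mem_erase.2 ⟨hxy.symm, hy⟩
      obtain ⟨c, hc, D, hD, hcD, hyD, hne, hcl, hBl⟩ := end_block (hB.2 x) hyx h2
      have hxD : x ∉ D := fun h => by simpa using hD h
      have hxc : x ≠ c := fun h => by simp [h] at hc
      obtain ⟨a, ha, b, hb, hab⟩ := hB.2 c D (fun t ht => mem_erase.2
        ⟨fun h => hcD (h ▸ ht), mem_of_mem_erase (hD ht)⟩) hne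
        ⟨x, mem_sdiff.2 ⟨mem_erase.2 ⟨hxc, hx⟩, hxD⟩⟩
      have hbx : b = x := by
        by_contra hbx
        rw [mem_sdiff, mem_erase] at hb
        rcases mem_insert.1 (hcl a ha b (mem_erase.2 ⟨hbx, hb.1.2⟩) hab) with h | h
        · exact hb.1.1 h
        · exact hb.2 h
      subst hbx
      have hsub : insert c D ⊆ W.erase b := insert_subset hc hD
      have hcard : #(insert c D) ≤ N := by
        have := card_le_card hsub
        rw [card_erase_of_mem hx] at this
        omega
      have hac : a ≠ c := fun h => hcD (h ▸ ha)
      have p1 := ih (insert c D) a c (d - 1) hcard hBl (by simp [ha]) (by simp) hac (by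
        intro w hw hwc
        have hwD : w ∈ D := by
          rcases mem_insert.1 hw with h | h
          · exact absurd h hwc
          · exact h
        have h1 := hdeg w (mem_of_mem_erase (hD hwD)) (fun h => hyD (h ▸ hwD))
        have h3 : W.filter (G.Adj w) ⊆ insert b ((insert c D).filter (G.Adj w)) := by
          intro t ht
          rw [mem_filter] at ht
          by_cases htb : t = b
          · simp [htb]
          · exact mem_insert_of_mem (mem_filter.2
              ⟨hcl w hwD t (mem_erase.2 ⟨htb, ht.1⟩) ht.2, ht.2⟩)
        have h4 := card_le_card h3
        have h5 := card_insert_le b ((insert c D).filter (G.Adj w))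
        omega)
      have p2 := ((hB.2 b).sdiff hcl).path (mem_sdiff.2 ⟨hc, hcD⟩) (mem_sdiff.2 ⟨hyx, hyD⟩)
      have p3 := p1.append p2 (by
        intro z hz hz'
        rcases mem_insert.1 hz with h | h
        · exact h
        · exact absurd h (mem_sdiff.1 hz').2)
      have p4 := (PIn.refl (G := G) (mem_singleton_self b)).join hab.symm p3 (by
        intro z hz hz'
        rw [mem_singleton] at hz
        subst hz
        rcases mem_union.1 hz' with h | h
        · simpa using hsub h
        · simp at h)
      refine p4.mono ?_ (by omega)
      intro z hz
      rw [mem_union, mem_singleton, mem_union] at hz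
      rcases hz with rfl | h | h
      · exact hx
      · exact mem_of_mem_erase (hsub h)
      · exact mem_of_mem_erase (mem_sdiff.1 h).1
    · push Not at h2
      obtain ⟨a, ha, b, hb, hab⟩ := hB.1 {x} (by simpa using hx) (by simp)
        ⟨y, by simp [hy, hxy.symm]⟩
      rw [mem_singleton] at ha
      subst ha
      rw [mem_sdiff, mem_singleton] at hb
      have := h2 b (mem_erase.2 ⟨hb.2, hb.1⟩)
      subst this
      have h1 := hdeg a hx hxy
      have h3 : W.filter (G.Adj a) ⊆ {b} := by
        intro t ht
        rw [mem_filter] at ht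
        rw [mem_singleton]
        exact h2 t (mem_erase.2 ⟨ht.2.ne', ht.1⟩)
      have h4 := card_le_card h3
      rw [card_singleton] at h4
      have p4 := (PIn.refl (G := G) (mem_singleton_self a)).join hab
        (PIn.refl (mem_singleton_self b)) (by simpa using hxy)
      refine p4.mono ?_ (by omega)
      intro z hz
      simp at hz
      rcases hz with rfl | rfl <;> assumption


/-- a cycle of length `n`, as a periodic function -/
structure Cyc (G : SimpleGraph V) (f : ℕ → V) (n : ℕ) : Prop where
  three : 3 ≤ n
  per : ∀ k, f (k + n) = f k
  inj : ∀ i j, i < j → j < i + n → f i ≠ f j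
  adj : ∀ k, G.Adj (f k) (f (k + 1))

lemma Cyc.mod {f : ℕ → V} {n : ℕ} (h : Cyc G f n) (k : ℕ) : f (k % n) = f k := by
  have hmul : ∀ m k, f (k + n * m) = f k := by
    intro m
    induction m with
    | zero => simp
    | succ m ih => intro k; rw [Nat.mul_succ, ← add_assoc, h.per, ih]
  conv_rhs => rw [← Nat.mod_add_div k n]
  rw [hmul]

lemma Cyc.shift {f : ℕ → V} {n : ℕ} (h : Cyc G f n) {i j : ℕ} (hij : f i = f j) (t : ℕ) :
    f (i + t) = f (j + t) := by
  have hn := h.three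
  have h1 : i % n = j % n := by
    rw [← h.mod i, ← h.mod j] at hij
    have hi := Nat.mod_lt i (show 0 < n by omega)
    have hj := Nat.mod_lt j (show 0 < n by omega)
    by_contra hne
    rcases lt_or_gt_of_ne hne with h' | h'
    · exact h.inj _ _ h' (by omega) hij
    · exact h.inj _ _ h' (by omega) hij.symm
  rw [← h.mod (i + t), ← h.mod (j + t), Nat.add_mod, h1, ← Nat.add_mod]

lemma Cyc.exists_pos {f : ℕ → V} {n : ℕ} (h : Cyc G f n) (t k : ℕ) :
    ∃ i < n, f (t + i) = f k := by
  have hn := h.three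
  refine ⟨(k + n * t - t) % n, Nat.mod_lt _ (by omega), ?_⟩
  have h1 : t ≤ n * t := Nat.le_mul_of_pos_left t (by omega)
  rw [← h.mod (t + _), Nat.add_mod_mod, show t + (k + n * t - t) = k + n * t by omega,
    Nat.add_mul_mod_self_left, h.mod]

lemma Cyc.arc {f : ℕ → V} {n : ℕ} (h : Cyc G f n) (i k : ℕ) (hk : k < n) :
    PIn G ((Icc i (i + k)).image f) (f i) (f (i + k)) k := by
  induction k with
  | zero => exact PIn.refl (by simp)
  | succ k ih =>
    have := (ih (by omega)).join (h.adj (i + k)) (PIn.refl (mem_singleton_self (f (i + k + 1))))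
      (by
        intro z hz hz'
        rw [mem_singleton] at hz'
        simp only [mem_image, mem_Icc] at hz
        obtain ⟨j, hj, hjz⟩ := hz
        exact h.inj j (i + k + 1) (by omega) (by omega) (hjz.trans hz'))
    refine this.mono ?_ (by omega)
    intro z hz
    simp only [mem_union, mem_image, mem_Icc, mem_singleton] at hz ⊢
    rcases hz with ⟨j, hj, rfl⟩ | rfl
    · exact ⟨j, by omega, rfl⟩
    · exact ⟨i + k + 1, by omega, rfl⟩

/-- no cycle is longer than `n` -/
def MaxLen (G : SimpleGraph V) (n : ℕ) : Prop :=
  ∀ (a b : V) (p : G.Walk a b), p.IsPath → G.Adj b a → p.length + 1 ≤ n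

lemma MaxLen.pin {n : ℕ} (hL : MaxLen G n) {W : Finset V} {a b : V} {k : ℕ} (h : PIn G W a b k)
    (hab : G.Adj b a) : k + 1 ≤ n := by
  obtain ⟨p, hp, -, hk⟩ := h
  have := hL a b p hp hab
  omega

lemma gap {f : ℕ → V} {n : ℕ} (hC : Cyc G f n) (hL : MaxLen G n) {H : Finset V}
    (hH : ∀ k, f k ∉ H) {p q l : ℕ} {u u' : V} (hpq : p < q) (hqn : q ≤ p + n)
    (hu : G.Adj (f p) u) (hu' : G.Adj (f q) u') (hP : PIn G H u u' l) : p + l + 2 ≤ q := by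
  have h1 := hC.arc q (p + n - q) (by omega)
  rw [show q + (p + n - q) = p + n by omega] at h1
  rw [← hC.per p] at hu
  have h2 := h1.join hu hP (by
    intro z hz
    simp only [mem_image] at hz
    obtain ⟨j, -, rfl⟩ := hz
    exact hH j)
  have := hL.pin h2 hu'.symm
  omega

lemma crossing {f : ℕ → V} {n : ℕ} (hC : Cyc G f n) (hL : MaxLen G n) {H : Finset V}
    (hH : ∀ k, f k ∉ H) {p q : ℕ} {u u' : V} (hpq : p < q) (hqn : q < p + n)
    (hu : G.Adj (f p) u) (hu' : G.Adj (f q) u') (hP : PIn G H u u' 0) :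
    ¬ G.Adj (f (p + 1)) (f (q + 1)) := by
  intro hadj
  have h1 := (hC.arc (p + 1) (q - (p + 1)) (by omega)).symm
  rw [show p + 1 + (q - (p + 1)) = q by omega] at h1
  have h2 := hC.arc (q + 1) (p + n - (q + 1)) (by omega)
  rw [show q + 1 + (p + n - (q + 1)) = p + n by omega] at h2
  have h3 := h1.join hadj h2 (by
    intro z hz hz'
    simp only [mem_image, mem_Icc] at hz hz'
    obtain ⟨i, hi, rfl⟩ := hz
    obtain ⟨j, hj, hij⟩ := hz'
    exact hC.inj i j (by omega) (by omega) hij.symm)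
  have h4 := hP.join hu'.symm h3 (by
    intro z hz hz'
    simp only [mem_union, mem_image] at hz'
    rcases hz' with ⟨j, -, rfl⟩ | ⟨j, -, rfl⟩ <;> exact hH j hz)
  have := hL.pin h4 (by rw [hC.per]; exact hu)
  omega

/-- weighted counting around the cycle -/
lemma cyc_count {f : ℕ → V} {n : ℕ} (hC : Cyc G f n) (N : Finset V) (hN : ∀ a ∈ N, ∃ k, f k = a)
    (w : V → ℕ)
    (hw : ∀ p q, p < q → q ≤ p + n → f p ∈ N → f q ∈ N → p + w (f p) ≤ q) :
    ∑ a ∈ N, w a ≤ n := by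
  rcases N.eq_empty_or_nonempty with rfl | ⟨a0, ha0⟩
  · simp
  obtain ⟨t, rfl⟩ := hN a0 ha0
  set P := (range n).filter (fun k => f (t + k) ∈ N) with hP
  have hNP : N = P.image (fun k => f (t + k)) := by
    ext a
    constructor
    · intro ha
      obtain ⟨k, rfl⟩ := hN a ha
      obtain ⟨i, hi, hik⟩ := hC.exists_pos t k
      exact mem_image.2 ⟨i, by rw [hP, mem_filter, mem_range, hik]; exact ⟨hi, ha⟩, hik⟩
    · intro ha
      obtain ⟨i, hi, rfl⟩ := mem_image.1 ha
      exact (mem_filter.1 hi).2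
  have hinj : Set.InjOn (fun k => f (t + k)) (P : Set ℕ) := by
    intro i hi j hj hij
    rw [mem_coe, hP, mem_filter, mem_range] at hi hj
    by_contra hne
    rcases lt_or_gt_of_ne hne with h | h
    · exact hC.inj (t + i) (t + j) (by omega) (by omega) hij
    · exact hC.inj (t + j) (t + i) (by omega) (by omega) hij.symm
  have hsum : ∑ a ∈ N, w a = ∑ k ∈ P, w (f (t + k)) := by
    conv_lhs => rw [hNP]
    rw [sum_image hinj]
  rw [hsum]
  have hdis : (P : Set ℕ).PairwiseDisjoint (fun k => Ico k (k + w (f (t + k)))) := by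
    have key : ∀ i ∈ P, ∀ j ∈ P, i < j →
        Disjoint (Ico i (i + w (f (t + i)))) (Ico j (j + w (f (t + j)))) := by
      intro i hi j hj hij
      rw [hP, mem_filter, mem_range] at hi hj
      have := hw (t + i) (t + j) (by omega) (by omega) hi.2 hj.2
      rw [Finset.disjoint_left]
      intro z hz hz'
      rw [mem_Ico] at hz hz'
      omega
    intro i hi j hj hne
    rcases lt_or_gt_of_ne hne with h | h
    · exact key i hi j hj h
    · exact (key j hj i hi h).symm
  have h1 := card_biUnion hdis
  simp only [Nat.card_Ico, Nat.add_sub_cancel_left] at h1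
  rw [← h1]
  calc _ ≤ #(range n) := card_le_card (by
        intro z hz
        rw [mem_biUnion] at hz
        obtain ⟨i, hi, hz⟩ := hz
        rw [hP, mem_filter, mem_range] at hi
        rw [mem_Ico] at hz
        have := hw (t + i) (t + n) (by omega) (by omega) hi.2 (by rw [hC.per]; exact ha0)
        rw [mem_range]; omega)
    _ = n := card_range n

lemma trans_step (X Y : ℕ → Prop) {p q : ℕ} (hpq : p < q) (hX : X p) (hY : Y q) :
    ∃ r r', p ≤ r ∧ r < r' ∧ r' ≤ q ∧ X r ∧ Y r' ∧ ∀ t, r < t → t < r' → ¬ X t ∧ ¬ Y t := by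
  induction hn : q - p using Nat.strong_induction_on generalizing p q with
  | _ m ih =>
    by_cases h : ∃ t, p < t ∧ t < q ∧ (X t ∨ Y t)
    · obtain ⟨t, h1, h2, h3 | h3⟩ := h
      · obtain ⟨r, r', a, b, c, d⟩ := ih (q - t) (by omega) h2 h3 hY rfl
        exact ⟨r, r', by omega, b, c, d⟩
      · obtain ⟨r, r', a, b, c, d⟩ := ih (t - p) (by omega) h1 hX h3 rfl
        exact ⟨r, r', a, b, by omega, d⟩
    · push Not at h
      exact ⟨p, q, le_rfl, hpq, le_rfl, hX, hY, fun t h1 h2 => h t h1 h2⟩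

lemma three_matching {α β : Type*} (R : α → β → Prop)
    (h0 : ∃ a b, R a b)
    (haa : ∀ a a', ∃ x y, R x y ∧ x ≠ a ∧ x ≠ a')
    (hbb : ∀ b b', ∃ x y, R x y ∧ y ≠ b ∧ y ≠ b')
    (hab : ∀ a b, ∃ x y, R x y ∧ x ≠ a ∧ y ≠ b) :
    ∃ a₁ b₁ a₂ b₂ a₃ b₃, R a₁ b₁ ∧ R a₂ b₂ ∧ R a₃ b₃ ∧ a₁ ≠ a₂ ∧ a₁ ≠ a₃ ∧ a₂ ≠ a₃ ∧
      b₁ ≠ b₂ ∧ b₁ ≠ b₃ ∧ b₂ ≠ b₃ := by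
  obtain ⟨a₁, b₁, h1⟩ := h0
  obtain ⟨a₂, b₂, h2, ha2, hb2⟩ := hab a₁ b₁
  have aux : ∀ a₁ b₁ a₂ b₂ x, R a₁ b₁ → R a₂ b₂ → a₂ ≠ a₁ → b₂ ≠ b₁ → R x b₁ → x ≠ a₁ → x ≠ a₂ →
      ∃ a₁ b₁ a₂ b₂ a₃ b₃, R a₁ b₁ ∧ R a₂ b₂ ∧ R a₃ b₃ ∧ a₁ ≠ a₂ ∧ a₁ ≠ a₃ ∧ a₂ ≠ a₃ ∧
      b₁ ≠ b₂ ∧ b₁ ≠ b₃ ∧ b₂ ≠ b₃ := by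
    intro a₁ b₁ a₂ b₂ x h1 h2 ha2 hb2 hx hx1 hx2
    obtain ⟨z, t, hz, ht1, ht2⟩ := hbb b₁ b₂
    by_cases hz1 : z = a₁
    · subst hz1
      exact ⟨x, b₁, z, t, a₂, b₂, hx, hz, h2, hx1, hx2, ha2.symm, ht1.symm, hb2.symm, ht2⟩
    by_cases hz2 : z = a₂
    swap
    · exact ⟨a₁, b₁, a₂, b₂, z, t, h1, h2, hz, ha2.symm, Ne.symm hz1, Ne.symm hz2, hb2.symm,
        ht1.symm, ht2.symm⟩
    subst hz2
    obtain ⟨r, s, hr, hr1, hs1⟩ := hab z b₁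
    by_cases hra : r = a₁
    · subst hra
      by_cases hs : s = b₂
      · subst hs
        exact ⟨x, b₁, r, s, z, t, hx, hr, hz, hx1, hx2, hr1, hb2.symm, ht1.symm, ht2.symm⟩
      · exact ⟨x, b₁, r, s, z, b₂, hx, hr, h2, hx1, hx2, hr1, hs1.symm, hb2.symm, hs⟩
    · by_cases hs : s = b₂
      · subst hs
        exact ⟨r, s, a₁, b₁, z, t, hr, h1, hz, hra, hr1, ha2.symm, hs1, ht2.symm, ht1.symm⟩
      · exact ⟨r, s, a₁, b₁, z, b₂, hr, h1, h2, hra, hr1, ha2.symm, hs1, hs, hb2.symm⟩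
  obtain ⟨x, y, hxy, hx1, hx2⟩ := haa a₁ a₂
  by_cases hy1 : y = b₁
  · subst hy1
    exact aux a₁ y a₂ b₂ x h1 h2 ha2 hb2 hxy hx1 hx2
  by_cases hy2 : y = b₂
  · subst hy2
    exact aux a₂ y a₁ b₁ x h2 h1 ha2.symm hb2.symm hxy hx2 hx1
  exact ⟨a₁, b₁, a₂, b₂, x, y, h1, h2, hxy, ha2.symm, hx1.symm, hx2.symm, hb2.symm,
    Ne.symm hy1, Ne.symm hy2⟩


/-- every element of `N` after `a` on the cycle is at distance at least `k` -/
def LG (f : ℕ → V) (n : ℕ) (N : Finset V) (a : V) (k : ℕ) : Prop :=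
  ∀ p q, f p = a → p < q → q ≤ p + n → f q ∈ N → p + k ≤ q

lemma trans_LG {f : ℕ → V} {n : ℕ} (hC : Cyc G f n) {N : Finset V} {X Y : V → Prop} {k p q : ℕ}
    (hpq : p < q) (hqn : q ≤ p + n) (hX : X (f p)) (hY : Y (f q)) (hN : ∀ a ∈ N, X a ∨ Y a)
    (hg : ∀ r r', r < r' → r' ≤ r + n → X (f r) → Y (f r') → r + k ≤ r') :
    ∃ r, p ≤ r ∧ r < q ∧ X (f r) ∧ LG f n N (f r) k := by
  obtain ⟨r, r', h1, h2, h3, h4, h5, h6⟩ :=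
    trans_step (fun i => X (f i)) (fun i => Y (f i)) hpq hX hY
  refine ⟨r, h1, by omega, h4, ?_⟩
  intro p' q' hp' h7 h8 h9
  have h10 := hC.shift hp' (q' - p')
  rw [show p' + (q' - p') = q' by omega] at h10
  rw [h10] at h9
  have h11 := hg r r' h2 (by omega) h4 h5
  by_contra hlt
  have h12 := h6 (r + (q' - p')) (by omega) (by omega)
  rcases hN _ h9 with h | h
  · exact h12.1 h
  · exact h12.2 h

lemma count_T {f : ℕ → V} {n : ℕ} (hC : Cyc G f n) (N : Finset V) (hN : ∀ a ∈ N, ∃ k, f k = a)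
    (h2 : ∀ p q, p < q → q ≤ p + n → f p ∈ N → f q ∈ N → p + 2 ≤ q) (T : Finset V) (hT : T ⊆ N)
    (L : ℕ) (hL : ∀ a ∈ T, LG f n N a (L + 2)) : 2 * #N + #T * L ≤ n := by
  have := cyc_count hC N hN (fun a => 2 + if a ∈ T then L else 0) (by
    intro p q h h' hp hq
    have h3 := h2 p q h h' hp hq
    by_cases hpT : f p ∈ T
    · have := hL _ hpT p q rfl h h' hq
      simp only [hpT, if_true]; omega
    · simp only [hpT, if_false]; omega)
  rw [sum_add_distrib, sum_ite_mem, inter_eq_right.2 hT] at this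
  simp only [sum_const, smul_eq_mul] at this
  omega

lemma count3 {f : ℕ → V} {n : ℕ} (hC : Cyc G f n) (N : Finset V) (hN : ∀ a ∈ N, ∃ k, f k = a)
    (h2 : ∀ p q, p < q → q ≤ p + n → f p ∈ N → f q ∈ N → p + 2 ≤ q) {a b c : V} {L L' : ℕ}
    (ha : a ∈ N) (hb : b ∈ N) (hc : c ∈ N) (hab : a ≠ b) (hac : a ≠ c) (hbc : b ≠ c)
    (h1 : LG f n N a (L + 2)) (h3 : LG f n N b (L + 2)) (h4 : LG f n N c (L' + 2)) :
    2 * #N + L + L + L' ≤ n := by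
  have := cyc_count hC N hN (fun x => 2 + (if a = x then L else 0) + (if b = x then L else 0)
      + (if c = x then L' else 0)) (by
    intro p q h h' hp hq
    have h5 := h2 p q h h' hp hq
    by_cases e1 : a = f p
    · have := h1 p q e1.symm h h' hq
      have e2 : b ≠ f p := fun h => hab (e1.trans h.symm)
      have e3 : c ≠ f p := fun h => hac (e1.trans h.symm)
      simp only [e1, e2, e3, if_true, if_false]; omega
    by_cases e2 : b = f p
    · have := h3 p q e2.symm h h' hq
      have e3 : c ≠ f p := fun h => hbc (e2.trans h.symm)
      simp only [e1, e2, e3, if_true, if_false]; omega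
    by_cases e3 : c = f p
    · have := h4 p q e3.symm h h' hq
      simp only [e1, e2, e3, if_true, if_false]; omega
    simp only [e1, e2, e3, if_false]; omega)
  simp only [sum_add_distrib, sum_ite_eq, ha, hb, hc, if_true, sum_const, smul_eq_mul] at this
  omega

lemma LG.mono {f : ℕ → V} {n : ℕ} {N : Finset V} {a : V} {k k' : ℕ} (h : LG f n N a k)
    (hk : k' ≤ k) : LG f n N a k' := by
  intro p q h1 h2 h3 h4
  have := h p q h1 h2 h3 h4
  omega

/-- the standing situation: longest cycle `f` and a component `H` off the cycle -/
structure Setup (G : SimpleGraph V) [Fintype V] (f : ℕ → V) (n δ : ℕ) (H : Finset V) : Prop where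
  cyc : Cyc G f n
  maxlen : MaxLen G n
  off : ∀ k, f k ∉ H
  con : VCon G H
  ne : H.Nonempty
  closed : ∀ a ∈ H, ∀ b, G.Adj a b → b ∈ H ∨ ∃ k, f k = b
  deg : ∀ v, δ ≤ #(univ.filter (G.Adj v))
  indep : ∀ S : Finset V, (∀ u ∈ S, ∀ v ∈ S, ¬ G.Adj u v) → #S ≤ δ
  sep : ∀ D S : Finset V, #S ≤ 2 → (∃ a ∈ D, a ∉ S) → (∃ z, z ∉ D ∧ z ∉ S) →
    ∃ a ∈ D, a ∉ S ∧ ∃ b, b ∉ D ∧ b ∉ S ∧ G.Adj a b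

/-- attachments of `D` on the cycle -/
noncomputable def NC (G : SimpleGraph V) (f : ℕ → V) (n : ℕ) (D : Finset V) : Finset V :=
  ((range n).image f).filter (fun a => ∃ u ∈ D, G.Adj a u)

lemma Cyc.mem_NC {f : ℕ → V} {n : ℕ} (h : Cyc G f n) {D : Finset V} {a : V} :
    a ∈ NC G f n D ↔ (∃ k, f k = a) ∧ ∃ u ∈ D, G.Adj a u := by
  have hn := h.three
  rw [NC, mem_filter, mem_image]
  refine and_congr_left fun _ => ⟨fun ⟨k, _, hk⟩ => ⟨k, hk⟩, fun ⟨k, hk⟩ =>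
    ⟨k % n, mem_range.2 (Nat.mod_lt _ (by omega)), by rw [h.mod, hk]⟩⟩

lemma Cyc.NC_mono {f : ℕ → V} {n : ℕ} (h : Cyc G f n) {D D' : Finset V} (hD : D ⊆ D') :
    NC G f n D ⊆ NC G f n D' := by
  intro a ha
  rw [h.mem_NC] at ha ⊢
  obtain ⟨h1, u, hu, h2⟩ := ha
  exact ⟨h1, u, hD hu, h2⟩

lemma Cyc.card_image {f : ℕ → V} {n : ℕ} (h : Cyc G f n) : #((range n).image f) = n := by
  rw [card_image_of_injOn, card_range]
  intro i hi j hj hij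
  simp only [coe_range, Set.mem_Iio] at hi hj
  by_contra hne
  rcases lt_or_gt_of_ne hne with h' | h'
  · exact h.inj _ _ h' (by omega) hij
  · exact h.inj _ _ h' (by omega) hij.symm

/-- some cycle vertex avoids a given set of two vertices -/
lemma Cyc.exists_avoid {f : ℕ → V} {n : ℕ} (h : Cyc G f n) {S : Finset V} (hS : #S ≤ 2) :
    ∃ k, f k ∉ S := by
  have h1 := h.card_image
  have h2 := h.three
  obtain ⟨a, ha, hb⟩ := exists_mem_notMem_of_card_lt_card (s := S) (t := (range n).image f)
    (by omega)
  obtain ⟨k, -, rfl⟩ := mem_image.1 ha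
  exact ⟨k, hb⟩

section
variable [Fintype V] {f : ℕ → V} {n δ : ℕ} {H : Finset V}

lemma Setup.gap2 (h : Setup G f n δ H) (p q : ℕ) (hpq : p < q) (hqn : q ≤ p + n)
    (hp : f p ∈ NC G f n H) (hq : f q ∈ NC G f n H) : p + 2 ≤ q := by
  rw [h.cyc.mem_NC] at hp hq
  obtain ⟨-, u, hu, hpu⟩ := hp
  obtain ⟨-, u', hu', hqu'⟩ := hq
  have := gap h.cyc h.maxlen h.off hpq hqn hpu hqu' (h.con.path hu hu')
  omega

lemma Setup.NC_lt (h : Setup G f n δ H) : #(NC G f n H) + 1 ≤ δ := by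
  obtain ⟨x, hx⟩ := h.ne
  have hn := h.cyc.three
  set P := (range n).filter (fun k => f k ∈ NC G f n H) with hP
  have inj1 : ∀ i ∈ P, ∀ j ∈ P, ∀ t, f (i + t) = f (j + t) → i = j := by
    intro i hi j hj t hij
    rw [hP, mem_filter, mem_range] at hi hj
    by_contra hne
    rcases lt_or_gt_of_ne hne with h' | h'
    · exact h.cyc.inj _ _ (by omega) (by omega) hij
    · exact h.cyc.inj _ _ (by omega) (by omega) hij.symm
  have hcP : #(NC G f n H) = #P := by
    have : NC G f n H = P.image f := by
      ext a
      rw [mem_image]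
      constructor
      · intro ha
        have ha' := ha
        rw [NC, mem_filter, mem_image] at ha'
        obtain ⟨k, hk, rfl⟩ := ha'.1
        exact ⟨k, mem_filter.2 ⟨hk, ha⟩, rfl⟩
      · rintro ⟨k, hk, rfl⟩
        exact (mem_filter.1 hk).2
    rw [this, card_image_of_injOn]
    intro i hi j hj hij
    exact inj1 i hi j hj 0 hij
  have hcS : #(P.image fun k => f (k + 1)) = #P := by
    rw [card_image_of_injOn]
    intro i hi j hj hij
    exact inj1 i hi j hj 1 hij
  have hxS : x ∉ P.image fun k => f (k + 1) := by
    intro hx'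
    obtain ⟨k, -, rfl⟩ := mem_image.1 hx'
    exact h.off _ hx
  have hk1 : ∀ k ∈ P, ¬ G.Adj x (f (k + 1)) := by
    intro k hk hadj
    have hk' := (mem_filter.1 hk).2
    have := h.gap2 k (k + 1) (by omega) (by omega) hk'
      (h.cyc.mem_NC.2 ⟨⟨_, rfl⟩, x, hx, hadj.symm⟩)
    omega
  have hk2 : ∀ i ∈ P, ∀ j ∈ P, i < j → ¬ G.Adj (f (i + 1)) (f (j + 1)) := by
    intro i hi j hj hij
    rw [hP, mem_filter, mem_range, h.cyc.mem_NC] at hi hj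
    obtain ⟨hi0, -, u, hu, hiu⟩ := hi
    obtain ⟨hj0, -, u', hu', hju'⟩ := hj
    exact crossing h.cyc h.maxlen h.off hij (by omega) hiu hju' (h.con.path hu hu')
  have := h.indep (insert x (P.image fun k => f (k + 1))) (by
    intro a ha b hb
    rw [mem_insert, mem_image] at ha hb
    rcases ha with rfl | ⟨i, hi, rfl⟩ <;> rcases hb with rfl | ⟨j, hj, rfl⟩
    · exact G.irrefl
    · exact hk1 j hj
    · exact fun h => hk1 i hi h.symm
    · rcases lt_trichotomy i j with h' | rfl | h'
      · exact hk2 i hi j hj h'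
      · exact G.irrefl
      · exact fun h => hk2 j hj i hi h' h.symm)
  rw [card_insert_of_notMem hxS, hcS, ← hcP] at this
  exact this

lemma Setup.deg' (h : Setup G f n δ H) {w : V} (hw : w ∈ H) :
    δ ≤ #(NC G f n {w}) + #(H.filter (G.Adj w)) := by
  refine (h.deg w).trans ((card_le_card ?_).trans (card_union_le _ _))
  intro b hb
  have hb' : G.Adj w b := (mem_filter.1 hb).2
  rw [mem_union]
  rcases h.closed w hw b hb' with h' | h'
  · right; exact mem_filter.2 ⟨h', hb'⟩
  · left; exact h.cyc.mem_NC.2 ⟨h', w, by simp, hb'.symm⟩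

lemma Setup.NC_three (h : Setup G f n δ H) : 3 ≤ #(NC G f n H) := by
  by_contra hlt
  obtain ⟨x, hx⟩ := h.ne
  obtain ⟨k, hk⟩ := h.cyc.exists_avoid (S := NC G f n H) (by omega)
  obtain ⟨a, ha, -, b, hb, hb', hab⟩ := h.sep H (NC G f n H) (by omega)
    ⟨x, hx, fun hx' => by
      obtain ⟨⟨k, rfl⟩, -⟩ := h.cyc.mem_NC.1 hx'
      exact h.off k hx⟩ ⟨f k, h.off k, hk⟩
  rcases h.closed a ha b hab with h' | h'
  · exact hb h'
  · exact hb' (h.cyc.mem_NC.2 ⟨h', a, ha, hab.symm⟩)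

lemma Setup.NC_two (h : Setup G f n δ H) {D : Finset V} {c z : V} (hD : D ⊆ H) (hne : D.Nonempty)
    (hc : c ∉ D) (hz : z ∈ H) (hzD : z ∉ D) (hzc : z ≠ c)
    (hcl : ∀ a ∈ D, ∀ b ∈ H, G.Adj a b → b ∈ insert c D) (k : ℕ) :
    ∃ a ∈ NC G f n D, a ≠ f k := by
  obtain ⟨d, hd⟩ := hne
  obtain ⟨a, ha, -, b, hb, hb', hab⟩ := h.sep D {c, f k} card_le_two
    ⟨d, hd, by
      simp only [mem_insert, mem_singleton, not_or]
      exact ⟨fun h' => hc (h' ▸ hd), fun h' => h.off k (h' ▸ hD hd)⟩⟩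
    ⟨z, hzD, by
      simp only [mem_insert, mem_singleton, not_or]
      exact ⟨hzc, fun h' => h.off k (h' ▸ hz)⟩⟩
  simp only [mem_insert, mem_singleton, not_or] at hb'
  rcases h.closed a (hD ha) b hab with h' | h'
  · rcases mem_insert.1 (hcl a ha b h' hab) with h'' | h''
    · exact absurd h'' hb'.1
    · exact absurd h'' hb
  · exact ⟨b, h.cyc.mem_NC.2 ⟨h', a, ha, hab.symm⟩, hb'.2⟩

lemma Setup.block_path (h : Setup G f n δ H) {D : Finset V} {c : V} {m : ℕ} (hD : D ⊆ H)
    (hc : c ∉ D) (hcl : ∀ a ∈ D, ∀ b ∈ H, G.Adj a b → b ∈ insert c D)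
    (hB : Bl G (insert c D)) (hm : ∀ w ∈ D, #(NC G f n {w}) ≤ m) {u : V} (hu : u ∈ D) :
    PIn G (insert c D) u c (δ - m) := by
  refine long_path _ _ _ _ _ le_rfl hB (mem_insert_of_mem hu) (mem_insert_self _ _)
    (fun h' => hc (h' ▸ hu)) ?_
  intro w hw hwc
  have hwD : w ∈ D := by
    rcases mem_insert.1 hw with h' | h'
    · exact absurd h' hwc
    · exact h'
  have h1 := h.deg' (hD hwD)
  have h2 := hm w hwD
  have h3 : #(H.filter (G.Adj w)) ≤ #((insert c D).filter (G.Adj w)) := card_le_card (by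
    intro b hb
    rw [mem_filter] at hb ⊢
    exact ⟨hcl w hwD b hb.1 hb.2, hb.2⟩)
  omega

lemma arith2 {m1 m2 s1 s2 u i δ n : ℕ} (h1 : m1 + 1 ≤ δ) (h2 : m2 + 1 ≤ δ) (h3 : m1 ≤ s1)
    (h4 : m2 ≤ s2) (h5 : u + i = s1 + s2) (h6 : 2 * u + i * ((δ - m1) + (δ - m2)) ≤ n)
    (h7 : 2 * u + 2 * ((δ - m1) + (δ - m2)) ≤ n) : 3 * δ ≤ n + 3 := by
  by_cases hi : i ≤ 2
  · omega
  · obtain ⟨L, hL⟩ : ∃ L, (δ - m1) + (δ - m2) = L + 2 :=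
      ⟨(δ - m1) + (δ - m2) - 2, by omega⟩
    rw [hL] at h6
    have : 2 * L ≤ i * L := Nat.mul_le_mul_right _ (by omega)
    rw [mul_add] at h6
    omega

/-- two end blocks -/
lemma Setup.case_two (h : Setup G f n δ H) {D₁ D₂ : Finset V} {c₁ c₂ : V}
    (hD₁ : D₁ ⊆ H) (hD₂ : D₂ ⊆ H) (hne₁ : D₁.Nonempty) (hne₂ : D₂.Nonempty)
    (hdis : ∀ z ∈ D₁, z ∉ D₂)
    (h11 : c₁ ∉ D₁) (h12 : c₁ ∉ D₂) (h21 : c₂ ∉ D₁) (h22 : c₂ ∉ D₂)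
    (hcl₁ : ∀ a ∈ D₁, ∀ b ∈ H, G.Adj a b → b ∈ insert c₁ D₁)
    (hcl₂ : ∀ a ∈ D₂, ∀ b ∈ H, G.Adj a b → b ∈ insert c₂ D₂)
    (hB₁ : Bl G (insert c₁ D₁)) (hB₂ : Bl G (insert c₂ D₂))
    (hP : PIn G ((H \ D₁) \ D₂) c₁ c₂ 0) : 3 * δ ≤ n + 3 := by
  obtain ⟨w₁, hw₁, hm₁⟩ := exists_max_image D₁ (fun w => #(NC G f n {w})) hne₁
  obtain ⟨w₂, hw₂, hm₂⟩ := exists_max_image D₂ (fun w => #(NC G f n {w})) hne₂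
  set m₁ := #(NC G f n {w₁})
  set m₂ := #(NC G f n {w₂})
  have hpath : ∀ u₁ ∈ D₁, ∀ u₂ ∈ D₂, PIn G H u₁ u₂ ((δ - m₁) + (δ - m₂)) := by
    intro u₁ hu₁ u₂ hu₂
    have p1 := h.block_path hD₁ h11 hcl₁ hB₁ hm₁ hu₁
    have p2 := (h.block_path hD₂ h22 hcl₂ hB₂ hm₂ hu₂).symm
    have hc1 : c₁ ∈ H := by
      obtain ⟨p, -, hp, -⟩ := hP
      have := hp _ p.start_mem_support
      simp only [mem_sdiff] at this
      exact this.1.1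
    have hc2 : c₂ ∈ H := by
      obtain ⟨p, -, hp, -⟩ := hP
      have := hp _ p.end_mem_support
      simp only [mem_sdiff] at this
      exact this.1.1
    have p3 := hP.append p2 (by
      intro z hz hz'
      rcases mem_insert.1 hz' with h' | h'
      · exact h'
      · exact absurd h' (mem_sdiff.1 hz).2)
    have p4 := p1.append p3 (by
      intro z hz hz'
      rcases mem_insert.1 hz with h' | h'
      · exact h'
      · exfalso
        simp only [mem_union, mem_sdiff, mem_insert] at hz'
        rcases hz' with h'' | rfl | h''
        · exact h''.1.2 h'
        · exact h21 h'
        · exact hdis z h' h'')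
    refine p4.mono ?_ (by omega)
    intro z hz
    simp only [mem_union, mem_sdiff, mem_insert] at hz
    rcases hz with (rfl | h') | h' | rfl | h'
    · exact hc1
    · exact hD₁ h'
    · exact h'.1.1
    · exact hc2
    · exact hD₂ h'
  have hgap : ∀ p q, p < q → q ≤ p + n → f p ∈ NC G f n D₁ → f q ∈ NC G f n D₂ →
      p + ((δ - m₁) + (δ - m₂) + 2) ≤ q := by
    intro p q hpq hqn hp hq
    obtain ⟨-, u, hu, hpu⟩ := h.cyc.mem_NC.1 hp
    obtain ⟨-, u', hu', hqu'⟩ := h.cyc.mem_NC.1 hq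
    have := gap h.cyc h.maxlen h.off hpq hqn hpu hqu' (hpath u hu u' hu')
    omega
  have hgap' : ∀ p q, p < q → q ≤ p + n → f p ∈ NC G f n D₂ → f q ∈ NC G f n D₁ →
      p + ((δ - m₁) + (δ - m₂) + 2) ≤ q := by
    intro p q hpq hqn hp hq
    obtain ⟨-, u, hu, hpu⟩ := h.cyc.mem_NC.1 hp
    obtain ⟨-, u', hu', hqu'⟩ := h.cyc.mem_NC.1 hq
    have := gap h.cyc h.maxlen h.off hpq hqn hpu hqu' (hpath u' hu' u hu).symm
    omega
  set N₁ := NC G f n D₁ with hN₁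
  set N₂ := NC G f n D₂ with hN₂
  have hNH : ∀ a ∈ N₁ ∪ N₂, a ∈ NC G f n H := by
    intro a ha
    rcases mem_union.1 ha with h' | h'
    · exact h.cyc.NC_mono hD₁ h'
    · exact h.cyc.NC_mono hD₂ h'
  have hNc : ∀ a ∈ N₁ ∪ N₂, ∃ k, f k = a := fun a ha => (h.cyc.mem_NC.1 (hNH a ha)).1
  have h2 : ∀ p q, p < q → q ≤ p + n → f p ∈ N₁ ∪ N₂ → f q ∈ N₁ ∪ N₂ → p + 2 ≤ q :=
    fun p q a b c d => h.gap2 p q a b (hNH _ c) (hNH _ d)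
  have hs := h.NC_lt
  have e1 : m₁ ≤ #N₁ := card_le_card (h.cyc.NC_mono (by simpa using hw₁))
  have e2 : m₂ ≤ #N₂ := card_le_card (h.cyc.NC_mono (by simpa using hw₂))
  have e3 : #N₁ ≤ #(NC G f n H) := card_le_card (h.cyc.NC_mono hD₁)
  have e4 : #N₂ ≤ #(NC G f n H) := card_le_card (h.cyc.NC_mono hD₂)
  have hcountI := count_T h.cyc (N₁ ∪ N₂) hNc h2 (N₁ ∩ N₂)
    (fun a ha => mem_union_left _ (mem_inter.1 ha).1) ((δ - m₁) + (δ - m₂)) (by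
      intro a ha p q hpa hpq hqn hq
      rw [mem_inter, ← hpa] at ha
      rcases mem_union.1 hq with h' | h'
      · exact hgap' p q hpq hqn ha.2 h'
      · exact hgap p q hpq hqn ha.1 h')
  -- two transitions
  obtain ⟨z₁, hz₁⟩ := hne₁
  obtain ⟨z₂, hz₂⟩ := hne₂
  obtain ⟨b, hb, -⟩ := h.NC_two hD₂ ⟨z₂, hz₂⟩ h22 (hD₁ hz₁) (hdis z₁ hz₁)
    (fun h' => h21 (h' ▸ hz₁)) hcl₂ 0
  obtain ⟨q, rfl⟩ := (h.cyc.mem_NC.1 hb).1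
  obtain ⟨a, ha, hab⟩ := h.NC_two hD₁ ⟨z₁, hz₁⟩ h11 (hD₂ hz₂) (fun h' => hdis z₂ h' hz₂)
    (fun h' => h12 (h' ▸ hz₂)) hcl₁ q
  obtain ⟨k, rfl⟩ := (h.cyc.mem_NC.1 ha).1
  obtain ⟨i, hi, hik⟩ := h.cyc.exists_pos q k
  have hi0 : i ≠ 0 := by
    rintro rfl
    exact hab hik.symm
  rw [← hik] at ha
  obtain ⟨r, hr1, hr2, hr3, hr4⟩ := trans_LG h.cyc (N := N₁ ∪ N₂) (X := (· ∈ N₂)) (Y := (· ∈ N₁))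
    (show q < q + i by omega) (by omega) hb ha (fun a ha => (mem_union.1 ha).symm) hgap'
  obtain ⟨r', hr1', hr2', hr3', hr4'⟩ := trans_LG h.cyc (N := N₁ ∪ N₂) (X := (· ∈ N₁))
    (Y := (· ∈ N₂)) (show q + i < q + n by omega) (by omega) ha
    (by rw [h.cyc.per]; exact hb) (fun a ha => (mem_union.1 ha)) hgap
  have hrr : f r ≠ f r' := h.cyc.inj r r' (by omega) (by omega)
  have hcount2 := count_T h.cyc (N₁ ∪ N₂) hNc h2 {f r, f r'} (by
    intro t ht
    rw [mem_insert, mem_singleton] at ht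
    rcases ht with rfl | rfl
    · exact mem_union_right _ hr3
    · exact mem_union_left _ hr3') ((δ - m₁) + (δ - m₂)) (by
      intro t ht
      rw [mem_insert, mem_singleton] at ht
      rcases ht with rfl | rfl
      · exact hr4
      · exact hr4')
  rw [card_pair hrr] at hcount2
  exact arith2 (by omega) (by omega) e1 e2 (card_union_add_card_inter N₁ N₂) hcountI hcount2


lemma arith1 {m r r' s i δ n : ℕ} (h1 : r' ≤ m) (h2 : r' ≤ r) (h3 : s + 1 ≤ δ) (h4 : m ≤ s)
    (h5 : r ≤ s) (h6 : s + i = m + r) (hi : 3 ≤ i) (h7 : 2 * s + i * (δ - r') ≤ n) :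
    3 * δ ≤ n + 3 := by
  by_cases hL : r' + 2 ≤ δ
  · obtain ⟨L, hL⟩ : ∃ L, δ - r' = L + 2 := ⟨δ - r' - 2, by omega⟩
    rw [hL, mul_add] at h7
    have : 3 * L ≤ i * L := Nat.mul_le_mul_right _ hi
    omega
  · have : δ - r' = 1 := by omega
    rw [this] at h7
    omega

lemma Setup.case_one (h : Setup G f n δ H) (hB : Bl G H) : 3 * δ ≤ n + 3 := by
  have hs := h.NC_lt
  have hs3 := h.NC_three
  have hn := h.cyc.three
  obtain ⟨v, hv, hmv⟩ := exists_max_image H (fun w => #(NC G f n {w})) h.ne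
  have hNCle : ∀ w ∈ H, #(NC G f n {w}) ≤ #(NC G f n H) := fun w hw =>
    card_le_card (h.cyc.NC_mono (by simpa using hw))
  have hne : (H.erase v).Nonempty := by
    have h1 := h.deg' hv
    have h2 := hNCle v hv
    have h3 : 0 < #(H.filter (G.Adj v)) := by omega
    obtain ⟨b, hb⟩ := card_pos.1 h3
    rw [mem_filter] at hb
    exact ⟨b, mem_erase.2 ⟨hb.2.ne', hb.1⟩⟩
  obtain ⟨w, hw, hrw⟩ := exists_max_image (H.erase v) (fun w => #(NC G f n {w})) hne
  have hwH := mem_of_mem_erase hw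
  have hwv : w ≠ v := (mem_erase.1 hw).1
  have hrm := hmv w hwH
  set m := #(NC G f n {v}) with hm
  set r' := #(NC G f n {w}) with hr'
  have hstrong : ∀ u ∈ H, u ≠ v → PIn G H u v (δ - r') := by
    intro u hu huv
    refine long_path _ _ _ _ _ le_rfl hB hu hv huv ?_
    intro x hx hxv
    have h1 := h.deg' hx
    have h2 := hrw x (mem_erase.2 ⟨hxv, hx⟩)
    omega
  have hweak : ∀ u ∈ H, ∀ u' ∈ H, u ≠ u' → PIn G H u u' (δ - m) := by
    intro u hu u' hu' huu
    refine long_path _ _ _ _ _ le_rfl hB hu hu' huu ?_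
    intro x hx _
    have h1 := h.deg' hx
    have h2 := hmv x hx
    omega
  set N₁ := NC G f n {v} with hN₁
  set N₂ := NC G f n (H.erase v) with hN₂
  have hN : NC G f n H = N₁ ∪ N₂ := by
    ext a
    rw [mem_union, hN₁, hN₂, h.cyc.mem_NC, h.cyc.mem_NC, h.cyc.mem_NC]
    constructor
    · rintro ⟨h1, u, hu, hau⟩
      by_cases huv : u = v
      · left; exact ⟨h1, u, by simp [huv], hau⟩
      · right; exact ⟨h1, u, mem_erase.2 ⟨huv, hu⟩, hau⟩
    · rintro (⟨h1, u, hu, hau⟩ | ⟨h1, u, hu, hau⟩)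
      · rw [mem_singleton] at hu; subst hu; exact ⟨h1, u, hv, hau⟩
      · exact ⟨h1, u, mem_of_mem_erase hu, hau⟩
  have hgap : ∀ p q, p < q → q ≤ p + n → f p ∈ N₁ → f q ∈ N₂ → p + (δ - r' + 2) ≤ q := by
    intro p q hpq hqn hp hq
    obtain ⟨-, u, hu, hpu⟩ := h.cyc.mem_NC.1 hp
    obtain ⟨-, u', hu', hqu'⟩ := h.cyc.mem_NC.1 hq
    rw [mem_singleton] at hu
    subst hu
    rw [mem_erase] at hu'
    have := gap h.cyc h.maxlen h.off hpq hqn hpu hqu' (hstrong u' hu'.2 hu'.1).symm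
    omega
  have hgap' : ∀ p q, p < q → q ≤ p + n → f p ∈ N₂ → f q ∈ N₁ → p + (δ - r' + 2) ≤ q := by
    intro p q hpq hqn hp hq
    obtain ⟨-, u, hu, hpu⟩ := h.cyc.mem_NC.1 hp
    obtain ⟨-, u', hu', hqu'⟩ := h.cyc.mem_NC.1 hq
    rw [mem_singleton] at hu'
    subst hu'
    rw [mem_erase] at hu
    have := gap h.cyc h.maxlen h.off hpq hqn hpu hqu' (hstrong u hu.2 hu.1)
    omega
  have hNc : ∀ a ∈ NC G f n H, ∃ k, f k = a := fun a ha => (h.cyc.mem_NC.1 ha).1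
  have e2 : r' ≤ #N₂ := card_le_card (h.cyc.NC_mono (by simpa using hw))
  have e4 : #N₂ ≤ #(NC G f n H) := card_le_card (h.cyc.NC_mono (erase_subset _ _))
  have e3 : m ≤ #(NC G f n H) := hNCle v hv
  have hcard := card_union_add_card_inter N₁ N₂
  rw [← hN] at hcard
  by_cases hi : 3 ≤ #(N₁ ∩ N₂)
  · have hcountI := count_T h.cyc (NC G f n H) hNc h.gap2 (N₁ ∩ N₂)
      (fun a ha => by rw [hN]; exact mem_union_left _ (mem_inter.1 ha).1) (δ - r') (by
        intro a ha p q hpa hpq hqn hq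
        rw [mem_inter, ← hpa] at ha
        rw [hN] at hq
        rcases mem_union.1 hq with h' | h'
        · exact hgap' p q hpq hqn ha.2 h'
        · exact hgap p q hpq hqn ha.1 h')
    exact arith1 hrm e2 hs e3 e4 hcard hi hcountI
  -- few common attachments: `H` has at least three vertices
  have hH3 : 2 < #H := by
    by_contra hlt
    have hHs : H = {v, w} := by
      symm
      apply eq_of_subset_of_card_le
      · intro t ht
        rw [mem_insert, mem_singleton] at ht
        rcases ht with rfl | rfl <;> assumption
      · rw [card_pair hwv.symm]; omega
    have h1 := h.deg' hwH
    have h2 : #(H.filter (G.Adj w)) ≤ #({v} : Finset V) := card_le_card (by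
      intro b hb
      rw [hHs, mem_filter, mem_insert, mem_singleton] at hb
      rw [mem_singleton]
      rcases hb.1 with h' | h'
      · exact h'
      · exact absurd h' hb.2.ne')
    rw [card_singleton] at h2
    omega
  have hedge : ∀ s t, ∃ u ∈ H, ∃ k, G.Adj (f k) u ∧ u ≠ s ∧ u ≠ t ∧ f k ≠ s ∧ f k ≠ t := by
    intro s t
    have hst : #({s, t} : Finset V) ≤ 2 := card_le_two
    obtain ⟨k, hk⟩ := h.cyc.exists_avoid hst
    obtain ⟨x, hx, hx'⟩ := exists_mem_notMem_of_card_lt_card (s := {s, t}) (t := H) (by omega)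
    obtain ⟨a, ha, ha', b, hb, hb', hab⟩ := h.sep H {s, t} hst ⟨x, hx, hx'⟩ ⟨f k, h.off k, hk⟩
    simp only [mem_insert, mem_singleton, not_or] at ha' hb'
    rcases h.closed a ha b hab with h' | ⟨j, rfl⟩
    · exact absurd h' hb
    · exact ⟨a, ha, j, hab.symm, ha'.1, ha'.2, hb'.1, hb'.2⟩
  obtain ⟨u₁, a₁, u₂, a₂, u₃, a₃, hR1, hR2, hR3, hu12, hu13, hu23, ha12, ha13, ha23⟩ :=
    three_matching (fun u a => u ∈ H ∧ (∃ k, f k = a) ∧ G.Adj a u)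
      (by
        obtain ⟨u, hu, k, h1, -⟩ := hedge v v
        exact ⟨u, f k, hu, ⟨k, rfl⟩, h1⟩)
      (by
        intro s t
        obtain ⟨u, hu, k, h1, h2, h3, h4, h5⟩ := hedge s t
        exact ⟨u, f k, ⟨hu, ⟨k, rfl⟩, h1⟩, h2, h3⟩)
      (by
        intro s t
        obtain ⟨u, hu, k, h1, h2, h3, h4, h5⟩ := hedge s t
        exact ⟨u, f k, ⟨hu, ⟨k, rfl⟩, h1⟩, h4, h5⟩)
      (by
        intro s t
        obtain ⟨u, hu, k, h1, h2, h3, h4, h5⟩ := hedge s t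
        exact ⟨u, f k, ⟨hu, ⟨k, rfl⟩, h1⟩, h2, h5⟩)
  -- strong transitions
  have hstr : ∃ x ∈ NC G f n H, ∃ y ∈ NC G f n H, x ≠ y ∧ LG f n (NC G f n H) x (δ - r' + 2) ∧
      LG f n (NC G f n H) y (δ - r' + 2) := by
    have hm1 : N₁.Nonempty := by
      rw [← card_pos]
      by_contra h0
      have : ∀ u ∈ H, NC G f n {u} = ∅ := by
        intro u hu
        have := hmv u hu
        rw [← card_eq_zero]; omega
      have h1 := h.cyc.mem_NC.2 ⟨hR1.2.1, u₁, mem_singleton_self u₁, hR1.2.2⟩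
      rw [this u₁ hR1.1] at h1
      simp at h1
    have hm2 : N₂.Nonempty := by
      obtain ⟨u, hu, k, h1, h2, -⟩ := hedge v v
      exact ⟨f k, h.cyc.mem_NC.2 ⟨⟨k, rfl⟩, u, mem_erase.2 ⟨h2, hu⟩, h1⟩⟩
    have hpair : ∃ a ∈ N₁, ∃ b ∈ N₂, a ≠ b := by
      by_contra hcon
      push Not at hcon
      obtain ⟨a, ha⟩ := hm1
      obtain ⟨b, hb⟩ := hm2
      have hsub : NC G f n H ⊆ {a} := by
        rw [hN]
        intro t ht
        rw [mem_singleton]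
        rcases mem_union.1 ht with h' | h'
        · rw [hcon t h' b hb, hcon a ha b hb]
        · rw [hcon a ha t h']
      have := card_le_card hsub
      rw [card_singleton] at this
      omega
    obtain ⟨a, ha, b, hb, hab⟩ := hpair
    obtain ⟨q, rfl⟩ := (h.cyc.mem_NC.1 hb).1
    obtain ⟨k, rfl⟩ := (h.cyc.mem_NC.1 ha).1
    obtain ⟨i, hi, hik⟩ := h.cyc.exists_pos q k
    have hi0 : i ≠ 0 := by
      rintro rfl
      exact hab hik.symm
    rw [← hik] at ha
    obtain ⟨r, hr1, hr2, hr3, hr4⟩ := trans_LG h.cyc (N := N₁ ∪ N₂) (X := (· ∈ N₂))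
      (Y := (· ∈ N₁)) (show q < q + i by omega) (by omega) hb ha
      (fun a ha => (mem_union.1 ha).symm) hgap'
    obtain ⟨r', hr1', hr2', hr3', hr4'⟩ := trans_LG h.cyc (N := N₁ ∪ N₂) (X := (· ∈ N₁))
      (Y := (· ∈ N₂)) (show q + i < q + n by omega) (by omega) ha
      (by rw [h.cyc.per]; exact hb) (fun a ha => (mem_union.1 ha)) hgap
    rw [hN]
    exact ⟨f r, mem_union_right _ hr3, f r', mem_union_left _ hr3',
      h.cyc.inj r r' (by omega) (by omega), hr4, hr4'⟩
  -- weak transitions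
  have hwk : ∀ p q u u', p < q → q ≤ p + n → u ∈ H → u' ∈ H → u ≠ u' → G.Adj (f p) u →
      G.Adj (f q) u' → ∃ r, p ≤ r ∧ r < q ∧ f r ∈ NC G f n H ∧
      LG f n (NC G f n H) (f r) (δ - m + 2) := by
    intro p q u u' hpq hqn hu hu' huu hpu hqu
    obtain ⟨r, h1, h2, h3, h4⟩ := trans_LG h.cyc (N := NC G f n H) (X := fun a => G.Adj a u)
      (Y := fun a => ∃ x ∈ H, x ≠ u ∧ G.Adj a x) (k := δ - m + 2) hpq hqn hpu
      ⟨u', hu', huu.symm, hqu⟩ (by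
        intro a ha
        obtain ⟨-, x, hx, hax⟩ := h.cyc.mem_NC.1 ha
        by_cases hxu : x = u
        · left; exact hxu ▸ hax
        · right; exact ⟨x, hx, hxu, hax⟩) (by
        rintro r r' hr hr' hru ⟨x, hx, hxu, hrx⟩
        have := gap h.cyc h.maxlen h.off hr hr' hru hrx (hweak u hu x hx hxu.symm)
        omega)
    exact ⟨r, h1, h2, h.cyc.mem_NC.2 ⟨⟨r, rfl⟩, u, hu, h3⟩, h4⟩
  have hthree : ∀ p i j x y z, 0 < i → i < j → j < n → x ∈ H → y ∈ H → z ∈ H → x ≠ y → x ≠ z →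
      y ≠ z → G.Adj (f p) x → G.Adj (f (p + i)) y → G.Adj (f (p + j)) z →
      ∃ r₁ r₂ r₃, r₁ < r₂ ∧ r₂ < r₃ ∧ r₃ < r₁ + n ∧
        (f r₁ ∈ NC G f n H ∧ LG f n (NC G f n H) (f r₁) (δ - m + 2)) ∧
        (f r₂ ∈ NC G f n H ∧ LG f n (NC G f n H) (f r₂) (δ - m + 2)) ∧
        (f r₃ ∈ NC G f n H ∧ LG f n (NC G f n H) (f r₃) (δ - m + 2)) := by
    intro p i j x y z hi hij hj hx hy hz hxy hxz hyz h1 h2 h3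
    obtain ⟨r₁, b1, c1, d1⟩ := hwk p (p + i) x y (by omega) (by omega) hx hy hxy h1 h2
    obtain ⟨r₂, b2, c2, d2⟩ := hwk (p + i) (p + j) y z (by omega) (by omega) hy hz hyz h2 h3
    obtain ⟨r₃, b3, c3, d3⟩ := hwk (p + j) (p + n) z x (by omega) (by omega) hz hx hxz.symm h3
      (by rw [h.cyc.per]; exact h1)
    exact ⟨r₁, r₂, r₃, by omega, by omega, by omega, d1, d2, d3⟩
  obtain ⟨x, hx, y, hy, hxy, hLx, hLy⟩ := hstr
  have hthird : ∃ z ∈ NC G f n H, x ≠ z ∧ y ≠ z ∧ LG f n (NC G f n H) z (δ - m + 2) := by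
    obtain ⟨hu1, ⟨p, rfl⟩, hp⟩ := hR1
    obtain ⟨hu2, ⟨k2, rfl⟩, hk2⟩ := hR2
    obtain ⟨hu3, ⟨k3, rfl⟩, hk3⟩ := hR3
    obtain ⟨i, hi, hik⟩ := h.cyc.exists_pos p k2
    obtain ⟨j, hj, hjk⟩ := h.cyc.exists_pos p k3
    rw [← hik] at hk2 ha12 ha23
    rw [← hjk] at hk3 ha13 ha23
    have hi0 : i ≠ 0 := by rintro rfl; exact ha12 rfl
    have hj0 : j ≠ 0 := by rintro rfl; exact ha13 rfl
    have hij : i ≠ j := by rintro rfl; exact ha23 rfl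
    obtain ⟨r₁, r₂, r₃, o1, o2, o3, d1, d2, d3⟩ : ∃ r₁ r₂ r₃, r₁ < r₂ ∧ r₂ < r₃ ∧ r₃ < r₁ + n ∧
        (f r₁ ∈ NC G f n H ∧ LG f n (NC G f n H) (f r₁) (δ - m + 2)) ∧
        (f r₂ ∈ NC G f n H ∧ LG f n (NC G f n H) (f r₂) (δ - m + 2)) ∧
        (f r₃ ∈ NC G f n H ∧ LG f n (NC G f n H) (f r₃) (δ - m + 2)) := by
      rcases lt_or_gt_of_ne hij with h' | h'
      · exact hthree p i j u₁ u₂ u₃ (by omega) h' hj hu1 hu2 hu3 hu12 hu13 hu23 hp hk2 hk3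
      · exact hthree p j i u₁ u₃ u₂ (by omega) h' hi hu1 hu3 hu2 hu13 hu12 hu23.symm hp hk3 hk2
    have n12 := h.cyc.inj r₁ r₂ o1 (by omega)
    have n23 := h.cyc.inj r₂ r₃ o2 (by omega)
    have n13 := h.cyc.inj r₁ r₃ (by omega) o3
    by_cases q1 : x ≠ f r₁ ∧ y ≠ f r₁
    · exact ⟨f r₁, d1.1, q1.1, q1.2, d1.2⟩
    by_cases q2 : x ≠ f r₂ ∧ y ≠ f r₂
    · exact ⟨f r₂, d2.1, q2.1, q2.2, d2.2⟩
    refine ⟨f r₃, d3.1, ?_, ?_, d3.2⟩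
    · rintro rfl
      grind
    · rintro rfl
      grind
  obtain ⟨z, hz, hxz, hyz, hLz⟩ := hthird
  have hfin := count3 h.cyc (NC G f n H) hNc h.gap2 hx hy hz hxy hxz hyz hLx hLy hLz
  have him : #(N₁ ∩ N₂) ≤ m := card_le_card inter_subset_left
  omega

lemma Setup.main (h : Setup G f n δ H) : 3 * δ ≤ n + 3 := by
  by_cases hB : Bl G H
  · exact h.case_one hB
  obtain ⟨y, hy⟩ := h.ne
  by_cases h2 : ∃ z ∈ H, z ≠ y
  swap
  · exfalso
    push Not at h2
    apply hB
    have : ∀ W ⊆ H, VCon G W := by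
      rintro W hW K hK ⟨a, ha⟩ ⟨b, hb⟩
      rw [mem_sdiff] at hb
      have e1 := h2 a (hW (hK ha))
      have e2 := h2 b (hW hb.1)
      exact absurd (e2.trans e1.symm ▸ ha) hb.2
    exact ⟨this _ subset_rfl, fun e => this _ (erase_subset _ _)⟩
  obtain ⟨c₁, hc₁, D₁, hD₁, h11, -, hne₁, hcl₁, hB₁⟩ := end_block h.con hy h2
  have hcon' := h.con.sdiff hcl₁
  have hz : ∃ z ∈ H \ D₁, z ≠ c₁ := by
    by_contra hcon
    push Not at hcon
    apply hB
    have : insert c₁ D₁ = H := by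
      apply subset_antisymm (insert_subset hc₁ hD₁)
      intro t ht
      by_cases htD : t ∈ D₁
      · exact mem_insert_of_mem htD
      · rw [hcon t (mem_sdiff.2 ⟨ht, htD⟩)]; exact mem_insert_self _ _
    rw [← this]; exact hB₁
  have hc₁' : c₁ ∈ H \ D₁ := mem_sdiff.2 ⟨hc₁, h11⟩
  obtain ⟨c₂, hc₂, D₂, hD₂, h22, h12, hne₂, hcl₂, hB₂⟩ := end_block hcon' hc₁' hz
  have hP := (hcon'.sdiff hcl₂).path (mem_sdiff.2 ⟨hc₁', h12⟩) (mem_sdiff.2 ⟨hc₂, h22⟩)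
  refine h.case_two hD₁ (fun t ht => (mem_sdiff.1 (hD₂ ht)).1) hne₁ hne₂
    (fun t ht ht' => (mem_sdiff.1 (hD₂ ht')).2 ht) h11 h12 (mem_sdiff.1 hc₂).2 h22 hcl₁ ?_ hB₁ hB₂ hP
  intro a ha b hb hab
  by_cases hbD : b ∈ D₁
  · exfalso
    have ha' := mem_sdiff.1 (hD₂ ha)
    rcases mem_insert.1 (hcl₁ b hbD a ha'.1 hab.symm) with h' | h'
    · exact h12 (h' ▸ ha)
    · exact ha'.2 h'
  · exact hcl₂ a ha b (mem_sdiff.2 ⟨hb, hbD⟩) hab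

end

lemma jung_core [Fintype V] {f : ℕ → V} {n δ : ℕ} (hC : Cyc G f n) (hL : MaxLen G n)
    (hdeg : ∀ v, δ ≤ #(univ.filter (G.Adj v)))
    (hind : ∀ S : Finset V, (∀ u ∈ S, ∀ v ∈ S, ¬ G.Adj u v) → #S ≤ δ)
    (hsep : ∀ D S : Finset V, #S ≤ 2 → (∃ a ∈ D, a ∉ S) → (∃ z, z ∉ D ∧ z ∉ S) →
      ∃ a ∈ D, a ∉ S ∧ ∃ b, b ∉ D ∧ b ∉ S ∧ G.Adj a b)
    {x : V} (hx : ∀ k, f k ≠ x) : 3 * δ ≤ n + 3 := by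
  set S : Finset (Finset V) := univ.filter (fun H => H.Nonempty ∧ (∀ k, f k ∉ H) ∧
    ∀ a ∈ H, ∀ b, G.Adj a b → b ∈ H ∨ ∃ k, f k = b) with hS
  have hSne : S.Nonempty := by
    refine ⟨univ.filter (fun a => ∀ k, f k ≠ a), ?_⟩
    rw [hS, mem_filter]
    refine ⟨mem_univ _, ⟨x, by simpa using hx⟩, ?_, ?_⟩
    · intro k hk
      exact (mem_filter.1 hk).2 k rfl
    · intro a _ b _
      by_cases hb : ∃ k, f k = b
      · right; exact hb
      · left; push Not at hb; simpa using hb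
  obtain ⟨H, hH, hmin⟩ := exists_min_image S card hSne
  rw [hS, mem_filter] at hH
  obtain ⟨-, hne, hoff, hcl⟩ := hH
  refine Setup.main (H := H) ⟨hC, hL, hoff, ?_, hne, hcl, hdeg, hind, hsep⟩
  intro K hK hKne hne'
  by_contra hno
  push Not at hno
  have := hmin K (by
    rw [hS, mem_filter]
    refine ⟨mem_univ _, hKne, fun k hk => hoff k (hK hk), ?_⟩
    intro a ha b hab
    rcases hcl a (hK ha) b hab with h | h
    · left
      by_contra hb
      exact hno a ha b (mem_sdiff.2 ⟨h, hb⟩) hab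
    · right; exact h)
  have := eq_of_subset_of_card_le hK this
  subst this
  simp at hne'

end JungProof

theorem jung_circumference (G : SimpleGraph V) [Fintype V] [DecidableRel G.Adj]
    (h3 : KConnected G 3)
    (hα : indepNumber G ≤ G.minDegree) :
    (circumference G : ℤ) ≥ min (Fintype.card V : ℤ) (3 * G.minDegree - 3) := by
  classical
  have hbdd : BddAbove {n | ∃ (v : V) (w : G.Walk v v), w.IsCycle ∧ w.length = n} := by
    refine ⟨Fintype.card V, ?_⟩
    rintro n ⟨v, w, hw, rfl⟩
    have h1 := (Walk.isCycle_iff_isPath_tail_and_le_length.mp hw)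
    have h2 := h1.1.length_lt
    have h3 : w.tail.length + 1 = w.length :=
      Walk.length_tail_add_one (by intro hn; have := Walk.length_eq_zero_iff.mpr hn; omega)
    omega
  by_cases hδ : G.minDegree ≤ 1
  · refine le_trans (min_le_right _ _) ?_
    have : (0 : ℤ) ≤ circumference G := Int.natCast_nonneg _
    omega
  have hsep : ∀ D S : Finset V, S.card ≤ 2 → (∃ a ∈ D, a ∉ S) → (∃ z, z ∉ D ∧ z ∉ S) →
      ∃ a ∈ D, a ∉ S ∧ ∃ b, b ∉ D ∧ b ∉ S ∧ G.Adj a b := by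
    rintro D S hS ⟨a, haD, haS⟩ ⟨z, hzD, hzS⟩
    have hc := h3.2 S (by omega)
    obtain ⟨p⟩ := hc.preconnected ⟨a, by simpa using haS⟩ ⟨z, by simpa using hzS⟩
    obtain ⟨⟨⟨u, v⟩, huv⟩, -, hu, hv⟩ :=
      p.exists_boundary_dart {x | (x : V) ∈ D} (by simpa using haD) (by simpa using hzD)
    exact ⟨u, hu, fun h => u.2 (by simpa using h), v, hv, fun h => v.2 (by simpa using h), huv⟩
  have hne : {n | ∃ (v : V) (w : G.Walk v v), w.IsCycle ∧ w.length = n}.Nonempty := by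
    by_contra hcon
    have hac : G.IsAcyclic := by
      intro v w hw
      exact hcon ⟨w.length, v, w, hw, rfl⟩
    have hcard := h3.1
    have : Nontrivial V := Fintype.one_lt_card_iff_nontrivial.mp (by omega)
    have hconn : G.Connected := by
      have hc := h3.2 ∅ (by simp)
      have : Nonempty V := inferInstance
      refine ⟨fun a b => ?_⟩
      have hr := hc.preconnected ⟨a, by simp⟩ ⟨b, by simp⟩
      exact hr.map (SimpleGraph.Embedding.induce _).toHom
    have := (IsTree.mk hconn hac).minDegree_eq_one_of_nontrivial
    omega
  obtain ⟨v, w, hw, hwn⟩ := Nat.sSup_mem hne hbdd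
  change w.length = circumference G at hwn
  have hmax : ∀ (u : V) (c : G.Walk u u), c.IsCycle → c.length ≤ w.length := by
    intro u c hc
    rw [hwn]
    exact le_csSup hbdd ⟨u, c, hc, rfl⟩
  rw [← hwn]
  have h3n := hw.three_le_length
  have hinj := hw.getVert_injOn'
  set n := w.length with hn
  have hlt : ∀ k, k % n < n := fun k => Nat.mod_lt _ (by omega)
  have hC : Cyc G (fun k => w.getVert (k % n)) n := by
    refine ⟨h3n, fun k => by simp, ?_, ?_⟩
    · intro i j hij hji he
      have h1 := hlt i
      have h2 := hlt j
      have h4 : i % n = j % n := hinj (by simp only [Set.mem_ofPred_eq]; omega)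
        (by simp only [Set.mem_ofPred_eq]; omega) he
      have h5 : (j - i) % n = 0 := Nat.sub_mod_eq_zero_of_mod_eq h4.symm
      rw [Nat.mod_eq_of_lt (by omega)] at h5
      omega
    · intro k
      have h1 := hlt k
      have h2 := w.adj_getVert_succ (i := k % n) (by omega)
      rcases Nat.lt_or_ge (k % n + 1) n with h | h
      · have : (k + 1) % n = k % n + 1 := by
          rw [Nat.add_mod, Nat.mod_eq_of_lt (a := 1) (by omega), Nat.mod_eq_of_lt h]
        simpa only [this] using h2
      · have h5 : k % n + 1 = n := by omega
        have : (k + 1) % n = 0 := by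
          rw [Nat.add_mod, Nat.mod_eq_of_lt (a := 1) (by omega), h5, Nat.mod_self]
        simp only [this, Walk.getVert_zero]
        rw [h5, hn, Walk.getVert_length] at h2
        exact h2
  have hL : MaxLen G n := by
    intro a b p hp hba
    by_cases hl : p.length + 1 < 3
    · omega
    have hc : (Walk.cons hba p).IsCycle := by
      rw [Walk.isCycle_iff_isPath_tail_and_le_length]
      refine ⟨by simpa using hp, ?_⟩
      rw [Walk.length_cons]
      omega
    have := hmax _ _ hc
    rwa [Walk.length_cons] at this
  have hdeg : ∀ v, G.minDegree ≤ (Finset.univ.filter (G.Adj v)).card := by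
    intro v
    refine (G.minDegree_le_degree v).trans (le_of_eq ?_)
    rw [← card_neighborFinset_eq_degree]
    congr 1
    ext u
    simp
  have hind : ∀ S : Finset V, (∀ u ∈ S, ∀ v ∈ S, ¬ G.Adj u v) → S.card ≤ G.minDegree := by
    intro S hS
    refine le_trans ?_ hα
    refine le_csSup ⟨Fintype.card V, ?_⟩ ⟨S, hS, rfl⟩
    rintro k ⟨s, -, rfl⟩
    exact Finset.card_le_univ s
  by_cases hall : ∀ x, ∃ k, w.getVert (k % n) = x
  · refine le_trans (min_le_left _ _) ?_
    have h1 := hC.card_image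
    have h2 : (Finset.range n).image (fun k => w.getVert (k % n)) = Finset.univ := by
      ext x
      simp only [Finset.mem_image, Finset.mem_range, Finset.mem_univ, iff_true]
      obtain ⟨k, hk⟩ := hall x
      exact ⟨k % n, hlt k, by rw [Nat.mod_mod]; exact hk⟩
    have h4 : Fintype.card V = n := by
      rw [← h1, ← Finset.card_univ, ← h2]
    omega
  · push Not at hall
    obtain ⟨x, hx⟩ := hall
    refine le_trans (min_le_right _ _) ?_
    have h1 := jung_core hC hL (δ := G.minDegree) (by convert hdeg) (by convert hind)
      (by convert hsep) (x := x) hx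
    omega
end
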